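/- arXiv:2110.11825 — 2 statements merged into one kernel-verified Lean document; each statement's English description precedes it below -/
import Mathlib

section
/- Let C1 ⊆ V1 and C2 ⊆ V2 be proper cones in finite-dimensional real vector spaces, and assume neither C1 nor C2 is classical, i.e., neither admits a linear isomorphism of its ambient space carrying it onto the cone of entrywise nonnegative vectors R_{≥0}^m. Then for every integer k ≥ 1 there exists a linear map P : V1 → V2 such that P^{⊗k}(C1^{⊗max k}) ⊆ C2^{⊗min k}, but P is not (C1,C2)-entanglement breaking. -/
open scoped TensorProduct
open Set

noncomputable section

/-- The dual cone of a set `C`, inside the algebraic dual space. -/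
def dualConeSet {V : Type*} [AddCommGroup V] [Module ℝ V] (C : Set V) :
    Set (Module.Dual ℝ V) := {φ | ∀ x ∈ C, 0 ≤ φ x}

/-- A proper cone: a closed convex cone which is generating (`C - C = V`) and
pointed (`C ∩ (-C) = {0}`). -/
def IsProperCone {V : Type*} [NormedAddCommGroup V] [NormedSpace ℝ V] (C : Set V) : Prop :=
  IsClosed C ∧ Convex ℝ C ∧ (∀ ⦃c : ℝ⦄, 0 < c → ∀ ⦃x⦄, x ∈ C → c • x ∈ C) ∧
    (∀ v : V, ∃ x ∈ C, ∃ y ∈ C, v = x - y) ∧ C ∩ (-C) = {0}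

/-- `(C₁,C₂)`-entanglement breaking maps. -/
def IsEntanglementBreaking {V₁ V₂ : Type*} [AddCommGroup V₁] [Module ℝ V₁]
    [AddCommGroup V₂] [Module ℝ V₂] (C₁ : Set V₁) (C₂ : Set V₂) (P : V₁ →ₗ[ℝ] V₂) : Prop :=
  ∃ (m : ℕ) (φ : Fin m → Module.Dual ℝ V₁) (x : Fin m → V₂),
    (∀ i, φ i ∈ dualConeSet C₁) ∧ (∀ i, x i ∈ C₂) ∧ ∀ v, P v = ∑ i, φ i v • x i

/-- The `k`-fold minimal tensor power of a cone. -/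
def minTensorPow {V : Type*} [AddCommGroup V] [Module ℝ V] (C : Set V) (k : ℕ) :
    Set (⨂[ℝ] _ : Fin k, V) :=
  convexHull ℝ {z | ∃ x : Fin k → V, (∀ i, x i ∈ C) ∧ z = PiTensorProduct.tprod ℝ x}

/-- The functional on the `k`-fold tensor power induced by a family of functionals,
`x₁ ⊗ ⋯ ⊗ x_k ↦ ∏ i, φ i (x i)`. -/
def dualPairing {V : Type*} [AddCommGroup V] [Module ℝ V] {k : ℕ}
    (φ : Fin k → Module.Dual ℝ V) : (⨂[ℝ] _ : Fin k, V) →ₗ[ℝ] ℝ :=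
  PiTensorProduct.lift ((MultilinearMap.mkPiAlgebra ℝ (Fin k) ℝ).compLinearMap φ)

/-- The `k`-fold maximal tensor power of a cone: the dual of the minimal tensor power of
the dual cone, under the canonical identification of `(V^{⊗k})*` with `(V*)^{⊗k}`. -/
def maxTensorPow {V : Type*} [AddCommGroup V] [Module ℝ V] (C : Set V) (k : ℕ) :
    Set (⨂[ℝ] _ : Fin k, V) :=
  {z | ∀ φ : Fin k → Module.Dual ℝ V, (∀ i, φ i ∈ dualConeSet C) → 0 ≤ dualPairing φ z}

/-- `(C₁,C₂)`-entanglement annihilating maps: `P^{⊗k}` maps the `k`-fold maximal tensor power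
of `C₁` into the `k`-fold minimal tensor power of `C₂`, for every `k ≥ 1`. -/
def IsEntanglementAnnihilating {V₁ V₂ : Type*} [AddCommGroup V₁] [Module ℝ V₁]
    [AddCommGroup V₂] [Module ℝ V₂] (C₁ : Set V₁) (C₂ : Set V₂) (P : V₁ →ₗ[ℝ] V₂) : Prop :=
  ∀ k : ℕ, 1 ≤ k →
    Set.MapsTo (⇑(PiTensorProduct.map fun _ : Fin k => P))
      (maxTensorPow C₁ k) (minTensorPow C₂ k)

/-- A pair of cones is resilient if every entanglement annihilating map between them is
entanglement breaking. -/
def IsResilientPair {V₁ V₂ : Type*} [AddCommGroup V₁] [Module ℝ V₁]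
    [AddCommGroup V₂] [Module ℝ V₂] (C₁ : Set V₁) (C₂ : Set V₂) : Prop :=
  ∀ P : V₁ →ₗ[ℝ] V₂, IsEntanglementAnnihilating C₁ C₂ P → IsEntanglementBreaking C₁ C₂ P

/-- The minimal tensor product of two cones. -/
def minTensor {V W : Type*} [AddCommGroup V] [Module ℝ V] [AddCommGroup W] [Module ℝ W]
    (C : Set V) (D : Set W) : Set (V ⊗[ℝ] W) :=
  convexHull ℝ {z | ∃ x ∈ C, ∃ y ∈ D, z = x ⊗ₜ[ℝ] y}

/-- The maximal tensor product of two cones: the dual of the minimal tensor product of the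
dual cones, under the canonical identification of `(V ⊗ W)*` with `V* ⊗ W*`. -/
def maxTensor {V W : Type*} [AddCommGroup V] [Module ℝ V] [AddCommGroup W] [Module ℝ W]
    (C : Set V) (D : Set W) : Set (V ⊗[ℝ] W) :=
  {z | ∀ φ ∈ dualConeSet C, ∀ ψ ∈ dualConeSet D,
      0 ≤ TensorProduct.dualDistrib ℝ V W (φ ⊗ₜ[ℝ] ψ) z}

/-- The Lorentz cone `L_n ⊆ ℝ ⊕ ℝⁿ`. -/
def lorentzCone (n : ℕ) : Set (ℝ × EuclideanSpace ℝ (Fin n)) := {p | ‖p.2‖ ≤ p.1}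


/-- A cone is classical if a linear isomorphism of the ambient space carries it onto the
nonnegative orthant `ℝ₊^m`. -/
def IsClassicalCone {V : Type*} [AddCommGroup V] [Module ℝ V] (C : Set V) : Prop :=
  ∃ (m : ℕ) (e : V ≃ₗ[ℝ] (Fin m → ℝ)), e '' C = {x | ∀ i, 0 ≤ x i}

/-!
Call `C₁`, `C₂` a *negative trace pair* if there are positive maps `P : C₁ → C₂` and `Q : C₂ → C₁`
with `tr (Q ∘ P) < 0`. Entanglement breaking maps have nonnegative trace against positive maps, so
on the segment from an interior entanglement breaking map to `P` there is a last entanglement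
breaking point, at a distance from the end bounded away from zero. Just beyond it, the `k`-th tensor
power is still annihilating: the defect of order `d` is absorbed by the `k`-th power of the interior
entanglement breaking part.

Nonclassical proper cones always form a negative trace pair, by induction on the dimension. If some
exposed face of one of the cones, or of its dual, is nonclassical, positive maps extend from this
face after a small perturbation. If instead all exposed faces of `C` and of its dual are classical
but `C` is not, then `C` has a chord through its interior whose ends are exposed points with
quadratic contact; the map that matches such chords of the two cones and moves a transversal
direction with opposite signs gives the negative trace.
-/

section OrderUnit

variable {V : Type*} [AddCommGroup V] [Module ℝ V] [FiniteDimensional ℝ V]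

theorem exists_orderUnit {K : PointedCone ℝ V} (hK : Submodule.span ℝ (K : Set V) = ⊤) :
    ∃ u ∈ K, ∀ x, ∃ c : ℝ, 1 ≤ c ∧ c • u + x ∈ K ∧ c • u - x ∈ K := by
  let b := Module.Basis.ofSpan hK.ge
  have hb (i) : b i ∈ K := Module.Basis.extendLe_subset _ _ hK.ge (mem_range_self i)
  let _ : Fintype _ := FiniteDimensional.fintypeBasisIndex b
  have hmem (x : V) (c : ℝ) (hc : ∑ i, |b.repr x i| ≤ c) : c • ∑ i, b i + x ∈ K := by
    have hx : c • ∑ i, b i + x = ∑ i, (c + b.repr x i) • b i := by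
      simp only [add_smul, Finset.sum_add_distrib, b.sum_repr, Finset.smul_sum]
    rw [hx]
    refine sum_mem fun i _ => K.smul_mem ?_ (hb i)
    have hi := Finset.single_le_sum (f := fun j => |b.repr x j|) (fun j _ => abs_nonneg _)
      (Finset.mem_univ i)
    linarith [neg_abs_le (b.repr x i)]
  refine ⟨∑ i, b i, sum_mem fun i _ => hb i, fun x => ⟨1 + ∑ i, |b.repr x i|, ?_, ?_, ?_⟩⟩
  · exact le_add_of_nonneg_right (by positivity)
  · exact hmem x _ (le_add_of_nonneg_left zero_le_one)
  · rw [sub_eq_add_neg]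
    exact hmem (-x) _ (by simp)

end OrderUnit

section Multilinear

variable {ι : Type*} [Finite ι] {M : ι → Type*} {N : Type*} [∀ i, AddCommGroup (M i)]
  [∀ i, Module ℝ (M i)] [AddCommGroup N] [Module ℝ N]

theorem multilinear_mem_of_forall_mem_hull (f : MultilinearMap ℝ M N) (K : PointedCone ℝ N)
    {s : ∀ i, Set (M i)} (hf : ∀ x, (∀ i, x i ∈ s i) → f x ∈ K) {x : ∀ i, M i}
    (hx : ∀ i, x i ∈ PointedCone.hull ℝ (s i)) : f x ∈ K := by
  classical
  have := Fintype.ofFinite ι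
  suffices h : ∀ t : Finset ι, ∀ x : ∀ i, M i, (∀ i ∈ t, x i ∈ PointedCone.hull ℝ (s i)) →
      (∀ i ∉ t, x i ∈ s i) → f x ∈ K from h Finset.univ x (by simpa using hx) (by simp)
  intro t
  induction t using Finset.induction_on with
  | empty => exact fun x _ hx => hf x (by simpa using hx)
  | insert j t hj ih =>
    intro x hxt hx
    let L : PointedCone ℝ (M j) := K.comap (f.toLinearMap x j)
    suffices PointedCone.hull ℝ (s j) ≤ L by
      simpa [L] using this (hxt j (Finset.mem_insert_self j t))
    refine Submodule.span_le.2 fun y hy => ih _ (fun i hi => ?_) fun i hi => ?_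
    · have hij : i ≠ j := fun h => hj (h ▸ hi)
      simpa [hij] using hxt i (Finset.mem_insert_of_mem hi)
    · obtain rfl | hij := eq_or_ne i j
      · simpa using hy
      · simpa [hij] using hx i (by simp [hij, hi])

/-- With `x = (b + a) / 2` and `y = (b - a) / 2`, expanding gives `f b + f a` as a combination of
mixed values at `x` and `y` with coefficients `1 ± 1`. -/
theorem multilinear_add_mem (f : MultilinearMap ℝ M N) (K : PointedCone ℝ N)
    {L : ∀ i, PointedCone ℝ (M i)} (hf : ∀ x, (∀ i, x i ∈ L i) → f x ∈ K) {a b : ∀ i, M i}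
    (hadd : ∀ i, b i + a i ∈ L i) (hsub : ∀ i, b i - a i ∈ L i) : f b + f a ∈ K := by
  classical
  have := Fintype.ofFinite ι
  let x i := (1 / 2 : ℝ) • (b i + a i)
  let y i := (1 / 2 : ℝ) • (b i - a i)
  have hb : b = x + y := by ext i; simp only [x, y, Pi.add_apply]; module
  have ha : a = x + fun i => (-1 : ℝ) • y i := by ext i; simp only [x, y, Pi.add_apply]; module
  have hsum : f b + f a = ∑ s : Finset ι, (1 + (-1) ^ sᶜ.card : ℝ) • f (s.piecewise x y) := by
    conv_lhs => rw [hb, ha]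
    rw [f.map_add_univ, f.map_add_univ, ← Finset.sum_add_distrib]
    refine Finset.sum_congr rfl fun s _ => ?_
    rw [add_smul, one_smul, ← Finset.prod_const, ← f.map_piecewise_smul]
    congr 2
    ext i
    by_cases hi : i ∈ s <;> simp [hi]
  rw [hsum]
  refine sum_mem fun s _ => K.smul_mem ?_ (hf _ fun i => ?_)
  · rcases neg_one_pow_eq_or ℝ sᶜ.card with h | h <;> norm_num [h]
  · by_cases hi : i ∈ s
    · simpa [hi, x] using (L i).smul_mem (by norm_num : (0 : ℝ) ≤ 1 / 2) (hadd i)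
    · simpa [hi, y] using (L i).smul_mem (by norm_num : (0 : ℝ) ≤ 1 / 2) (hsub i)

end Multilinear

section PositiveMaps

variable {V W : Type*} [AddCommGroup V] [Module ℝ V] [AddCommGroup W] [Module ℝ W]

/-- The cone of linear maps sending the set `S` into the cone `K`. -/
def positiveMaps (S : Set V) (K : PointedCone ℝ W) : PointedCone ℝ (V →ₗ[ℝ] W) where
  carrier := {P | MapsTo P S K}
  zero_mem' _ _ := K.zero_mem
  add_mem' hP hQ _ hx := K.add_mem (hP hx) (hQ hx)
  smul_mem' c _ hP _ hx := Submodule.smul_mem K c (hP hx)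

theorem mem_positiveMaps {S : Set V} {K : PointedCone ℝ W} {P : V →ₗ[ℝ] W} :
    P ∈ positiveMaps S K ↔ MapsTo P S K := Iff.rfl

/-- The cone of `(S, K)`-entanglement breaking maps, generated by the rank one maps `φ ⊗ x`. -/
def breakingMaps (S : Set V) (K : PointedCone ℝ W) : PointedCone ℝ (V →ₗ[ℝ] W) :=
  PointedCone.hull ℝ (image2 LinearMap.smulRight (dualConeSet S) K)

theorem mem_breakingMaps {S : Set V} {K : PointedCone ℝ W} {P : V →ₗ[ℝ] W} :
    P ∈ breakingMaps S K ↔ IsEntanglementBreaking S (K : Set W) P := by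
  constructor
  · intro hP
    induction hP using Submodule.span_induction with
    | mem P hP =>
      obtain ⟨φ, hφ, x, hx, rfl⟩ := hP
      exact ⟨1, fun _ => φ, fun _ => x, fun _ => hφ, fun _ => hx, by simp⟩
    | zero => exact ⟨0, Fin.elim0, Fin.elim0, fun i => i.elim0, fun i => i.elim0, by simp⟩
    | add P Q _ _ hP hQ =>
      obtain ⟨m, φ, x, hφ, hx, hP⟩ := hP
      obtain ⟨n, ψ, y, hψ, hy, hQ⟩ := hQ
      refine ⟨m + n, Fin.append φ ψ, Fin.append x y, fun i => ?_, fun i => ?_, fun v => ?_⟩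
      · refine Fin.addCases (fun j => ?_) (fun j => ?_) i <;> simp [hφ, hψ]
      · refine Fin.addCases (fun j => ?_) (fun j => ?_) i
        · simpa using hx j
        · simpa using hy j
      · simp [Fin.sum_univ_add, hP, hQ]
    | smul c P _ hP =>
      obtain ⟨m, φ, x, hφ, hx, hP⟩ := hP
      refine ⟨m, φ, fun i => (c : ℝ) • x i, hφ, fun i => K.smul_mem c.2 (hx i), fun v => ?_⟩
      change (c : ℝ) • P v = _
      simp only [hP, Finset.smul_sum, smul_comm (c : ℝ)]
  · rintro ⟨m, φ, x, hφ, hx, hP⟩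
    have hP : P = ∑ i, (φ i).smulRight (x i) := by ext v; simp [hP]
    rw [hP]
    exact sum_mem fun i _ => PointedCone.subset_hull ⟨φ i, hφ i, x i, hx i, rfl⟩

theorem breakingMaps_le_positiveMaps (S : Set V) (K : PointedCone ℝ W) :
    breakingMaps S K ≤ positiveMaps S K := by
  refine Submodule.span_le.2 ?_
  rintro _ ⟨φ, hφ, x, hx, rfl⟩ v hv
  exact K.smul_mem (hφ v hv) hx

theorem span_breakingMaps [FiniteDimensional ℝ V] {S : Set V} {K : PointedCone ℝ W}
    (hS : Submodule.span ℝ (dualConeSet S) = ⊤) (hK : Submodule.span ℝ (K : Set W) = ⊤) :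
    Submodule.span ℝ (breakingMaps S K : Set (V →ₗ[ℝ] W)) = ⊤ := by
  refine eq_top_mono (Submodule.span_mono PointedCone.subset_hull) ?_
  have h := Submodule.map₂_span_span ℝ (LinearMap.smulRightₗ (R := ℝ) (M := W) (M₂ := V))
    (dualConeSet S) (K : Set W)
  rw [hS, hK] at h
  refine Eq.trans h.symm (eq_top_iff.2 fun P _ => ?_)
  let b := Module.finBasis ℝ V
  have hP : P = ∑ i, LinearMap.smulRightₗ (b.coord i) (P (b i)) := by
    refine b.ext fun i => ?_
    simp [Finsupp.single_apply]
  rw [hP]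
  exact sum_mem fun i _ => Submodule.apply_mem_map₂ _ trivial trivial

theorem trace_comp_nonneg_of_mem_breakingMaps [FiniteDimensional ℝ V] {S : Set V}
    {K : PointedCone ℝ W} {P : V →ₗ[ℝ] W} {Q : W →ₗ[ℝ] V} (hP : P ∈ breakingMaps S K)
    (hQ : MapsTo Q K S) : 0 ≤ LinearMap.trace ℝ V (Q ∘ₗ P) := by
  let L : PointedCone ℝ (V →ₗ[ℝ] W) := (PointedCone.positive ℝ ℝ).comap
    (LinearMap.trace ℝ V ∘ₗ LinearMap.llcomp ℝ V W V Q)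
  suffices h : breakingMaps S K ≤ L from h hP
  refine Submodule.span_le.2 ?_
  rintro _ ⟨φ, hφ, x, hx, rfl⟩
  have hcomp : Q ∘ₗ φ.smulRight x = φ.smulRight (Q x) := by ext v; simp
  change 0 ≤ LinearMap.trace ℝ V (Q ∘ₗ φ.smulRight x)
  rw [hcomp, LinearMap.trace_smulRight]
  exact hφ _ (hQ hx)

end PositiveMaps

section TensorPowers

variable {V W : Type*} [AddCommGroup V] [Module ℝ V] [AddCommGroup W] [Module ℝ W] {k : ℕ}

open scoped Pointwise in
theorem convexHull_eq_hull_of_smul_mem {s : Set V} (hs : s.Nonempty)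
    (hsmul : ∀ c : ℝ, 0 ≤ c → ∀ x ∈ s, c • x ∈ s) :
    convexHull ℝ s = (PointedCone.hull ℝ s : Set V) := by
  have hsmul' (c : ℝ) (hc : 0 ≤ c) (x : V) (hx : x ∈ convexHull ℝ s) :
      c • x ∈ convexHull ℝ s := by
    have hcs : c • s ⊆ s := smul_set_subset_iff.2 fun x hx => hsmul c hc x hx
    exact convexHull_mono hcs (convexHull_smul c s ▸ smul_mem_smul_set hx)
  refine (convexHull_min PointedCone.subset_hull (PointedCone.convex _)).antisymm fun x hx => ?_
  induction hx using Submodule.span_induction with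
  | mem x hx => exact subset_convexHull ℝ s hx
  | zero =>
    obtain ⟨x, hx⟩ := hs
    simpa using hsmul' 0 le_rfl x (subset_convexHull ℝ s hx)
  | add x y _ _ hx hy =>
    have h := convex_convexHull ℝ s (hsmul' 2 zero_le_two x hx) (hsmul' 2 zero_le_two y hy)
      (by norm_num : (0 : ℝ) ≤ 1 / 2) (by norm_num : (0 : ℝ) ≤ 1 / 2) (by norm_num)
    simpa [smul_smul] using h
  | smul c x _ hx => exact hsmul' c c.2 x hx

theorem minTensorPow_eq_hull (K : PointedCone ℝ V) (hk : 1 ≤ k) :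
    minTensorPow (K : Set V) k = (PointedCone.hull ℝ
      {z | ∃ x : Fin k → V, (∀ i, x i ∈ K) ∧ z = PiTensorProduct.tprod ℝ x} :
        Set (⨂[ℝ] _ : Fin k, V)) := by
  refine convexHull_eq_hull_of_smul_mem ⟨_, 0, fun _ => K.zero_mem, rfl⟩ ?_
  rintro c hc _ ⟨x, hx, rfl⟩
  let j : Fin k := ⟨0, hk⟩
  refine ⟨Function.update x j (c • x j), fun i => ?_, by simp⟩
  obtain rfl | hi := eq_or_ne i j
  · simpa using K.smul_mem hc (hx j)
  · simpa [hi] using hx i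

/-- The cone of linear maps between `k`-th tensor powers sending the maximal power of `S` into the
minimal power of `K`. The latter is encoded as a conical hull, which differs from `minTensorPow`
only for `k = 0`. -/
def annihilatingMaps (S : Set V) (K : PointedCone ℝ W) (k : ℕ) :
    PointedCone ℝ ((⨂[ℝ] _ : Fin k, V) →ₗ[ℝ] (⨂[ℝ] _ : Fin k, W)) :=
  positiveMaps (maxTensorPow S k) (PointedCone.hull ℝ
    {z | ∃ x : Fin k → W, (∀ i, x i ∈ K) ∧ z = PiTensorProduct.tprod ℝ x})

theorem mem_annihilatingMaps {S : Set V} {K : PointedCone ℝ W} (hk : 1 ≤ k)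
    {L : (⨂[ℝ] _ : Fin k, V) →ₗ[ℝ] (⨂[ℝ] _ : Fin k, W)} :
    L ∈ annihilatingMaps S K k ↔ MapsTo L (maxTensorPow S k) (minTensorPow (K : Set W) k) := by
  rw [minTensorPow_eq_hull K hk]
  exact mem_positiveMaps

theorem dualPairing_update_tprod (φ : Fin k → Module.Dual ℝ V) (j : Fin k) (ψ : Module.Dual ℝ V)
    (v : Fin k → V) : dualPairing (Function.update φ j ψ) (PiTensorProduct.tprod ℝ v) =
      (∏ i ∈ Finset.univ.erase j, φ i (v i)) * ψ (v j) := by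
  simp only [dualPairing, PiTensorProduct.lift.tprod, MultilinearMap.compLinearMap_apply,
    MultilinearMap.mkPiAlgebra_apply]
  rw [← Finset.prod_erase_mul _ _ (Finset.mem_univ j), Function.update_self]
  congr 1
  refine Finset.prod_congr rfl fun i hi => ?_
  rw [Function.update_of_ne (Finset.ne_of_mem_erase hi)]

variable [FiniteDimensional ℝ V]

/-- The contraction `V^{⊗k} → V` applying the functionals `φ i` to all factors but the `j`-th. -/
def contraction (φ : Fin k → Module.Dual ℝ V) (j : Fin k) : (⨂[ℝ] _ : Fin k, V) →ₗ[ℝ] V :=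
  ∑ m, (dualPairing (Function.update φ j ((Module.finBasis ℝ V).coord m))).smulRight
    (Module.finBasis ℝ V m)

theorem contraction_tprod (φ : Fin k → Module.Dual ℝ V) (j : Fin k) (v : Fin k → V) :
    contraction φ j (PiTensorProduct.tprod ℝ v) =
      (∏ i ∈ Finset.univ.erase j, φ i (v i)) • v j := by
  conv_rhs => rw [← (Module.finBasis ℝ V).sum_repr (v j), Finset.smul_sum]
  simp [contraction, dualPairing_update_tprod, smul_smul]

theorem apply_contraction (φ : Fin k → Module.Dual ℝ V) (j : Fin k) (ψ : Module.Dual ℝ V)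
    (z : ⨂[ℝ] _ : Fin k, V) : ψ (contraction φ j z) = dualPairing (Function.update φ j ψ) z := by
  suffices h : ψ ∘ₗ contraction φ j = dualPairing (Function.update φ j ψ) from
    LinearMap.congr_fun h z
  ext v
  simp [contraction_tprod, dualPairing_update_tprod]

theorem map_eq_tprod_comp_contraction {f : Fin k → V →ₗ[ℝ] W} (j : Fin k)
    {φ : Fin k → Module.Dual ℝ V} {x : Fin k → W}
    (hf : ∀ i, i ≠ j → f i = (φ i).smulRight (x i)) :
    PiTensorProduct.map f =
      (PiTensorProduct.tprod ℝ).toLinearMap x j ∘ₗ f j ∘ₗ contraction φ j := by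
  ext v
  have hfv : (fun i => f i (v i)) = (Finset.univ.erase j).piecewise
      (fun i => φ i (v i) • Function.update x j (f j (v j)) i)
      (Function.update x j (f j (v j))) := by
    ext i
    obtain rfl | hi := eq_or_ne i j
    · simp
    · simp [hi, hf]
  simp only [LinearMap.compMultilinearMap_apply, PiTensorProduct.map_tprod, hfv,
    MultilinearMap.map_piecewise_smul, LinearMap.comp_apply, contraction_tprod, map_smul,
    MultilinearMap.toLinearMap_apply]

end TensorPowers

theorem mem_of_forall_dualConeSet_nonneg {V : Type*} [NormedAddCommGroup V] [NormedSpace ℝ V]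
    {C : ProperCone ℝ V} {x : V} (hx : ∀ φ ∈ dualConeSet (C : Set V), 0 ≤ φ x) : x ∈ C := by
  by_contra h
  obtain ⟨f, hf, hfx⟩ := C.hyperplane_separation_point h
  exact hfx.not_ge (hx f hf)

section Annihilating

variable {V W : Type*} [NormedAddCommGroup V] [NormedSpace ℝ V] [FiniteDimensional ℝ V]
  [AddCommGroup W] [Module ℝ W] {C : ProperCone ℝ V} {K : PointedCone ℝ W} {k : ℕ}

theorem contraction_mem {φ : Fin k → Module.Dual ℝ V} {j : Fin k}
    (hφ : ∀ i, i ≠ j → φ i ∈ dualConeSet (C : Set V)) {z : ⨂[ℝ] _ : Fin k, V}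
    (hz : z ∈ maxTensorPow (C : Set V) k) : contraction φ j z ∈ C := by
  refine mem_of_forall_dualConeSet_nonneg fun ψ hψ => ?_
  rw [apply_contraction]
  refine hz _ fun i => ?_
  obtain rfl | hi := eq_or_ne i j
  · simpa using hψ
  · simpa [hi] using hφ i hi

theorem map_mem_annihilatingMaps_of_rank_one {f : Fin k → V →ₗ[ℝ] W} {j : Fin k}
    (hj : MapsTo (f j) C K)
    (hf : ∀ i, i ≠ j → f i ∈ image2 LinearMap.smulRight (dualConeSet (C : Set V)) (K : Set W)) :
    PiTensorProduct.map f ∈ annihilatingMaps (C : Set V) K k := by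
  have hf' (i : Fin k) : ∃ φ : Module.Dual ℝ V, ∃ x : W,
      i ≠ j → φ ∈ dualConeSet (C : Set V) ∧ x ∈ K ∧ f i = φ.smulRight x := by
    obtain rfl | hi := eq_or_ne i j
    · exact ⟨0, 0, fun h => absurd rfl h⟩
    · obtain ⟨φ, hφ, x, hx, h⟩ := hf i hi
      exact ⟨φ, x, fun _ => ⟨hφ, hx, h.symm⟩⟩
  choose φ x hφx using hf'
  rw [map_eq_tprod_comp_contraction j fun i hi => (hφx i hi).2.2]
  refine mem_positiveMaps.2 fun z hz => PointedCone.subset_hull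
    ⟨Function.update x j (f j (contraction φ j z)), fun i => ?_, rfl⟩
  obtain rfl | hi := eq_or_ne i j
  · simpa using hj (contraction_mem (fun i hi => (hφx i hi).1) hz)
  · simpa [hi] using (hφx i hi).2.1

theorem map_mem_annihilatingMaps {f : Fin k → V →ₗ[ℝ] W} {j : Fin k} (hj : MapsTo (f j) C K)
    (hf : ∀ i, i ≠ j → f i ∈ breakingMaps (C : Set V) K) :
    PiTensorProduct.map f ∈ annihilatingMaps (C : Set V) K k := by
  let s : Fin k → Set (V →ₗ[ℝ] W) := Function.update
    (fun _ => image2 LinearMap.smulRight (dualConeSet (C : Set V)) (K : Set W)) j {f j}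
  refine multilinear_mem_of_forall_mem_hull
    (PiTensorProduct.mapMultilinear ℝ (fun _ : Fin k => V) fun _ => W) _ (s := s)
    (fun g hg => ?_) fun i => ?_
  · have hgj : g j = f j := by simpa [s] using hg j
    exact map_mem_annihilatingMaps_of_rank_one (j := j) (hgj ▸ hj)
      fun i hi => by simpa [s, hi] using hg i
  · obtain rfl | hi := eq_or_ne i j
    · exact PointedCone.subset_hull (by simp [s])
    · simpa [s, hi, breakingMaps] using hf i hi

/-- Telescoping writes `P^{⊗k} - R^{⊗k}` as a sum of tensor products containing one factor `P - R`
and otherwise only factors `P` and `R`. -/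
theorem map_sub_map_mem_annihilatingMaps {P R : V →ₗ[ℝ] W}
    (hP : P ∈ breakingMaps (C : Set V) K) (hR : R ∈ breakingMaps (C : Set V) K)
    (hPR : MapsTo (P - R) C K) :
    PiTensorProduct.map (fun _ => P) - PiTensorProduct.map (fun _ => R) ∈
      annihilatingMaps (C : Set V) K k := by
  have htele := (PiTensorProduct.mapMultilinear ℝ (fun _ : Fin k => V)
    fun _ => W).map_sub_map_piecewise (fun _ => P) (fun _ => R) Finset.univ
  simp only [Finset.piecewise_univ, PiTensorProduct.mapMultilinear_apply, Finset.mem_univ,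
    true_imp_iff] at htele
  rw [htele]
  refine sum_mem fun i _ => map_mem_annihilatingMaps (j := i) (by simpa using hPR) fun j hj => ?_
  by_cases hji : j < i
  · simpa [hji] using hP
  · simpa [hji, hj.symm] using hR

theorem map_add_map_mem_annihilatingMaps (hk : 1 ≤ k) {A B : Fin k → V →ₗ[ℝ] W}
    (hadd : ∀ i, B i + A i ∈ breakingMaps (C : Set V) K)
    (hsub : ∀ i, B i - A i ∈ breakingMaps (C : Set V) K) :
    PiTensorProduct.map B + PiTensorProduct.map A ∈ annihilatingMaps (C : Set V) K k :=
  multilinear_add_mem (PiTensorProduct.mapMultilinear ℝ (fun _ : Fin k => V) fun _ => W) _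
    (fun _ hf => map_mem_annihilatingMaps (j := ⟨0, hk⟩) (breakingMaps_le_positiveMaps _ _ (hf _))
      fun i _ => hf i) hadd hsub

end Annihilating

section Perturbation

theorem map_const_smul {V W : Type*} [AddCommGroup V] [Module ℝ V] [AddCommGroup W] [Module ℝ W]
    {k : ℕ} (c : ℝ) (Q : V →ₗ[ℝ] W) :
    PiTensorProduct.map (fun _ : Fin k => c • Q) = c ^ k • PiTensorProduct.map fun _ => Q := by
  simpa using (PiTensorProduct.mapMultilinear ℝ (fun _ : Fin k => V) fun _ => W).map_smul_univ
    (fun _ => c) fun _ => Q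

theorem map_const_add_smul {V W : Type*} [AddCommGroup V] [Module ℝ V] [AddCommGroup W]
    [Module ℝ W] {k : ℕ} (Q R : V →ₗ[ℝ] W) (t : ℝ) :
    PiTensorProduct.map (fun _ : Fin k => Q + t • R) = ∑ s : Finset (Fin k),
      t ^ s.card • PiTensorProduct.map (s.piecewise (fun _ => R) fun _ => Q) := by
  let f := PiTensorProduct.mapMultilinear ℝ (fun _ : Fin k => V) fun _ => W
  have h := f.map_add_univ (fun _ => t • R) fun _ => Q
  rw [show ((fun _ => t • R) + fun _ => Q : Fin k → V →ₗ[ℝ] W) = fun _ => Q + t • R from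
    funext fun _ => add_comm _ _] at h
  refine h.trans (Finset.sum_congr rfl fun s _ => ?_)
  have hs := f.map_piecewise_smul (fun _ => t) (s.piecewise (fun _ => R) fun _ => Q) s
  rw [Finset.prod_const] at hs
  refine Eq.trans (congrArg f (funext fun i => ?_)) hs
  by_cases hi : i ∈ s <;> simp [hi]

theorem pow_sub_pow_le_mul {x y : ℝ} (hx : 0 ≤ x) (hxy : x ≤ y) (hy : y ≤ 1) {m k : ℕ}
    (hmk : m ≤ k) : y ^ m - x ^ m ≤ k * (y - x) := by
  have h := abs_pow_sub_pow_le y x m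
  rw [abs_of_nonneg (sub_nonneg.2 hxy), abs_of_nonneg (hx.trans hxy), abs_of_nonneg hx,
    max_eq_left hxy] at h
  have hy' : y ^ (m - 1) ≤ 1 := pow_le_one₀ (hx.trans hxy) hy
  calc y ^ m - x ^ m ≤ (y - x) * m * y ^ (m - 1) := (le_abs_self _).trans h
    _ ≤ (y - x) * m :=
      mul_le_of_le_one_right (mul_nonneg (sub_nonneg.2 hxy) m.cast_nonneg) hy'
    _ ≤ k * (y - x) := by
      rw [mul_comm]
      exact mul_le_mul_of_nonneg_right (Nat.cast_le.2 hmk) (sub_nonneg.2 hxy)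

variable {V W : Type*} [NormedAddCommGroup V] [NormedSpace ℝ V] [FiniteDimensional ℝ V]
  [AddCommGroup W] [Module ℝ W] {C : ProperCone ℝ V} {K : PointedCone ℝ W} {k : ℕ}

theorem pow_smul_map_add_map_piecewise_mem_annihilatingMaps (hk : 1 ≤ k) {Q R : V →ₗ[ℝ] W} {κ : ℝ}
    (hQ : Q ∈ breakingMaps (C : Set V) K) (hκ : 1 ≤ κ)
    (hadd : κ • Q + R ∈ breakingMaps (C : Set V) K) (hsub : κ • Q - R ∈ breakingMaps (C : Set V) K)
    (s : Finset (Fin k)) :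
    κ ^ k • PiTensorProduct.map (fun _ => Q) +
      PiTensorProduct.map (s.piecewise (fun _ => R) fun _ => Q) ∈
        annihilatingMaps (C : Set V) K k := by
  rw [← map_const_smul]
  refine map_add_map_mem_annihilatingMaps hk (fun i => ?_) fun i => ?_
  · by_cases hi : i ∈ s
    · simpa [hi] using hadd
    · simpa [hi, add_smul] using
        (breakingMaps (C : Set V) K).smul_mem (by linarith : 0 ≤ κ + 1) hQ
  · by_cases hi : i ∈ s
    · simpa [hi] using hsub
    · simpa [hi, sub_smul] using
        (breakingMaps (C : Set V) K).smul_mem (by linarith : 0 ≤ κ - 1) hQ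

/-- The map `Q + u • R` need not be entanglement breaking. Its `k`-th power is the sum of
`(Q + t • R)^{⊗k} - (c • Q)^{⊗k}`, of terms `κ ^ k • Q^{⊗k} + A` with `A` a mixed product of `Q`
and `R`, and of a nonnegative multiple of `Q^{⊗k}`. -/
theorem map_add_smul_mem_annihilatingMaps (hk : 1 ≤ k) {Q R : V →ₗ[ℝ] W} {κ c t u : ℝ}
    (hQ : Q ∈ breakingMaps (C : Set V) K) (hκ : 1 ≤ κ)
    (hadd : κ • Q + R ∈ breakingMaps (C : Set V) K) (hsub : κ • Q - R ∈ breakingMaps (C : Set V) K)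
    (ht : 0 ≤ t) (htu : t ≤ u) (hu : u ≤ 1) (hQR : Q + t • R ∈ breakingMaps (C : Set V) K)
    (hc : 0 ≤ c) (hpos : MapsTo (Q + t • R - c • Q) C K)
    (hsmall : 2 ^ k * (k * (u - t)) * κ ^ k ≤ c ^ k) :
    PiTensorProduct.map (fun _ => Q + u • R) ∈ annihilatingMaps (C : Set V) K k := by
  let A (s : Finset (Fin k)) := PiTensorProduct.map (s.piecewise (fun _ => R) fun _ => Q)
  let a (s : Finset (Fin k)) := u ^ s.card - t ^ s.card
  let B := PiTensorProduct.map fun _ : Fin k => Q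
  have ha (s : Finset (Fin k)) : 0 ≤ a s := sub_nonneg.2 (pow_le_pow_left₀ ht htu _)
  have hsum : κ ^ k * ∑ s, a s ≤ c ^ k := by
    have hle : ∑ s, a s ≤ 2 ^ k * (k * (u - t)) := by
      refine (Finset.sum_le_card_nsmul _ _ (k * (u - t)) fun s _ =>
        pow_sub_pow_le_mul ht htu hu (card_finset_fin_le s)).trans_eq ?_
      simp
    calc κ ^ k * ∑ s, a s ≤ κ ^ k * (2 ^ k * (k * (u - t))) := by gcongr
      _ ≤ c ^ k := by rwa [mul_comm]
  have hdecomp : PiTensorProduct.map (fun _ => Q + u • R) =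
      (PiTensorProduct.map (fun _ => Q + t • R) - PiTensorProduct.map fun _ => c • Q) +
        (c ^ k - κ ^ k * ∑ s, a s) • B + ∑ s, a s • (κ ^ k • B + A s) := by
    have hs : ∑ s, a s • (κ ^ k • B + A s) = (κ ^ k * ∑ s, a s) • B + ∑ s, a s • A s := by
      simp only [smul_add, Finset.sum_add_distrib, smul_smul, Finset.mul_sum, Finset.sum_smul,
        mul_comm]
    have ha : ∑ s, a s • A s = ∑ s, u ^ s.card • A s - ∑ s, t ^ s.card • A s := by
      rw [← Finset.sum_sub_distrib]
      exact Finset.sum_congr rfl fun s _ => by module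
    rw [hs, ha, map_const_add_smul, map_const_add_smul, map_const_smul]
    module
  have hB : B ∈ annihilatingMaps (C : Set V) K k :=
    map_mem_annihilatingMaps (j := ⟨0, hk⟩) (breakingMaps_le_positiveMaps _ _ hQ) fun _ _ => hQ
  have hA := pow_smul_map_add_map_piecewise_mem_annihilatingMaps hk hQ hκ hadd hsub
  rw [hdecomp]
  refine add_mem (add_mem ?_ (PointedCone.smul_mem _ (sub_nonneg.2 hsum) hB))
    (sum_mem fun s _ => PointedCone.smul_mem _ (ha s) (hA s))
  exact map_sub_map_mem_annihilatingMaps hQR (PointedCone.smul_mem _ hc hQ) hpos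

end Perturbation

section NegativeTrace

variable {V W : Type*} [AddCommGroup V] [Module ℝ V] [AddCommGroup W] [Module ℝ W]

/-- There are positive maps in both directions between `S` and `T` whose composition has negative
trace. Since a composition of a positive with an entanglement breaking map has nonnegative trace,
this witnesses positive maps that are not entanglement breaking. -/
def HasNegativeTracePair (S : Set V) (T : Set W) : Prop :=
  ∃ (P : V →ₗ[ℝ] W) (Q : W →ₗ[ℝ] V), MapsTo P S T ∧ MapsTo Q T S ∧
    LinearMap.trace ℝ V (Q ∘ₗ P) < 0

theorem HasNegativeTracePair.symm [FiniteDimensional ℝ V] [FiniteDimensional ℝ W] {S : Set V}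
    {T : Set W} (h : HasNegativeTracePair S T) : HasNegativeTracePair T S := by
  obtain ⟨P, Q, hP, hQ, hPQ⟩ := h
  exact ⟨Q, P, hQ, hP, by rwa [LinearMap.trace_comp_comm']⟩

theorem exists_step_of_not {p : ℝ → Prop} (h0 : p 0) (h1 : ¬ p 1) {N : ℕ} (hN : N ≠ 0) :
    ∃ t : ℝ, 0 ≤ t ∧ t + 1 / N ≤ 1 ∧ p t ∧ ¬ p (t + 1 / N) := by
  classical
  have hN' : (N : ℝ) ≠ 0 := Nat.cast_ne_zero.2 hN
  have hex : ∃ n : ℕ, ¬ p (n / N) := ⟨N, by rwa [div_self hN']⟩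
  obtain ⟨n, hn⟩ : ∃ n, Nat.find hex = n + 1 :=
    Nat.exists_eq_succ_of_ne_zero fun h => Nat.find_spec hex (by rwa [h, Nat.cast_zero, zero_div])
  have hstep : (n / N + 1 / N : ℝ) = (Nat.find hex : ℕ) / N := by rw [hn]; push_cast; ring
  refine ⟨n / N, by positivity, ?_, not_not.1 (Nat.find_min hex (hn ▸ n.lt_succ_self)), ?_⟩
  · rw [hstep]
    exact div_le_one_of_le₀ (Nat.cast_le.2 (Nat.find_min' hex (by rwa [div_self hN'])))
      N.cast_nonneg
  · rw [hstep]
    exact Nat.find_spec hex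

theorem neg_trace_le_of_mem_breakingMaps [FiniteDimensional ℝ V] {S : Set V}
    {K : PointedCone ℝ W} {P Q : V →ₗ[ℝ] W} {T : W →ₗ[ℝ] V} (hT : MapsTo T K S) {t : ℝ}
    (ht : Q + t • (P - Q) ∈ breakingMaps S K) : -LinearMap.trace ℝ V (T ∘ₗ P) ≤
      (1 - t) * (LinearMap.trace ℝ V (T ∘ₗ Q) - LinearMap.trace ℝ V (T ∘ₗ P)) := by
  have h := trace_comp_nonneg_of_mem_breakingMaps ht hT
  have hcomp : T ∘ₗ (Q + t • (P - Q)) = (1 - t) • (T ∘ₗ Q) + t • (T ∘ₗ P) := by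
    simp only [LinearMap.comp_add, LinearMap.comp_smul, LinearMap.comp_sub]
    module
  rw [hcomp, map_add, map_smul, map_smul, smul_eq_mul, smul_eq_mul] at h
  linarith

/-- Along the segment from an interior entanglement breaking map `Q` to `P`, the maps that are
entanglement breaking stop at distance at least `σ` from `P`; a short step past the last of them
gives the desired map. -/
theorem HasNegativeTracePair.exists_map_mem_annihilatingMaps {V W : Type*} [NormedAddCommGroup V]
    [NormedSpace ℝ V] [FiniteDimensional ℝ V] [AddCommGroup W] [Module ℝ W]
    [FiniteDimensional ℝ W] {C : ProperCone ℝ V} {K : PointedCone ℝ W}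
    (h : HasNegativeTracePair (C : Set V) (K : Set W))
    (hC : Submodule.span ℝ (dualConeSet (C : Set V)) = ⊤) (hK : Submodule.span ℝ (K : Set W) = ⊤)
    {k : ℕ} (hk : 1 ≤ k) :
    ∃ P : V →ₗ[ℝ] W, PiTensorProduct.map (fun _ => P) ∈ annihilatingMaps (C : Set V) K k ∧
      P ∉ breakingMaps (C : Set V) K := by
  obtain ⟨P, T, hP, hT, htr⟩ := h
  obtain ⟨Q, hQ, hunit⟩ := exists_orderUnit (span_breakingMaps hC hK)
  obtain ⟨κ, hκ, hadd, hsub⟩ := hunit (P - Q)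
  have hq := trace_comp_nonneg_of_mem_breakingMaps hQ hT
  have hPB : P ∉ breakingMaps (C : Set V) K := fun h =>
    htr.not_ge (trace_comp_nonneg_of_mem_breakingMaps h hT)
  set p := LinearMap.trace ℝ V (T ∘ₗ P)
  set q := LinearMap.trace ℝ V (T ∘ₗ Q)
  have hqp : 0 < q - p := by linarith
  let σ := -p / (q - p)
  have hσ : 0 < σ := div_pos (neg_pos.2 htr) hqp
  obtain ⟨N, hN⟩ := exists_nat_gt (2 ^ k * k * κ ^ k / σ ^ k)
  have hN0 : 0 < (N : ℝ) := lt_of_le_of_lt (by positivity) hN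
  obtain ⟨t, ht, htN, htB, htB'⟩ := exists_step_of_not
    (p := fun t => Q + t • (P - Q) ∈ breakingMaps (C : Set V) K) (by simpa using hQ)
    (by simpa using hPB) (Nat.cast_pos.1 hN0).ne'
  have hσt : σ ≤ 1 - t := (div_le_iff₀ hqp).2 (neg_trace_le_of_mem_breakingMaps hT htB)
  refine ⟨_, ?_, htB'⟩
  refine map_add_smul_mem_annihilatingMaps hk (c := 1 - t) hQ hκ hadd hsub ht
    (le_add_of_nonneg_right (by positivity)) htN htB (hσ.le.trans hσt) ?_ ?_
  · have htP : Q + t • (P - Q) - (1 - t) • Q = t • P := by module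
    rw [htP]
    exact fun x hx => K.smul_mem ht (hP hx)
  · rw [div_lt_iff₀ (by positivity)] at hN
    calc 2 ^ k * (k * (t + 1 / N - t)) * κ ^ k = 2 ^ k * k * κ ^ k / N := by ring
      _ ≤ σ ^ k := (div_le_iff₀ hN0).2 (by linarith)
      _ ≤ (1 - t) ^ k := pow_le_pow_left₀ hσ.le hσt k

end NegativeTrace

open scoped InnerProductSpace
open ProperCone (innerDual)

section ProperCones

variable {V : Type*} [NormedAddCommGroup V] [NormedSpace ℝ V]

theorem isProperCone_iff {C : ProperCone ℝ V} : IsProperCone (C : Set V) ↔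
    Submodule.span ℝ (C : Set V) = ⊤ ∧ ∀ x ∈ C, -x ∈ C → x = 0 := by
  constructor
  · rintro ⟨-, -, -, hgen, hsal⟩
    refine ⟨eq_top_iff.2 fun v _ => ?_, fun x hx hnx => hsal.subset ⟨hx, hnx⟩⟩
    obtain ⟨x, hx, y, hy, rfl⟩ := hgen v
    exact sub_mem (Submodule.subset_span hx) (Submodule.subset_span hy)
  · rintro ⟨hspan, hsal⟩
    refine ⟨C.isClosed, C.convex, fun c hc x hx => C.smul_mem hx hc.le, fun v => ?_,
      Subset.antisymm (fun x hx => hsal x hx.1 hx.2) (by simp)⟩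
    cases subsingleton_or_nontrivial V
    · exact ⟨0, C.zero_mem, 0, C.zero_mem, Subsingleton.elim _ _⟩
    · have hrep : (C : ConvexCone ℝ V).IsReproducing := .of_span_eq_top hspan
      obtain ⟨x, hx, y, hy, hxy⟩ := hrep.ge (mem_univ v)
      exact ⟨x, hx, y, hy, hxy.symm⟩

theorem IsProperCone.span_eq_top {C : ProperCone ℝ V} (hC : IsProperCone (C : Set V)) :
    Submodule.span ℝ (C : Set V) = ⊤ :=
  (isProperCone_iff.1 hC).1

theorem IsProperCone.eq_zero_of_neg_mem {C : ProperCone ℝ V} (hC : IsProperCone (C : Set V))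
    {x : V} (hx : x ∈ C) (hnx : -x ∈ C) : x = 0 :=
  (isProperCone_iff.1 hC).2 x hx hnx

theorem IsProperCone.exists_properCone {S : Set V} (hS : IsProperCone S) :
    ∃ C : ProperCone ℝ V, (C : Set V) = S := by
  obtain ⟨hclosed, hconv, hsmul, -, hsal⟩ := hS
  have hzero : (0 : V) ∈ S := (hsal.ge (mem_singleton 0)).1
  refine ⟨{ carrier := S, zero_mem' := hzero, add_mem' := fun {x y} hx hy => ?_,
            smul_mem' := fun c x hx => ?_, isClosed' := hclosed }, rfl⟩
  · have hmid := hconv hx hy (by norm_num : (0 : ℝ) ≤ 1 / 2) (by norm_num) (add_halves 1)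
    have hxy : x + y = (2 : ℝ) • ((1 / 2 : ℝ) • x + (1 / 2 : ℝ) • y) := by module
    exact hxy ▸ hsmul two_pos hmid
  · obtain hc | hc := c.2.eq_or_lt
    · obtain rfl : c = 0 := Subtype.ext hc.symm
      rwa [zero_smul]
    · exact hsmul hc hx

theorem IsProperCone.span_dualConeSet [FiniteDimensional ℝ V] {C : ProperCone ℝ V}
    (hC : IsProperCone (C : Set V)) : Submodule.span ℝ (dualConeSet (C : Set V)) = ⊤ := by
  by_contra hlt
  obtain ⟨f, hf, hfker⟩ := Submodule.exists_le_ker_of_lt_top _ (lt_top_iff_ne_top.2 hlt)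
  obtain ⟨v, rfl⟩ := (Module.evalEquiv ℝ V).surjective f
  have hv (φ) (hφ : φ ∈ dualConeSet (C : Set V)) : φ v = 0 := hfker (Submodule.subset_span hφ)
  refine hf ?_
  rw [hC.eq_zero_of_neg_mem (mem_of_forall_dualConeSet_nonneg fun φ hφ => (hv φ hφ).ge)
    (mem_of_forall_dualConeSet_nonneg fun φ hφ => by rw [map_neg, hv φ hφ, neg_zero]), map_zero]

end ProperCones

section ClassicalCones

variable {V : Type*} [AddCommGroup V] [Module ℝ V]

theorem isClassicalCone_of_basis {ι : Type*} [Finite ι] {S : Set V} (b : Module.Basis ι ℝ V)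
    (hS : ∀ x, x ∈ S ↔ ∀ i, 0 ≤ b.repr x i) : IsClassicalCone S := by
  obtain ⟨m, ⟨e⟩⟩ := Finite.exists_equiv_fin ι
  refine ⟨m, (b.reindex e).equivFun, ?_⟩
  ext x
  constructor
  · rintro ⟨x, hx, rfl⟩ i
    simpa using (hS x).1 hx (e.symm i)
  · refine fun hx => ⟨(b.reindex e).equivFun.symm x, (hS _).2 fun i => ?_,
      LinearEquiv.apply_symm_apply _ _⟩
    have hi := congrFun ((b.reindex e).equivFun.apply_symm_apply x) (e i)
    rw [Module.Basis.equivFun_apply, Module.Basis.repr_reindex_apply, e.symm_apply_apply] at hi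
    exact hi ▸ hx (e i)

theorem IsProperCone.nontrivial_of_not_isClassicalCone {E : Type*} [NormedAddCommGroup E]
    [NormedSpace ℝ E] {S : Set E} (hS : IsProperCone S) (hcl : ¬ IsClassicalCone S) :
    Nontrivial E := by
  by_contra! hV
  have h₀ : (0 : E) ∈ S := (hS.2.2.2.2.ge rfl).1
  exact hcl (isClassicalCone_of_basis (Module.Basis.empty E (ι := Empty)) fun x => by
    simp [Subsingleton.elim x 0, h₀])

theorem IsClassicalCone.exists_basis {S : Set V} (hS : IsClassicalCone S) :
    ∃ (m : ℕ) (b : Module.Basis (Fin m) ℝ V), ∀ x, x ∈ S ↔ ∀ i, 0 ≤ b.repr x i := by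
  obtain ⟨m, e, he⟩ := hS
  refine ⟨m, .ofEquivFun e, fun x => ?_⟩
  simpa using Set.ext_iff.1 he (e x)

theorem IsClassicalCone.of_preimage {W : Type*} [AddCommGroup W] [Module ℝ W] {S : Set W}
    (e : V ≃ₗ[ℝ] W) (hS : IsClassicalCone (e ⁻¹' S)) : IsClassicalCone S := by
  obtain ⟨m, f, hf⟩ := hS
  refine ⟨m, e.symm.trans f, hf ▸ Subset.antisymm ?_ ?_⟩
  · rintro _ ⟨x, hx, rfl⟩
    exact ⟨e.symm x, by simpa using hx, rfl⟩
  · rintro _ ⟨x, hx, rfl⟩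
    exact ⟨e x, hx, by simp⟩

end ClassicalCones

section Duality

variable {E E₁ E₂ : Type*} [NormedAddCommGroup E] [InnerProductSpace ℝ E]
  [NormedAddCommGroup E₁] [InnerProductSpace ℝ E₁] [NormedAddCommGroup E₂] [InnerProductSpace ℝ E₂]

theorem eq_zero_of_forall_inner_eq_zero {S : Set E} (hS : Submodule.span ℝ S = ⊤) {y : E}
    (hy : ∀ x ∈ S, ⟪x, y⟫_ℝ = 0) : y = 0 := by
  have hker : Submodule.span ℝ S ≤ LinearMap.ker (innerₗ E y) :=
    Submodule.span_le.2 fun x hx => by simpa [real_inner_comm] using hy x hx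
  exact inner_self_eq_zero.1 (hker (hS ▸ Submodule.mem_top))

theorem nondegenerate_innerₗ : LinearMap.BilinForm.Nondegenerate (innerₗ E) :=
  ⟨fun x hx => inner_self_eq_zero.1 (hx x), fun x hx => inner_self_eq_zero.1 (hx x)⟩

variable [FiniteDimensional ℝ E] [FiniteDimensional ℝ E₁] [FiniteDimensional ℝ E₂]

theorem mem_of_forall_mem_innerDual {C : ProperCone ℝ E} {x : E}
    (hx : ∀ y ∈ innerDual (C : Set E), 0 ≤ ⟪x, y⟫_ℝ) : x ∈ C := by
  rw [← C.innerDual_innerDual]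
  intro y hy
  rw [innerₗ_apply_apply, real_inner_comm]
  exact hx y hy

theorem isProperCone_innerDual {C : ProperCone ℝ E} (hC : IsProperCone (C : Set E)) :
    IsProperCone (innerDual (C : Set E) : Set E) := by
  refine isProperCone_iff.2 ⟨?_, fun y hy hny => ?_⟩
  · rw [← Submodule.orthogonal_eq_bot_iff, Submodule.eq_bot_iff]
    intro v hv
    have hv (y) (hy : y ∈ innerDual (C : Set E)) : ⟪v, y⟫_ℝ = 0 :=
      (Submodule.mem_orthogonal' _ _).1 hv y (Submodule.subset_span hy)
    exact hC.eq_zero_of_neg_mem (mem_of_forall_mem_innerDual fun y hy => (hv y hy).ge)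
      (mem_of_forall_mem_innerDual fun y hy => by rw [inner_neg_left, hv y hy, neg_zero])
  · refine eq_zero_of_forall_inner_eq_zero hC.span_eq_top fun x hx => le_antisymm ?_ (hy hx)
    simpa [inner_neg_right] using hny hx

theorem trace_adjoint (T : E →ₗ[ℝ] E) :
    LinearMap.trace ℝ E (LinearMap.adjoint T) = LinearMap.trace ℝ E T := by
  simp only [LinearMap.trace_eq_sum_inner _ (stdOrthonormalBasis ℝ E),
    LinearMap.adjoint_inner_right, real_inner_comm]

theorem mapsTo_adjoint {C₁ : ProperCone ℝ E₁} {C₂ : ProperCone ℝ E₂} {T : E₁ →ₗ[ℝ] E₂}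
    (hT : MapsTo T (innerDual (C₁ : Set E₁)) (innerDual (C₂ : Set E₂))) :
    MapsTo (LinearMap.adjoint T) C₂ C₁ := fun x hx =>
  mem_of_forall_mem_innerDual fun y hy => by
    rw [LinearMap.adjoint_inner_left]; exact hT hy hx

theorem HasNegativeTracePair.of_innerDual {C₁ : ProperCone ℝ E₁} {C₂ : ProperCone ℝ E₂}
    (h : HasNegativeTracePair (innerDual (C₁ : Set E₁) : Set E₁)
      (innerDual (C₂ : Set E₂) : Set E₂)) :
    HasNegativeTracePair (C₁ : Set E₁) (C₂ : Set E₂) := by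
  obtain ⟨P, Q, hP, hQ, htrace⟩ := h
  refine ⟨LinearMap.adjoint Q, LinearMap.adjoint P, mapsTo_adjoint hQ, mapsTo_adjoint hP, ?_⟩
  rwa [← LinearMap.adjoint_comp, trace_adjoint]

theorem isClassicalCone_innerDual {C : ProperCone ℝ E} (hC : IsClassicalCone (C : Set E)) :
    IsClassicalCone (innerDual (C : Set E) : Set E) := by
  obtain ⟨m, b, hb⟩ := hC.exists_basis
  have hbC (i) : b i ∈ C := (hb _).2 fun j => by
    rw [b.repr_self, Finsupp.single_apply]; split_ifs <;> norm_num
  refine isClassicalCone_of_basis (LinearMap.BilinForm.dualBasis (innerₗ E) nondegenerate_innerₗ b)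
    fun y => ?_
  simp only [LinearMap.BilinForm.dualBasis_repr_apply, innerₗ_apply_apply]
  refine ⟨fun hy i => by rw [real_inner_comm]; exact hy (hbC i), fun hy x hx => ?_⟩
  rw [innerₗ_apply_apply, ← b.sum_repr x, sum_inner]
  refine Finset.sum_nonneg fun i _ => ?_
  rw [real_inner_smul_left, real_inner_comm]
  exact mul_nonneg ((hb x).1 hx i) (hy i)

theorem IsClassicalCone.of_innerDual {C : ProperCone ℝ E}
    (hC : IsClassicalCone (innerDual (C : Set E) : Set E)) :
    IsClassicalCone (C : Set E) := by
  simpa using isClassicalCone_innerDual hC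

theorem isClassicalCone_of_forall_eq_sum {ι : Type*} [Fintype ι] {C : ProperCone ℝ E} {w ℓ : ι → E}
    (hw : ∀ i, w i ∈ C) (hℓ : ∀ i, ℓ i ∈ innerDual (C : Set E)) (hli : LinearIndependent ℝ w)
    (hsum : ∀ x, x = ∑ i, ⟪x, ℓ i⟫_ℝ • w i) : IsClassicalCone (C : Set E) := by
  have hspan : ⊤ ≤ Submodule.span ℝ (range w) := fun x _ => by
    rw [hsum x]
    exact sum_mem fun i _ => Submodule.smul_mem _ _ (Submodule.subset_span (mem_range_self i))
  let b := Module.Basis.mk hli hspan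
  have hrepr (x) (i) : b.repr x i = ⟪x, ℓ i⟫_ℝ := by
    have hx : x = ∑ i, ⟪x, ℓ i⟫_ℝ • b i := by simpa [b] using hsum x
    conv_lhs => rw [hx, b.repr_sum_self]
  refine isClassicalCone_of_basis b fun x => ?_
  simp only [hrepr]
  refine ⟨fun hx i => hℓ i hx, fun hx => ?_⟩
  rw [hsum x]
  exact sum_mem fun i _ => C.smul_mem (hw i) (hx i)

end Duality

section Compactness

variable {E : Type*} [NormedAddCommGroup E]

theorem exists_forall_pos_add_mul {X : Type*} [TopologicalSpace X] {K : Set X} (hK : IsCompact K)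
    {f g : X → ℝ} (hf : Continuous f) (hg : Continuous g) (hg₀ : ∀ x ∈ K, 0 ≤ g x)
    (hfg : ∀ x ∈ K, g x = 0 → 0 < f x) : ∃ t : ℝ, 0 ≤ t ∧ ∀ x ∈ K, 0 < f x + t * g x := by
  have hcover : K ⊆ ⋃ n : ℕ, {x | 0 < f x + n * max (g x) 0} := by
    intro x hx
    rw [mem_iUnion]
    obtain h₀ | h₀ := (hg₀ x hx).eq_or_lt
    · exact ⟨0, by simpa using hfg x hx h₀.symm⟩
    · obtain ⟨n, hn⟩ := exists_nat_gt (-f x / g x)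
      rw [div_lt_iff₀ h₀] at hn
      exact ⟨n, by simp only [mem_ofPred_eq, max_eq_left h₀.le]; linarith⟩
  have hmono : Monotone fun n : ℕ => {x | 0 < f x + n * max (g x) 0} := by
    intro m n hmn x (hx : 0 < f x + m * max (g x) 0)
    have : (m : ℝ) * max (g x) 0 ≤ n * max (g x) 0 := by gcongr
    exact hx.trans_le (by linarith)
  obtain ⟨n, hn⟩ := hK.elim_directed_cover _
    (fun n => isOpen_lt continuous_const (by fun_prop)) hcover hmono.directed_le
  refine ⟨n, n.cast_nonneg, fun x hx => ?_⟩
  simpa [max_eq_left (hg₀ x hx)] using hn hx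

theorem ne_zero_of_mem_inter_sphere {S : Set E} {x : E} (hx : x ∈ S ∩ Metric.sphere 0 1) :
    x ≠ 0 := ne_zero_of_mem_unit_sphere ⟨x, hx.2⟩

variable [InnerProductSpace ℝ E]

theorem inv_norm_smul_mem_inter_sphere {C : ProperCone ℝ E} {x : E} (hx : x ∈ C) (hx₀ : x ≠ 0) :
    ‖x‖⁻¹ • x ∈ (C : Set E) ∩ Metric.sphere 0 1 :=
  ⟨C.smul_mem hx (by positivity), by simp [norm_smul, hx₀]⟩

variable [FiniteDimensional ℝ E]

theorem isCompact_inter_sphere (C : ProperCone ℝ E) :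
    IsCompact ((C : Set E) ∩ Metric.sphere 0 1) :=
  (isCompact_sphere 0 1).inter_left C.isClosed

theorem exists_forall_pos_add_mul_of_homogeneous {C : ProperCone ℝ E} {f g : E → ℝ}
    (hf : Continuous f) (hg : Continuous g) (hf_smul : ∀ c : ℝ, 0 < c → ∀ x, f (c • x) = c * f x)
    (hg_smul : ∀ c : ℝ, 0 < c → ∀ x, g (c • x) = c * g x) (hg₀ : ∀ x ∈ C, 0 ≤ g x)
    (hfg : ∀ x ∈ C, x ≠ 0 → g x = 0 → 0 < f x) :
    ∃ t : ℝ, 0 ≤ t ∧ ∀ x ∈ C, x ≠ 0 → 0 < f x + t * g x := by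
  obtain ⟨t, ht, hpos⟩ := exists_forall_pos_add_mul (isCompact_inter_sphere C) hf hg
    (fun x hx => hg₀ x hx.1) fun x hx => hfg x hx.1 (ne_zero_of_mem_inter_sphere hx)
  refine ⟨t, ht, fun x hx hx₀ => ?_⟩
  have hnorm : 0 < ‖x‖⁻¹ := by positivity
  have h := hpos _ (inv_norm_smul_mem_inter_sphere hx hx₀)
  rw [hf_smul _ hnorm, hg_smul _ hnorm] at h
  exact pos_of_mul_pos_right (a := ‖x‖⁻¹) (by linarith) hnorm.le

end Compactness

section StrictlyPositive

variable {E : Type*} [NormedAddCommGroup E] [InnerProductSpace ℝ E]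

/-- The functional `⟪·, u⟫` is positive on the nonzero elements of `S`. For a proper cone this says
that `u` is an interior point of the dual cone. -/
def StrictlyPositiveOn (S : Set E) (u : E) : Prop := ∀ v ∈ S, v ≠ 0 → 0 < ⟪v, u⟫_ℝ

variable [FiniteDimensional ℝ E]

theorem StrictlyPositiveOn.mem_innerDual {S : Set E} {u : E} (hu : StrictlyPositiveOn S u) :
    u ∈ innerDual S := fun v hv => by
  obtain rfl | hv₀ := eq_or_ne v 0
  · simp
  · exact (hu v hv hv₀).le

theorem IsProperCone.exists_strictlyPositiveOn {C : ProperCone ℝ E}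
    (hC : IsProperCone (C : Set E)) : ∃ u, StrictlyPositiveOn (C : Set E) u := by
  obtain ⟨u, -, hu⟩ := exists_orderUnit (K := (innerDual (C : Set E)).toPointedCone)
    (isProperCone_innerDual hC).span_eq_top
  refine ⟨u, fun v hv hv₀ => ?_⟩
  obtain ⟨c, hc, -, hcv⟩ := hu v
  have hle : 0 ≤ c * ⟪v, u⟫_ℝ - ‖v‖ ^ 2 := by
    simpa [inner_sub_right, real_inner_smul_right] using hcv hv
  have hnorm : 0 < ‖v‖ ^ 2 := by positivity
  exact pos_of_mul_pos_right (a := c) (by linarith) (by linarith)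

theorem IsProperCone.exists_mem_strictlyPositiveOn_innerDual {C : ProperCone ℝ E}
    (hC : IsProperCone (C : Set E)) :
    ∃ c ∈ C, StrictlyPositiveOn (innerDual (C : Set E) : Set E) c := by
  obtain ⟨c, hc⟩ := (isProperCone_innerDual hC).exists_strictlyPositiveOn
  exact ⟨c, by simpa using hc.mem_innerDual, hc⟩

theorem StrictlyPositiveOn.exists_norm_le {C : ProperCone ℝ E} {u : E}
    (hu : StrictlyPositiveOn (C : Set E) u) : ∃ t : ℝ, 0 ≤ t ∧ ∀ v ∈ C, ‖v‖ ≤ t * ⟪v, u⟫_ℝ := by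
  obtain ⟨t, ht, hpos⟩ := exists_forall_pos_add_mul_of_homogeneous (C := C)
    (f := fun v => -‖v‖) (g := fun v => ⟪v, u⟫_ℝ) (by fun_prop) (by fun_prop)
    (fun c hc v => by simp [norm_smul, abs_of_pos hc])
    (fun _ _ _ => real_inner_smul_left _ _ _)
    (fun v hv => hu.mem_innerDual hv) fun v hv hv₀ h => absurd h (hu v hv hv₀).ne'
  refine ⟨t, ht, fun v hv => ?_⟩
  obtain rfl | hv₀ := eq_or_ne v 0
  · simp
  · linarith [hpos v hv hv₀]

end StrictlyPositive

section ExposedFaces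

variable {E : Type*} [NormedAddCommGroup E] [InnerProductSpace ℝ E] {C : ProperCone ℝ E} {x y : E}

/-- The linear span of the face of `C` exposed by the functional `⟪·, y⟫`. -/
def exposedFaceSpan (C : ProperCone ℝ E) (y : E) : Submodule ℝ E :=
  Submodule.span ℝ {x | x ∈ C ∧ ⟪x, y⟫_ℝ = 0}

/-- The face of `C` exposed by the functional `⟪·, y⟫`, as a cone in its own span. -/
def exposedFace (C : ProperCone ℝ E) (y : E) : ProperCone ℝ (exposedFaceSpan C y) :=
  C.comap (exposedFaceSpan C y).subtypeL

theorem mem_exposedFace {x : exposedFaceSpan C y} : x ∈ exposedFace C y ↔ (x : E) ∈ C := Iff.rfl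

theorem mem_exposedFaceSpan (hx : x ∈ C) (hxy : ⟪x, y⟫_ℝ = 0) : x ∈ exposedFaceSpan C y :=
  Submodule.subset_span ⟨hx, hxy⟩

theorem inner_eq_zero_of_mem_exposedFaceSpan (hx : x ∈ exposedFaceSpan C y) : ⟪x, y⟫_ℝ = 0 := by
  have hle : exposedFaceSpan C y ≤ LinearMap.ker (innerₗ E y) :=
    Submodule.span_le.2 fun x hx => by simpa [real_inner_comm] using hx.2
  simpa [real_inner_comm] using hle hx

theorem span_exposedFace : Submodule.span ℝ (exposedFace C y : Set (exposedFaceSpan C y)) = ⊤ :=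
  eq_top_mono (Submodule.span_mono fun _ hx => hx.1)
    (Submodule.span_span_coe_preimage (R := ℝ) (s := {x | x ∈ C ∧ ⟪x, y⟫_ℝ = 0}))

theorem isProperCone_exposedFace (hC : IsProperCone (C : Set E)) (y : E) :
    IsProperCone (exposedFace C y : Set (exposedFaceSpan C y)) :=
  isProperCone_iff.2
    ⟨span_exposedFace, fun _ hx hnx => Subtype.ext (hC.eq_zero_of_neg_mem hx hnx)⟩

theorem IsClassicalCone.exists_generators_of_exposedFace
    (h : IsClassicalCone (exposedFace C y : Set (exposedFaceSpan C y))) :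
    ∃ (m : ℕ) (f : Fin m → E), LinearIndependent ℝ f ∧ (∀ i, f i ∈ C ∧ ⟪f i, y⟫_ℝ = 0) ∧
      ∀ x ∈ C, ⟪x, y⟫_ℝ = 0 → ∃ c : Fin m → ℝ, (∀ i, 0 ≤ c i) ∧ x = ∑ i, c i • f i := by
  obtain ⟨m, b, hb⟩ := h.exists_basis
  refine ⟨m, fun i => b i, b.linearIndependent.map' (exposedFaceSpan C y).subtype
    (Submodule.ker_subtype _), fun i => ⟨mem_exposedFace.1 ((hb _).2 fun j => ?_),
      inner_eq_zero_of_mem_exposedFaceSpan (b i).2⟩, fun x hx hxy => ?_⟩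
  · rw [b.repr_self, Finsupp.single_apply]
    split_ifs <;> norm_num
  · let x' : exposedFaceSpan C y := ⟨x, mem_exposedFaceSpan hx hxy⟩
    refine ⟨b.repr x', (hb x').1 hx, ?_⟩
    refine (congrArg Subtype.val (b.sum_repr x')).symm.trans ?_
    simp only [Submodule.coe_sum, Submodule.coe_smul]

theorem finrank_exposedFaceSpan_lt [FiniteDimensional ℝ E] (hy : y ≠ 0) :
    Module.finrank ℝ (exposedFaceSpan C y) < Module.finrank ℝ E := by
  refine Submodule.finrank_lt fun h => hy ((inner_self_eq_zero (𝕜 := ℝ)).1 ?_)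
  exact inner_eq_zero_of_mem_exposedFaceSpan (C := C) (h ▸ Submodule.mem_top)

end ExposedFaces

section FaceReduction

variable {E₁ E₂ : Type*} [NormedAddCommGroup E₁] [InnerProductSpace ℝ E₁] [FiniteDimensional ℝ E₁]
  [NormedAddCommGroup E₂] [InnerProductSpace ℝ E₂] [FiniteDimensional ℝ E₂]
  {C₁ : ProperCone ℝ E₁} {C₂ : ProperCone ℝ E₂}

theorem HasNegativeTracePair.exists_strictlyPositiveOn
    (h : HasNegativeTracePair (C₁ : Set E₁) (C₂ : Set E₂)) (h₁ : IsProperCone (C₁ : Set E₁))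
    (h₂ : IsProperCone (C₂ : Set E₂)) :
    ∃ (P : E₁ →ₗ[ℝ] E₂) (Q : E₂ →ₗ[ℝ] E₁), MapsTo P C₁ C₂ ∧
      (∀ x ∈ C₂, x ≠ 0 → StrictlyPositiveOn (innerDual (C₁ : Set E₁) : Set E₁) (Q x)) ∧
      LinearMap.trace ℝ E₁ (Q ∘ₗ P) < 0 := by
  obtain ⟨P, Q, hP, hQ, htrace⟩ := h
  obtain ⟨c, -, hcpos⟩ := h₁.exists_mem_strictlyPositiveOn_innerDual
  obtain ⟨u, hu⟩ := h₂.exists_strictlyPositiveOn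
  obtain ⟨δ, hδ, hδtrace⟩ := exists_pos_mul_lt (neg_pos.2 htrace) ⟪u, P c⟫_ℝ
  refine ⟨P, Q + δ • (innerₗ E₂ u).smulRight c, hP, fun x hx hx₀ y hy hy₀ => ?_, ?_⟩
  · have hinner : ⟪y, (Q + δ • (innerₗ E₂ u).smulRight c) x⟫_ℝ =
        ⟪Q x, y⟫_ℝ + δ * (⟪x, u⟫_ℝ * ⟪y, c⟫_ℝ) := by
      simp [inner_add_right, real_inner_smul_right, real_inner_comm]
    have hQxy : 0 ≤ ⟪Q x, y⟫_ℝ := hy (hQ hx)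
    have hxu := hu x hx hx₀
    have hyc := hcpos y hy hy₀
    rw [hinner]
    positivity
  · have hcomp : (Q + δ • (innerₗ E₂ u).smulRight c) ∘ₗ P =
        Q ∘ₗ P + δ • (innerₗ E₂ u ∘ₗ P).smulRight c := by ext; simp
    rw [hcomp, map_add, map_smul, LinearMap.trace_smulRight, smul_eq_mul, LinearMap.comp_apply,
      innerₗ_apply_apply]
    linarith

theorem exists_mapsTo_add_smul {y : E₁} (hy : y ∈ innerDual (C₁ : Set E₁)) {c : E₂}
    (hc : StrictlyPositiveOn (innerDual (C₂ : Set E₂) : Set E₂) c) {T : E₁ →ₗ[ℝ] E₂}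
    (hT : ∀ x ∈ C₁, x ≠ 0 → ⟪x, y⟫_ℝ = 0 →
      StrictlyPositiveOn (innerDual (C₂ : Set E₂) : Set E₂) (T x)) :
    ∃ t : ℝ, MapsTo (T + t • (innerₗ E₁ y).smulRight c) C₁ C₂ := by
  have hTcont : Continuous T := T.continuous_of_finiteDimensional
  obtain ⟨t, -, hpos⟩ := exists_forall_pos_add_mul
    ((isCompact_inter_sphere C₁).prod (isCompact_inter_sphere (innerDual (C₂ : Set E₂))))
    (f := fun p => ⟪T p.1, p.2⟫_ℝ) (g := fun p => ⟪p.1, y⟫_ℝ * ⟪c, p.2⟫_ℝ)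
    (by fun_prop) (by fun_prop)
    (fun p hp => mul_nonneg (hy hp.1.1) (by rw [real_inner_comm]; exact hc.mem_innerDual hp.2.1))
    fun p hp hg => by
      have hp₂ := ne_zero_of_mem_inter_sphere hp.2
      have hcp : ⟪c, p.2⟫_ℝ ≠ 0 := by rw [real_inner_comm]; exact (hc _ hp.2.1 hp₂).ne'
      rw [mul_eq_zero, or_iff_left hcp] at hg
      rw [real_inner_comm]
      exact hT _ hp.1.1 (ne_zero_of_mem_inter_sphere hp.1) hg _ hp.2.1 hp₂
  refine ⟨t, fun x hx => mem_of_forall_mem_innerDual fun z hz => ?_⟩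
  obtain rfl | hx₀ := eq_or_ne x 0
  · simp
  obtain rfl | hz₀ := eq_or_ne z 0
  · simp
  have hxz := hpos (‖x‖⁻¹ • x, ‖z‖⁻¹ • z)
    ⟨inv_norm_smul_mem_inter_sphere hx hx₀, inv_norm_smul_mem_inter_sphere hz hz₀⟩
  simp only [map_smul, real_inner_smul_left, real_inner_smul_right] at hxz
  have hinner : ⟪(T + t • (innerₗ E₁ y).smulRight c) x, z⟫_ℝ =
      ⟪T x, z⟫_ℝ + t * (⟪x, y⟫_ℝ * ⟪c, z⟫_ℝ) := by
    simp only [LinearMap.add_apply, LinearMap.smul_apply, LinearMap.smulRight_apply,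
      innerₗ_apply_apply, inner_add_left, real_inner_smul_left, real_inner_comm x y]
  have hscale : 0 < ‖x‖⁻¹ * ‖z‖⁻¹ := by positivity
  rw [hinner]
  refine (pos_of_mul_pos_right (a := ‖x‖⁻¹ * ‖z‖⁻¹) ?_ hscale.le).le
  linarith

theorem exists_mapsTo_of_exposedFace {y : E₁} (hy : y ∈ innerDual (C₁ : Set E₁))
    (h₂ : IsProperCone (C₂ : Set E₂)) {Q : exposedFaceSpan C₁ y →ₗ[ℝ] E₂}
    (hQ : ∀ x ∈ exposedFace C₁ y, x ≠ 0 →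
      StrictlyPositiveOn (innerDual (C₂ : Set E₂) : Set E₂) (Q x)) :
    ∃ T : E₁ →ₗ[ℝ] E₂, MapsTo T C₁ C₂ ∧ T ∘ₗ (exposedFaceSpan C₁ y).subtype = Q := by
  obtain ⟨c, -, hc⟩ := h₂.exists_mem_strictlyPositiveOn_innerDual
  obtain ⟨T, rfl⟩ := Q.exists_extend
  obtain ⟨t, ht⟩ := exists_mapsTo_add_smul hy hc fun x hx hx₀ hxy =>
    hQ ⟨x, mem_exposedFaceSpan hx hxy⟩ hx (by simpa using hx₀)
  refine ⟨_, ht, ?_⟩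
  ext x
  have hxy : ⟪y, (x : E₁)⟫_ℝ = 0 := by
    rw [real_inner_comm]; exact inner_eq_zero_of_mem_exposedFaceSpan x.2
  simp [hxy]

theorem HasNegativeTracePair.of_exposedFace {y : E₂} (hy : y ∈ innerDual (C₂ : Set E₂))
    (h₁ : IsProperCone (C₁ : Set E₁)) (h₂ : IsProperCone (C₂ : Set E₂))
    (h : HasNegativeTracePair (C₁ : Set E₁) (exposedFace C₂ y : Set (exposedFaceSpan C₂ y))) :
    HasNegativeTracePair (C₁ : Set E₁) (C₂ : Set E₂) := by
  obtain ⟨P, Q, hP, hQ, htrace⟩ := h.exists_strictlyPositiveOn h₁ (isProperCone_exposedFace h₂ y)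
  obtain ⟨T, hT, rfl⟩ := exists_mapsTo_of_exposedFace hy h₁ hQ
  exact ⟨(exposedFaceSpan C₂ y).subtype ∘ₗ P, T, fun x hx => hP hx, hT, htrace⟩

end FaceReduction

section QuadExposed

variable {E : Type*} [NormedAddCommGroup E] [InnerProductSpace ℝ E]
  {C : ProperCone ℝ E} {u w : E}

theorem StrictlyPositiveOn.inv_inner_smul_mem_base (hu : StrictlyPositiveOn (C : Set E) u) {v : E}
    (hv : v ∈ C) (hv₀ : v ≠ 0) :
    (⟪v, u⟫_ℝ)⁻¹ • v ∈ C ∧ ⟪(⟪v, u⟫_ℝ)⁻¹ • v, u⟫_ℝ = 1 := by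
  have hvu := hu v hv hv₀
  exact ⟨C.smul_mem hv (inv_nonneg.2 hvu.le), by
    rw [real_inner_smul_left, inv_mul_cancel₀ hvu.ne']⟩

variable [FiniteDimensional ℝ E]

/-- A quadratically exposed point of the base `{v ∈ C | ⟪v, u⟫ = 1}`: a point `w` exposed by some
`φ` that grows at least quadratically away from `w`, in the homogenized form that makes sense on
all of `C`. -/
structure IsQuadExposed (C : ProperCone ℝ E) (u w : E) : Prop where
  mem : w ∈ C
  inner_eq_one : ⟪w, u⟫_ℝ = 1
  exists_bound : ∃ φ ∈ innerDual (C : Set E), ⟪w, φ⟫_ℝ = 0 ∧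
    ∀ v ∈ C, ‖v - ⟪v, u⟫_ℝ • w‖ ^ 2 ≤ ⟪v, φ⟫_ℝ * ⟪v, u⟫_ℝ

theorem IsQuadExposed.ne_zero (hw : IsQuadExposed C u w) : w ≠ 0 := by
  rintro rfl
  simpa using hw.inner_eq_one

theorem StrictlyPositiveOn.isCompact_base (hu : StrictlyPositiveOn (C : Set E) u) :
    IsCompact {v | v ∈ C ∧ ⟪v, u⟫_ℝ = 1} := by
  obtain ⟨t, -, ht⟩ := hu.exists_norm_le
  have hclosed : IsClosed {v | v ∈ C ∧ ⟪v, u⟫_ℝ = 1} :=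
    C.isClosed.inter (isClosed_eq (by fun_prop) continuous_const)
  refine (isCompact_closedBall (0 : E) t).of_isClosed_subset hclosed ?_
  rintro v ⟨hv, hvu⟩
  simpa [hvu] using ht v hv

/-- Points of the base farthest from a given point are quadratically exposed: the sphere of
largest radius touches the base from outside. -/
theorem isQuadExposed_of_forall_norm_sub_le (hu : StrictlyPositiveOn (C : Set E) u) {z : E}
    (hw : w ∈ C) (hwu : ⟪w, u⟫_ℝ = 1)
    (hmax : ∀ v ∈ C, ⟪v, u⟫_ℝ = 1 → ‖v - z‖ ≤ ‖w - z‖) : IsQuadExposed C u w := by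
  set φ : E := (2 : ℝ) • (⟪w, w - z⟫_ℝ • u - (w - z)) with hφ_def
  have hφ : ∀ v, ⟪v, φ⟫_ℝ = 2 * (⟪w, w - z⟫_ℝ * ⟪v, u⟫_ℝ - ⟪v, w - z⟫_ℝ) := fun v => by
    rw [hφ_def, real_inner_smul_right, inner_sub_right, real_inner_smul_right]
  have hbase : ∀ v ∈ C, ⟪v, u⟫_ℝ = 1 → ‖v - w‖ ^ 2 ≤ ⟪v, φ⟫_ℝ := fun v hv hvu => by
    have hle := pow_le_pow_left₀ (norm_nonneg _) (hmax v hv hvu) 2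
    rw [← sub_add_sub_cancel v w z, norm_add_sq_real, inner_sub_left] at hle
    rw [hφ, hvu]
    linarith
  have hcone : ∀ v ∈ C, ‖v - ⟪v, u⟫_ℝ • w‖ ^ 2 ≤ ⟪v, φ⟫_ℝ * ⟪v, u⟫_ℝ := fun v hv => by
    obtain rfl | hv₀ := eq_or_ne v 0
    · simp
    have hvu := hu v hv hv₀
    obtain ⟨hmem, hone⟩ := hu.inv_inner_smul_mem_base hv hv₀
    have hle := hbase _ hmem hone
    rw [real_inner_smul_left, inv_mul_eq_div, le_div_iff₀ hvu] at hle
    calc ‖v - ⟪v, u⟫_ℝ • w‖ ^ 2 = ‖⟪v, u⟫_ℝ • ((⟪v, u⟫_ℝ)⁻¹ • v - w)‖ ^ 2 := by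
          rw [smul_sub, smul_inv_smul₀ hvu.ne']
      _ = ‖(⟪v, u⟫_ℝ)⁻¹ • v - w‖ ^ 2 * ⟪v, u⟫_ℝ * ⟪v, u⟫_ℝ := by
          rw [norm_smul, mul_pow, Real.norm_eq_abs, sq_abs]
          ring
      _ ≤ ⟪v, φ⟫_ℝ * ⟪v, u⟫_ℝ := mul_le_mul_of_nonneg_right hle hvu.le
  refine ⟨hw, hwu, φ, fun v hv => ?_, by rw [hφ, hwu]; ring, hcone⟩
  rw [innerₗ_apply_apply]
  obtain rfl | hv₀ := eq_or_ne v 0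
  · simp
  · exact nonneg_of_mul_nonneg_left ((sq_nonneg _).trans (hcone v hv)) (hu v hv hv₀)

/-- If `⟪v, l⟫ < 0` on the base, the point of the base farthest from a large positive multiple of
`l` is quadratically exposed and also pairs negatively with `l`. -/
theorem StrictlyPositiveOn.mem_innerDual_of_forall_isQuadExposed
    (hu : StrictlyPositiveOn (C : Set E) u) {l : E}
    (hl : ∀ w, IsQuadExposed C u w → 0 ≤ ⟪w, l⟫_ℝ) : l ∈ innerDual (C : Set E) := by
  by_contra hl_mem
  obtain ⟨v, hv, hvl⟩ : ∃ v ∈ C, ⟪v, l⟫_ℝ < 0 := by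
    simpa [ProperCone.mem_innerDual] using hl_mem
  have hv₀ : v ≠ 0 := by
    rintro rfl
    simp at hvl
  obtain ⟨hb, hbu⟩ := hu.inv_inner_smul_mem_base hv hv₀
  set b := (⟪v, u⟫_ℝ)⁻¹ • v with hb_def
  have hbl : ⟪b, l⟫_ℝ < 0 := by
    rw [hb_def, real_inner_smul_left]
    exact mul_neg_of_pos_of_neg (inv_pos.2 (hu v hv hv₀)) hvl
  obtain ⟨t, -, hnorm⟩ := hu.exists_norm_le
  obtain ⟨N, hN, hNt⟩ : ∃ N : ℝ, 0 < N ∧ t ^ 2 < N * (2 * -⟪b, l⟫_ℝ) :=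
    exists_pos_lt_mul (by linarith) _
  obtain ⟨w, ⟨hw, hwu⟩, hmax⟩ := hu.isCompact_base.exists_isMaxOn ⟨b, hb, hbu⟩
    (f := fun v => ‖v - N • l‖) (by fun_prop)
  have hwl := hl w (isQuadExposed_of_forall_norm_sub_le hu hw hwu fun v hv hvu => hmax ⟨hv, hvu⟩)
  have hle : ‖b - N • l‖ ^ 2 ≤ ‖w - N • l‖ ^ 2 :=
    pow_le_pow_left₀ (norm_nonneg _) (hmax ⟨hb, hbu⟩) 2
  rw [norm_sub_sq_real, norm_sub_sq_real, real_inner_smul_right, real_inner_smul_right] at hle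
  have hwt : ‖w‖ ^ 2 ≤ t ^ 2 :=
    pow_le_pow_left₀ (norm_nonneg _) (by simpa [hwu] using hnorm w hw) 2
  linarith [sq_nonneg ‖b‖, mul_nonneg hN.le hwl]

end QuadExposed

section ClassicalFaces

variable {E : Type*} [NormedAddCommGroup E] [InnerProductSpace ℝ E] [FiniteDimensional ℝ E]
  {C : ProperCone ℝ E} {u w y r : E}

theorem IsQuadExposed.exists_eq_smul (hw : IsQuadExposed C u w) {ι : Type*} [Fintype ι] {f : ι → E}
    (hf : ∀ i, f i ∈ C) {c : ι → ℝ} (hc : ∀ i, 0 ≤ c i) (hsum : w = ∑ i, c i • f i) :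
    ∃ i, f i = ⟪f i, u⟫_ℝ • w := by
  obtain ⟨φ, hφ, hwφ, hbound⟩ := hw.exists_bound
  obtain ⟨i, hi⟩ : ∃ i, c i ≠ 0 := by
    by_contra! h
    exact hw.ne_zero (by simp [hsum, h])
  refine ⟨i, ?_⟩
  have hterms : ∑ j, c j * ⟪f j, φ⟫_ℝ = 0 := by
    rw [← hwφ, hsum, sum_inner]
    simp only [real_inner_smul_left]
  have hfφ : ⟪f i, φ⟫_ℝ = 0 := by
    have hnonneg : ∀ j ∈ Finset.univ, 0 ≤ c j * ⟪f j, φ⟫_ℝ := fun j _ =>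
      mul_nonneg (hc j) (hφ (hf j))
    exact (mul_eq_zero.1 ((Finset.sum_eq_zero_iff_of_nonneg hnonneg).1 hterms i
      (Finset.mem_univ i))).resolve_left hi
  have hle := hbound (f i) (hf i)
  rw [hfφ, zero_mul] at hle
  exact sub_eq_zero.1 (norm_eq_zero.1 (pow_eq_zero_iff two_ne_zero |>.1
    (hle.antisymm (sq_nonneg _))))

theorem finite_setOf_isQuadExposed
    (hcl : IsClassicalCone (exposedFace C y : Set (exposedFaceSpan C y))) :
    {w | IsQuadExposed C u w ∧ ⟪w, y⟫_ℝ = 0}.Finite := by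
  obtain ⟨m, f, hli, hf, hgen⟩ := hcl.exists_generators_of_exposedFace
  refine (finite_range fun i => (⟪f i, u⟫_ℝ)⁻¹ • f i).subset ?_
  rintro w ⟨hw, hwy⟩
  obtain ⟨c, hc, hsum⟩ := hgen w hw.mem hwy
  obtain ⟨i, hi⟩ := hw.exists_eq_smul (fun i => (hf i).1) hc hsum
  have hfu : ⟪f i, u⟫_ℝ ≠ 0 := fun h => hli.ne_zero i (by rw [hi, h, zero_smul])
  exact ⟨i, inv_smul_eq_iff₀ hfu |>.2 hi⟩

theorem IsQuadExposed.exists_face_coordinate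
    (hcl : IsClassicalCone (exposedFace C y : Set (exposedFaceSpan C y)))
    (hr : IsQuadExposed C u r) (hry : ⟪r, y⟫_ℝ = 0) :
    ∃ g : E →ₗ[ℝ] ℝ, 0 < g r ∧ (∀ x ∈ C, ⟪x, y⟫_ℝ = 0 → 0 ≤ g x) ∧
      ∀ w, IsQuadExposed C u w → ⟪w, y⟫_ℝ = 0 → w ≠ r → g w = 0 := by
  obtain ⟨m, f, hli, hf, hgen⟩ := hcl.exists_generators_of_exposedFace
  have hexposed : ∀ w, IsQuadExposed C u w → ⟪w, y⟫_ℝ = 0 → ∃ i, f i = ⟪f i, u⟫_ℝ • w :=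
    fun w hw hwy =>
      let ⟨_, hc, hsum⟩ := hgen w hw.mem hwy
      hw.exists_eq_smul (fun i => (hf i).1) hc hsum
  obtain ⟨i, hi⟩ := hexposed r hr hry
  obtain ⟨g, hg⟩ := (Finsupp.lapply i ∘ₗ hli.repr).exists_extend
  have hgf : ∀ j, g (f j) = if j = i then 1 else 0 := fun j => by
    have hj : f j ∈ Submodule.span ℝ (range f) := Submodule.subset_span ⟨j, rfl⟩
    have hrepr := LinearMap.congr_fun hg ⟨f j, hj⟩
    simpa [hli.repr_eq_single j ⟨f j, hj⟩ rfl, Finsupp.single_apply] using hrepr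
  have hg_nonneg : ∀ x ∈ C, ⟪x, y⟫_ℝ = 0 → 0 ≤ g x := fun x hx hxy => by
    obtain ⟨c, hc, rfl⟩ := hgen x hx hxy
    simpa [hgf] using hc i
  refine ⟨g, (hg_nonneg r hr.mem hry).lt_of_ne fun h => ?_, hg_nonneg, fun w hw hwy hwr => ?_⟩
  · have hgr := hgf i
    rw [if_pos rfl, hi, map_smul, ← h, smul_zero] at hgr
    exact zero_ne_one hgr
  · obtain ⟨j, hj⟩ := hexposed w hw hwy
    have hfu : ⟪f j, u⟫_ℝ ≠ 0 := fun h => hli.ne_zero j (by rw [hj, h, zero_smul])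
    have hji : j ≠ i := by
      rintro rfl
      exact hwr (smul_right_injective E hfu (hj.symm.trans hi))
    have hgw := hgf j
    rw [if_neg hji, hj, map_smul, smul_eq_mul] at hgw
    exact (mul_eq_zero.1 hgw).resolve_left hfu

theorem exists_forall_nonneg_add_mul_of_finite {α : Type*} {X : Set α} (hX : X.Finite) {f g : α → ℝ}
    (hg : ∀ x ∈ X, 0 ≤ g x) (hfg : ∀ x ∈ X, g x = 0 → 0 ≤ f x) :
    ∃ M : ℝ, 0 ≤ M ∧ ∀ x ∈ X, 0 ≤ f x + M * g x := by
  obtain ⟨M, hM⟩ := (hX.image fun x => |f x| / g x).bddAbove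
  refine ⟨max M 0, le_max_right _ _, fun x hx => ?_⟩
  obtain hgx | hgx := (hg x hx).eq_or_lt
  · rw [← hgx, mul_zero, add_zero]
    exact hfg x hx hgx.symm
  · have hle : |f x| ≤ max M 0 * g x :=
      (div_le_iff₀ hgx).1 ((hM ⟨x, hx, rfl⟩).trans (le_max_left _ _))
    linarith [neg_abs_le (f x)]

end ClassicalFaces

section QuadExposedChord

variable {E : Type*} [NormedAddCommGroup E] [InnerProductSpace ℝ E]
  {C : ProperCone ℝ E} {u r : E} {ι : Type*} {ψ W : ι → E}

theorem eq_add_sum_of_biorthogonal [Fintype ι] [DecidableEq ι]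
    (hspan : ∀ x, (∀ i, ⟪x, ψ i⟫_ℝ = 0) → x = ⟪x, u⟫_ℝ • r)
    (hWu : ∀ i, ⟪W i, u⟫_ℝ = 1) (hWψ : ∀ i k, ⟪W i, ψ k⟫_ℝ = if i = k then 1 else 0) (x : E) :
    x = ⟪x, u - ∑ i, ψ i⟫_ℝ • r + ∑ i, ⟪x, ψ i⟫_ℝ • W i := by
  have hx := hspan (x - ∑ i, ⟪x, ψ i⟫_ℝ • W i) fun k => by
    simp [inner_sub_left, sum_inner, real_inner_smul_left, hWψ]
  have hxu : ⟪x - ∑ i, ⟪x, ψ i⟫_ℝ • W i, u⟫_ℝ = ⟪x, u - ∑ i, ψ i⟫_ℝ := by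
    simp [inner_sub_left, sum_inner, real_inner_smul_left, hWu, inner_sub_right, inner_sum]
  rw [hxu] at hx
  exact sub_eq_iff_eq_add.1 hx

variable [FiniteDimensional ℝ E]

/-- Every proper exposed face of `C` is a classical cone. -/
def HasClassicalFaces (C : ProperCone ℝ E) : Prop :=
  ∀ y ∈ innerDual (C : Set E), y ≠ 0 →
    IsClassicalCone (exposedFace C y : Set (exposedFaceSpan C y))

theorem StrictlyPositiveOn.exists_add_smul_mem_innerDual (hu : StrictlyPositiveOn (C : Set E) u)
    (hfin : {w | IsQuadExposed C u w}.Finite) {l p : E} (hp : p ∈ innerDual (C : Set E))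
    (hlp : ∀ w, IsQuadExposed C u w → ⟪w, p⟫_ℝ = 0 → 0 ≤ ⟪w, l⟫_ℝ) :
    ∃ M : ℝ, l + M • p ∈ innerDual (C : Set E) := by
  obtain ⟨M, -, hM⟩ := exists_forall_nonneg_add_mul_of_finite hfin (f := fun w => ⟪w, l⟫_ℝ)
    (g := fun w => ⟪w, p⟫_ℝ) (fun w hw => hp hw.mem) hlp
  refine ⟨M, hu.mem_innerDual_of_forall_isQuadExposed fun w hw => ?_⟩
  rw [inner_add_right, real_inner_smul_right]
  exact hM w hw

theorem IsQuadExposed.mem_span_of_inner_eq_zero (hr : IsQuadExposed C u r)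
    (hu : StrictlyPositiveOn (C : Set E) u) (hfin : {w | IsQuadExposed C u w}.Finite)
    (hgen : ∀ y ∈ innerDual (C : Set E), ⟪r, y⟫_ℝ = 0 → y ∈ Submodule.span ℝ (range ψ))
    {l : E} (hrl : ⟪r, l⟫_ℝ = 0) : l ∈ Submodule.span ℝ (range ψ) := by
  obtain ⟨φ, hφ, hrφ, hbound⟩ := hr.exists_bound
  obtain ⟨M, hM⟩ := hu.exists_add_smul_mem_innerDual hfin hφ (l := l) fun w hw hwφ => by
    have hle := hbound w hw.mem
    rw [hwφ, zero_mul, hw.inner_eq_one, one_smul] at hle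
    have hwr : w = r := sub_eq_zero.1 (norm_eq_zero.1 (pow_eq_zero_iff two_ne_zero |>.1
      (hle.antisymm (sq_nonneg _))))
    rw [hwr, hrl]
  have hrM : ⟪r, l + M • φ⟫_ℝ = 0 := by
    rw [inner_add_right, real_inner_smul_right, hrl, hrφ, mul_zero, add_zero]
  simpa using Submodule.sub_mem _ (hgen _ hM hrM) (Submodule.smul_mem _ M (hgen φ hφ hrφ))

theorem IsQuadExposed.eq_inner_smul_of_forall_inner_eq_zero (hr : IsQuadExposed C u r)
    (hu : StrictlyPositiveOn (C : Set E) u) (hfin : {w | IsQuadExposed C u w}.Finite)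
    (hgen : ∀ y ∈ innerDual (C : Set E), ⟪r, y⟫_ℝ = 0 → y ∈ Submodule.span ℝ (range ψ))
    {x : E} (hx : ∀ i, ⟪x, ψ i⟫_ℝ = 0) : x = ⟪x, u⟫_ℝ • r := by
  have hle : (ℝ ∙ r)ᗮ ≤ Submodule.span ℝ (range ψ) := fun l hl =>
    hr.mem_span_of_inner_eq_zero hu hfin hgen
      (Submodule.mem_orthogonal_singleton_iff_inner_right.1 hl)
  have hmem : x ∈ (Submodule.span ℝ (range ψ))ᗮ := by
    rw [Submodule.mem_orthogonal']
    intro z hz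
    induction hz using Submodule.span_induction with
    | mem z hz => obtain ⟨i, rfl⟩ := hz; exact hx i
    | zero => exact inner_zero_right x
    | add z z' _ _ hz hz' => rw [inner_add_right, hz, hz', add_zero]
    | smul c z _ hz => rw [real_inner_smul_right, hz, mul_zero]
  have hspan := Submodule.orthogonal_le hle hmem
  rw [Submodule.orthogonal_orthogonal] at hspan
  obtain ⟨c, rfl⟩ := Submodule.mem_span_singleton.1 hspan
  rw [real_inner_smul_left, hr.inner_eq_one, mul_one]

theorem exists_inner_eq_zero_of_eq_sum [Fintype ι] {w y : E} (hw : w ∈ C)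
    (hψ : ∀ i, ψ i ∈ innerDual (C : Set E)) {c : ι → ℝ} (hc : ∀ i, 0 ≤ c i)
    (hy : y = ∑ i, c i • ψ i) (hy₀ : y ≠ 0) (hwy : ⟪w, y⟫_ℝ = 0) : ∃ i, ⟪w, ψ i⟫_ℝ = 0 := by
  obtain ⟨i, hi⟩ : ∃ i, c i ≠ 0 := by
    by_contra! h
    exact hy₀ (by simp [hy, h])
  have hterms : ∑ j, c j * ⟪w, ψ j⟫_ℝ = 0 := by
    rw [← hwy, hy, inner_sum]
    simp only [real_inner_smul_right]
  have hnonneg : ∀ j ∈ Finset.univ, 0 ≤ c j * ⟪w, ψ j⟫_ℝ := fun j _ => mul_nonneg (hc j) (hψ j hw)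
  exact ⟨i, (mul_eq_zero.1 ((Finset.sum_eq_zero_iff_of_nonneg hnonneg).1 hterms i
    (Finset.mem_univ i))).resolve_left hi⟩

theorem StrictlyPositiveOn.exists_isQuadExposed_of_generators [Fintype ι]
    (hu : StrictlyPositiveOn (C : Set E) u)
    (hfin : {w | IsQuadExposed C u w}.Finite) (hli : LinearIndependent ℝ ψ)
    (hψ : ∀ i, ψ i ∈ innerDual (C : Set E)) (hψr : ∀ i, ⟪r, ψ i⟫_ℝ = 0)
    (hgen : ∀ y ∈ innerDual (C : Set E), ⟪r, y⟫_ℝ = 0 →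
      ∃ c : ι → ℝ, (∀ i, 0 ≤ c i) ∧ y = ∑ i, c i • ψ i) (i : ι) :
    ∃ w, IsQuadExposed C u w ∧ (∀ k ≠ i, ⟪w, ψ k⟫_ℝ = 0) ∧ 0 < ⟪w, ψ i⟫_ℝ := by
  classical
  by_contra! hno
  have hsum : ∑ k ∈ Finset.univ.erase i, ψ k ∈ innerDual (C : Set E) :=
    sum_mem fun k _ => hψ k
  obtain ⟨M, hM⟩ := hu.exists_add_smul_mem_innerDual hfin hsum (l := -ψ i) fun w hw hzero => by
    have hψw : ∀ k ∈ Finset.univ.erase i, 0 ≤ ⟪w, ψ k⟫_ℝ := fun k _ => hψ k hw.mem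
    rw [inner_sum, Finset.sum_eq_zero_iff_of_nonneg hψw] at hzero
    rw [inner_neg_right]
    exact neg_nonneg.2 (hno w hw fun k hk => hzero k (by simp [hk]))
  obtain ⟨c, hc, hsum_c⟩ := hgen _ hM (by
    rw [inner_add_right, inner_neg_right, hψr, real_inner_smul_right, inner_sum,
      Finset.sum_eq_zero fun k _ => hψr k, neg_zero, mul_zero, add_zero])
  have hcoeff := Fintype.linearIndependent_iffₛ.1 hli c (fun k => if k = i then -1 else M) (by
    rw [← hsum_c, ← Finset.add_sum_erase _ _ (Finset.mem_univ i), if_pos rfl, neg_one_smul,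
      Finset.smul_sum]
    exact congrArg _ (Finset.sum_congr rfl fun k hk => by
      rw [if_neg (Finset.ne_of_mem_erase hk)])) i
  rw [if_pos rfl] at hcoeff
  linarith [hc i]

/-- On the face exposed by `ψ i` every `W k` with `k ≠ i` has `r`-coordinate zero, so the
nonnegative `r`-coordinate of that face is a positive multiple of `⟪·, u - ∑ i, ψ i⟫`. -/
theorem sub_sum_mem_innerDual_of_biorthogonal [Fintype ι] [DecidableEq ι]
    (hu : StrictlyPositiveOn (C : Set E) u)
    (hr : IsQuadExposed C u r) (hψr : ∀ i, ⟪r, ψ i⟫_ℝ = 0)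
    (hcl : ∀ i, IsClassicalCone (exposedFace C (ψ i) : Set (exposedFaceSpan C (ψ i))))
    (hface : ∀ w, IsQuadExposed C u w → ∃ i, ⟪w, ψ i⟫_ℝ = 0)
    (hspan : ∀ x, (∀ i, ⟪x, ψ i⟫_ℝ = 0) → x = ⟪x, u⟫_ℝ • r)
    (hW : ∀ i, IsQuadExposed C u (W i)) (hWψ : ∀ i k, ⟪W i, ψ k⟫_ℝ = if i = k then 1 else 0) :
    u - ∑ i, ψ i ∈ innerDual (C : Set E) := by
  refine hu.mem_innerDual_of_forall_isQuadExposed fun w hw => ?_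
  obtain ⟨i, hi⟩ := hface w hw
  obtain ⟨g, hgr, hg_nonneg, hg_zero⟩ := hr.exists_face_coordinate (hcl i) (hψr i)
  have hgW : ∀ k, k ≠ i → g (W k) = 0 := fun k hk =>
    hg_zero (W k) (hW k) (by rw [hWψ, if_neg hk]) fun hWr => by
      have hone := hWψ k k
      rw [hWr, hψr, if_pos rfl] at hone
      exact zero_ne_one hone
  have hsum : ∑ k, g (⟪w, ψ k⟫_ℝ • W k) = 0 := Finset.sum_eq_zero fun k _ => by
    obtain rfl | hk := eq_or_ne k i
    · rw [hi, zero_smul, map_zero]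
    · rw [map_smul, hgW k hk, smul_zero]
  have hgw := congrArg g (eq_add_sum_of_biorthogonal hspan (fun i => (hW i).inner_eq_one) hWψ w)
  rw [map_add, map_smul, map_sum, hsum, add_zero, smul_eq_mul] at hgw
  exact nonneg_of_mul_nonneg_left (hgw ▸ hg_nonneg w hw.mem hi) hgr

theorem isClassicalCone_of_biorthogonal [Finite ι] [DecidableEq ι]
    (hu : StrictlyPositiveOn (C : Set E) u)
    (hr : IsQuadExposed C u r) (hψ : ∀ i, ψ i ∈ innerDual (C : Set E))
    (hψr : ∀ i, ⟪r, ψ i⟫_ℝ = 0)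
    (hcl : ∀ i, IsClassicalCone (exposedFace C (ψ i) : Set (exposedFaceSpan C (ψ i))))
    (hface : ∀ w, IsQuadExposed C u w → ∃ i, ⟪w, ψ i⟫_ℝ = 0)
    (hspan : ∀ x, (∀ i, ⟪x, ψ i⟫_ℝ = 0) → x = ⟪x, u⟫_ℝ • r)
    (hW : ∀ i, IsQuadExposed C u (W i)) (hWψ : ∀ i k, ⟪W i, ψ k⟫_ℝ = if i = k then 1 else 0) :
    IsClassicalCone (C : Set E) := by
  have := Fintype.ofFinite ι
  let b : Option ι → E := fun o => o.elim r W
  have hl := sub_sum_mem_innerDual_of_biorthogonal hu hr hψr hcl hface hspan hW hWψ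
  have hli : LinearIndependent ℝ b := by
    refine Fintype.linearIndependent_iff.2 fun c hc => ?_
    simp only [Fintype.sum_option, b, Option.elim] at hc
    have hsome : ∀ k, c (some k) = 0 := fun k => by
      have hk := congrArg (⟪·, ψ k⟫_ℝ) hc
      simpa [inner_add_left, sum_inner, real_inner_smul_left, hψr, hWψ] using hk
    rintro (_ | k)
    · simpa [hsome, hr.ne_zero] using hc
    · exact hsome k
  refine isClassicalCone_of_forall_eq_sum (w := b) (ℓ := fun o => o.elim (u - ∑ i, ψ i) ψ)
    ?_ ?_ hli fun x => ?_
  · rintro (_ | i)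
    exacts [hr.mem, (hW i).mem]
  · rintro (_ | i)
    exacts [hl, hψ i]
  · rw [Fintype.sum_option]
    exact eq_add_sum_of_biorthogonal hspan (fun i => (hW i).inner_eq_one) hWψ x

theorem StrictlyPositiveOn.exists_isQuadExposed [Nontrivial E]
    (hC : IsProperCone (C : Set E)) (hu : StrictlyPositiveOn (C : Set E) u) :
    ∃ r, IsQuadExposed C u r := by
  by_contra! hno
  have hmem : ∀ l, l ∈ innerDual (C : Set E) := fun l =>
    hu.mem_innerDual_of_forall_isQuadExposed fun w hw => absurd hw (hno w)
  obtain ⟨x, hx⟩ := exists_ne (0 : E)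
  exact hx ((isProperCone_innerDual hC).eq_zero_of_neg_mem (hmem x) (hmem (-x)))

theorem isClassicalCone_of_forall_exists_inner_eq_zero
    (hfaces : HasClassicalFaces C) (hfaces' : HasClassicalFaces (innerDual (C : Set E)))
    (hu : StrictlyPositiveOn (C : Set E) u) (hr : IsQuadExposed C u r)
    (hpair : ∀ w, IsQuadExposed C u w →
      ∃ y ∈ innerDual (C : Set E), y ≠ 0 ∧ ⟪r, y⟫_ℝ = 0 ∧ ⟪w, y⟫_ℝ = 0) :
    IsClassicalCone (C : Set E) := by
  obtain ⟨m, ψ, hli, hψ, hgen⟩ :=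
    (hfaces' r (by simpa using hr.mem) hr.ne_zero).exists_generators_of_exposedFace
  simp only [real_inner_comm r] at hψ hgen
  have hface : ∀ w, IsQuadExposed C u w → ∃ i, ⟪w, ψ i⟫_ℝ = 0 := fun w hw => by
    obtain ⟨y, hy, hy₀, hry, hwy⟩ := hpair w hw
    obtain ⟨c, hc, hsum⟩ := hgen y hy hry
    exact exists_inner_eq_zero_of_eq_sum hw.mem (fun i => (hψ i).1) hc hsum hy₀ hwy
  have hfin : {w | IsQuadExposed C u w}.Finite := by
    refine (finite_iUnion fun i => finite_setOf_isQuadExposed (u := u)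
      (hfaces (ψ i) (hψ i).1 (hli.ne_zero i))).subset fun w hw => ?_
    obtain ⟨i, hi⟩ := hface w hw
    exact mem_iUnion.2 ⟨i, hw, hi⟩
  have hspan : ∀ x, (∀ i, ⟪x, ψ i⟫_ℝ = 0) → x = ⟪x, u⟫_ℝ • r := fun x hx =>
    hr.eq_inner_smul_of_forall_inner_eq_zero hu hfin (fun y hy hry => by
      obtain ⟨c, -, rfl⟩ := hgen y hy hry
      exact Submodule.sum_smul_mem _ _ fun i _ => Submodule.subset_span ⟨i, rfl⟩) hx
  choose W hW hWψ_ne hWψ_pos using hu.exists_isQuadExposed_of_generators hfin hli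
    (fun i => (hψ i).1) (fun i => (hψ i).2) hgen
  have hscaled : ∀ i, (⟪W i, ψ i⟫_ℝ)⁻¹ • ψ i ∈ innerDual (C : Set E) := fun i =>
    (innerDual (C : Set E)).smul_mem (hψ i).1 (inv_nonneg.2 (hWψ_pos i).le)
  refine isClassicalCone_of_biorthogonal (ψ := fun i => (⟪W i, ψ i⟫_ℝ)⁻¹ • ψ i) (W := W) hu hr
    hscaled (fun i => ?_) (fun i => hfaces _ (hscaled i) ?_) (fun w hw => ?_) (fun x hx => ?_)
    hW fun i k => ?_
  · rw [real_inner_smul_right, (hψ i).2, mul_zero]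
  · exact smul_ne_zero (inv_ne_zero (hWψ_pos i).ne') (hli.ne_zero i)
  · obtain ⟨i, hi⟩ := hface w hw
    exact ⟨i, by rw [real_inner_smul_right, hi, mul_zero]⟩
  · exact hspan x fun i => by simpa [real_inner_smul_right, (hWψ_pos i).ne'] using hx i
  · rw [real_inner_smul_right]
    split_ifs with hik
    · rw [hik, inv_mul_cancel₀ (hWψ_pos k).ne']
    · rw [hWψ_ne i k (Ne.symm hik), mul_zero]

theorem exists_isQuadExposed_add_strictlyPositiveOn (hC : IsProperCone (C : Set E))
    (hfaces : HasClassicalFaces C) (hfaces' : HasClassicalFaces (innerDual (C : Set E)))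
    (hcl : ¬ IsClassicalCone (C : Set E)) (hu : StrictlyPositiveOn (C : Set E) u) :
    ∃ w₁ w₂, IsQuadExposed C u w₁ ∧ IsQuadExposed C u w₂ ∧
      StrictlyPositiveOn (innerDual (C : Set E) : Set E) (w₁ + w₂) := by
  by_contra! hno
  have : Nontrivial E := hC.nontrivial_of_not_isClassicalCone hcl
  obtain ⟨r, hr⟩ := hu.exists_isQuadExposed hC
  refine hcl (isClassicalCone_of_forall_exists_inner_eq_zero hfaces hfaces' hu hr fun w hw => ?_)
  obtain ⟨y, hy, hy₀, hle⟩ : ∃ y ∈ innerDual (C : Set E), y ≠ 0 ∧ ⟪y, r + w⟫_ℝ ≤ 0 := by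
    simpa [StrictlyPositiveOn] using hno r w hr hw
  rw [real_inner_comm, inner_add_left] at hle
  have hry : 0 ≤ ⟪r, y⟫_ℝ := hy hr.mem
  have hwy : 0 ≤ ⟪w, y⟫_ℝ := hy hw.mem
  exact ⟨y, hy, hy₀, by linarith, by linarith⟩

end QuadExposedChord

section Domination

variable {E : Type*} [NormedAddCommGroup E] [InnerProductSpace ℝ E]
  {C : ProperCone ℝ E} {u w φ α : E}

/-- The functional `⟪·, α⟫` is bounded on `S` by a multiple of `⟪·, φ⟫`. -/
def IsDominatedOn (S : Set E) (φ α : E) : Prop :=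
  ∃ K : ℝ, 0 ≤ K ∧ ∀ v ∈ S, |⟪v, α⟫_ℝ| ≤ K * ⟪v, φ⟫_ℝ

variable [FiniteDimensional ℝ E]

theorem isDominatedOn_of_smul_add_mem_innerDual {c : ℝ} (hc : 0 ≤ c)
    (hadd : c • φ + α ∈ innerDual (C : Set E)) (hsub : c • φ - α ∈ innerDual (C : Set E)) :
    IsDominatedOn (C : Set E) φ α := by
  refine ⟨c, hc, fun v hv => abs_le.2 ⟨?_, ?_⟩⟩
  · have h : 0 ≤ ⟪v, c • φ + α⟫_ℝ := hadd hv
    rw [inner_add_right, real_inner_smul_right] at h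
    linarith
  · have h : 0 ≤ ⟪v, c • φ - α⟫_ℝ := hsub hv
    rw [inner_sub_right, real_inner_smul_right] at h
    linarith

/-- `φ` exposes `w` quadratically (compare `IsQuadExposed`) and lies in the relative interior of
the face of `C*` that `w` exposes, expressed by domination. -/
structure IsExposing (C : ProperCone ℝ E) (u w φ : E) : Prop where
  mem : w ∈ C
  mem_innerDual : φ ∈ innerDual (C : Set E)
  inner_eq_zero : ⟪w, φ⟫_ℝ = 0
  norm_sq_le : ∀ v ∈ C, ‖v - ⟪v, u⟫_ℝ • w‖ ^ 2 ≤ ⟪v, φ⟫_ℝ * ⟪v, u⟫_ℝ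
  isDominatedOn : ∀ α ∈ exposedFaceSpan (innerDual (C : Set E)) w, IsDominatedOn (C : Set E) φ α

theorem IsQuadExposed.exists_isExposing (hu : StrictlyPositiveOn (C : Set E) u)
    (hw : IsQuadExposed C u w) : ∃ φ, IsExposing C u w φ := by
  obtain ⟨φ, hφ, hwφ, hbound⟩ := hw.exists_bound
  obtain ⟨ψ, hψ, hunit⟩ := exists_orderUnit
    (K := (exposedFace (innerDual (C : Set E)) w).toPointedCone) span_exposedFace
  have hψC : (ψ : E) ∈ innerDual (C : Set E) := hψ
  have hwψ : ⟪w, ψ⟫_ℝ = 0 := by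
    rw [real_inner_comm]; exact inner_eq_zero_of_mem_exposedFaceSpan ψ.2
  refine ⟨φ + ψ, hw.mem, add_mem hφ hψC, by rw [inner_add_right, hwφ, hwψ, add_zero],
    fun v hv => (hbound v hv).trans ?_, fun α hα => ?_⟩
  · have hvψ : 0 ≤ ⟪v, ψ⟫_ℝ := hψC hv
    have hvu : 0 ≤ ⟪v, u⟫_ℝ := hu.mem_innerDual hv
    rw [inner_add_right]
    gcongr
    linarith
  · obtain ⟨c, hc, hadd, hsub⟩ := hunit ⟨α, hα⟩
    have hcφ : c • φ ∈ innerDual (C : Set E) := (innerDual (C : Set E)).smul_mem hφ (by linarith)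
    have hadd' : c • (ψ : E) + α ∈ innerDual (C : Set E) := hadd
    have hsub' : c • (ψ : E) - α ∈ innerDual (C : Set E) := hsub
    refine isDominatedOn_of_smul_add_mem_innerDual (c := c) (by linarith) ?_ ?_
    · rw [smul_add, add_assoc]
      exact add_mem hcφ hadd'
    · rw [smul_add, add_sub_assoc]
      exact add_mem hcφ hsub'

theorem IsExposing.mem_exposedFaceSpan (h : IsExposing C u w φ) :
    φ ∈ exposedFaceSpan (innerDual (C : Set E)) w :=
  _root_.mem_exposedFaceSpan h.mem_innerDual (by rw [real_inner_comm, h.inner_eq_zero])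

theorem IsExposing.eq_inner_smul (h : IsExposing C u w φ) {v : E} (hv : v ∈ C)
    (hvφ : ⟪v, φ⟫_ℝ = 0) : v = ⟪v, u⟫_ℝ • w := by
  have hle := h.norm_sq_le v hv
  rw [hvφ, zero_mul] at hle
  exact sub_eq_zero.1 (norm_eq_zero.1 (pow_eq_zero_iff two_ne_zero |>.1
    (hle.antisymm (sq_nonneg _))))

theorem IsExposing.inner_pos (h : IsExposing C u w φ) {v : E} (hv : v ∈ C) (hvu : ⟪v, u⟫_ℝ = 1)
    (hvw : v ≠ w) : 0 < ⟪v, φ⟫_ℝ := by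
  have hvφ : 0 ≤ ⟪v, φ⟫_ℝ := h.mem_innerDual hv
  refine hvφ.lt_of_ne' fun h₀ => hvw ?_
  rw [h.eq_inner_smul hv h₀, hvu, one_smul]

theorem IsExposing.sq_inner_le (h : IsExposing C u w φ) (hwα : ⟪w, α⟫_ℝ = 0) {v : E}
    (hv : v ∈ C) : ⟪v, α⟫_ℝ ^ 2 ≤ ‖α‖ ^ 2 * (⟪v, φ⟫_ℝ * ⟪v, u⟫_ℝ) :=
  calc ⟪v, α⟫_ℝ ^ 2 = ⟪v - ⟪v, u⟫_ℝ • w, α⟫_ℝ ^ 2 := by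
        rw [inner_sub_left, real_inner_smul_left, hwα, mul_zero, sub_zero]
    _ ≤ (‖v - ⟪v, u⟫_ℝ • w‖ * ‖α‖) ^ 2 := sq_le_sq.2 ((abs_real_inner_le_norm _ _).trans
        (le_abs_self _))
    _ = ‖α‖ ^ 2 * ‖v - ⟪v, u⟫_ℝ • w‖ ^ 2 := by ring
    _ ≤ ‖α‖ ^ 2 * (⟪v, φ⟫_ℝ * ⟪v, u⟫_ℝ) :=
        mul_le_mul_of_nonneg_left (h.norm_sq_le v hv) (sq_nonneg _)

end Domination

section Wedges

variable {E : Type*} [NormedAddCommGroup E] [InnerProductSpace ℝ E]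
  {C : ProperCone ℝ E} {w w₁ w₂ : E}

/-- In the coordinates `w₁ + a • w₂ + s • w`, the set `S` contains a neighbourhood of the apex of
the wedge `κ * |s| ≤ a`. -/
def ContainsWedge (S : Set E) (w₁ w₂ w : E) (κ : ℝ) : Prop :=
  ∃ δ : ℝ, 0 < δ ∧ ∀ s : ℝ, |s| ≤ δ → w₁ + (κ * |s|) • w₂ + s • w ∈ S

/-- `S` contains arbitrarily flat wedges at `w₁`: its section in the coordinates
`w₁ + a • w₂ + s • w` has the line `a = 0` as its tangent at `w₁`. -/
def ContainsFlatWedges (S : Set E) (w₁ w₂ w : E) : Prop :=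
  ∀ κ : ℝ, 0 < κ → ContainsWedge S w₁ w₂ w κ

variable [FiniteDimensional ℝ E]

theorem containsWedge_of_forall_abs_inner_le (h₁ : w₁ ∈ C) {t κ : ℝ} (ht : 0 ≤ t)
    (hle : ∀ y ∈ innerDual (C : Set E), |⟪w, y⟫_ℝ| ≤ t * ⟪w₁, y⟫_ℝ + κ * ⟪w₂, y⟫_ℝ) :
    ContainsWedge (C : Set E) w₁ w₂ w κ := by
  refine ⟨1 / (t + 1), by positivity, fun s hs => mem_of_forall_mem_innerDual fun y hy => ?_⟩
  rw [le_div_iff₀ (by linarith)] at hs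
  have hst : 0 ≤ 1 - |s| * t := by linarith [abs_nonneg s]
  have hw₁y : 0 ≤ ⟪w₁, y⟫_ℝ := hy h₁
  calc (0 : ℝ) ≤ (1 - |s| * t) * ⟪w₁, y⟫_ℝ := mul_nonneg hst hw₁y
    _ = ⟪w₁, y⟫_ℝ + κ * |s| * ⟪w₂, y⟫_ℝ - |s| * (t * ⟪w₁, y⟫_ℝ + κ * ⟪w₂, y⟫_ℝ) := by ring
    _ ≤ ⟪w₁, y⟫_ℝ + κ * |s| * ⟪w₂, y⟫_ℝ - |s| * |⟪w, y⟫_ℝ| := by gcongr; exact hle y hy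
    _ ≤ ⟪w₁, y⟫_ℝ + κ * |s| * ⟪w₂, y⟫_ℝ + s * ⟪w, y⟫_ℝ := by
      rw [← abs_mul]; linarith [neg_abs_le (s * ⟪w, y⟫_ℝ)]
    _ = ⟪w₁ + (κ * |s|) • w₂ + s • w, y⟫_ℝ := by
      rw [inner_add_left, inner_add_left, real_inner_smul_left, real_inner_smul_left]

theorem StrictlyPositiveOn.exists_containsWedge (h₁ : w₁ ∈ C) (h₂ : w₂ ∈ C)
    (hw : StrictlyPositiveOn (innerDual (C : Set E) : Set E) (w₁ + w₂)) (w : E) :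
    ∃ κ : ℝ, 0 < κ ∧ ContainsWedge (C : Set E) w₁ w₂ w κ := by
  obtain ⟨t, ht, hnorm⟩ := hw.exists_norm_le
  refine ⟨‖w‖ * t + 1, by positivity,
    containsWedge_of_forall_abs_inner_le h₁ (t := ‖w‖ * t + 1) (by positivity) fun y hy => ?_⟩
  have hw₁y : 0 ≤ ⟪w₁, y⟫_ℝ := hy h₁
  have hw₂y : 0 ≤ ⟪w₂, y⟫_ℝ := hy h₂
  calc |⟪w, y⟫_ℝ| ≤ ‖w‖ * ‖y‖ := abs_real_inner_le_norm _ _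
    _ ≤ ‖w‖ * (t * ⟪y, w₁ + w₂⟫_ℝ) := by gcongr; exact hnorm y hy
    _ = ‖w‖ * t * (⟪w₁, y⟫_ℝ + ⟪w₂, y⟫_ℝ) := by rw [real_inner_comm, inner_add_left]; ring
    _ ≤ (‖w‖ * t + 1) * ⟪w₁, y⟫_ℝ + (‖w‖ * t + 1) * ⟪w₂, y⟫_ℝ := by linarith

theorem StrictlyPositiveOn.containsFlatWedges (h₁ : w₁ ∈ C)
    (hpos : StrictlyPositiveOn (innerDual (C : Set E) : Set E) (w₁ + w₂))
    (hw : ∀ α ∈ exposedFaceSpan (innerDual (C : Set E)) w₁, ⟪w, α⟫_ℝ = 0) :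
    ContainsFlatWedges (C : Set E) w₁ w₂ w := by
  intro κ hκ
  obtain ⟨t, ht, hlt⟩ := exists_forall_pos_add_mul_of_homogeneous (C := innerDual (C : Set E))
    (f := fun y => κ * ⟪w₂, y⟫_ℝ - |⟪w, y⟫_ℝ|) (g := fun y => ⟪w₁, y⟫_ℝ)
    (by fun_prop) (by fun_prop)
    (fun c hc y => by
      rw [real_inner_smul_right, real_inner_smul_right, abs_mul, abs_of_pos hc]; ring)
    (fun _ _ _ => real_inner_smul_right _ _ _) (fun y hy => hy h₁) fun y hy hy₀ h₀ => by
      have hw₂y := hpos y hy hy₀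
      rw [inner_add_right, real_inner_comm, h₀, zero_add, real_inner_comm] at hw₂y
      rw [hw y (mem_exposedFaceSpan hy (by rw [real_inner_comm, h₀])), abs_zero, sub_zero]
      exact mul_pos hκ hw₂y
  refine containsWedge_of_forall_abs_inner_le h₁ ht fun y hy => ?_
  obtain rfl | hy₀ := eq_or_ne y 0
  · simp
  · linarith [hlt y hy hy₀]

end Wedges

section Chords

variable {E : Type*} [NormedAddCommGroup E] [InnerProductSpace ℝ E]

theorem exists_inner_eq_one_of_notMem (S : Submodule ℝ E) [S.HasOrthogonalProjection] {x : E}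
    (hx : x ∉ S) : ∃ y, (∀ s ∈ S, ⟪y, s⟫_ℝ = 0) ∧ ⟪y, x⟫_ℝ = 1 := by
  set z := x - S.starProjection x with hz_def
  have hzS : ∀ s ∈ S, ⟪z, s⟫_ℝ = 0 :=
    (Submodule.mem_orthogonal' S z).1 (Submodule.sub_starProjection_mem_orthogonal x)
  have hproj : S.starProjection x ∈ S := Submodule.starProjection_apply_mem S x
  have hz : z ≠ 0 := fun h₀ => hx (by rw [sub_eq_zero.1 h₀]; exact hproj)
  have hzx : ⟪z, x⟫_ℝ = ⟪z, z⟫_ℝ := by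
    conv_rhs => rw [hz_def, inner_sub_right, ← hz_def, hzS _ hproj, sub_zero]
  refine ⟨(⟪z, z⟫_ℝ)⁻¹ • z, fun s hs => by rw [real_inner_smul_left, hzS s hs, mul_zero], ?_⟩
  rw [real_inner_smul_left, hzx, inv_mul_cancel₀ (inner_self_eq_zero.not.2 hz)]

theorem notMem_span_pair_of_inner_eq_zero {a b x y z : E} (hax : ⟪a, x⟫_ℝ = 0)
    (hby : ⟪b, y⟫_ℝ = 0) (hay : ⟪a, y⟫_ℝ ≠ 0) (hbx : ⟪b, x⟫_ℝ ≠ 0) (hzx : ⟪z, x⟫_ℝ = 0)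
    (hzy : ⟪z, y⟫_ℝ = 0) (hz : z ≠ 0) : z ∉ Submodule.span ℝ {a, b} := by
  rw [Submodule.mem_span_pair]
  rintro ⟨c, d, rfl⟩
  simp only [inner_add_left, real_inner_smul_left, hax, hby, mul_zero, zero_add, add_zero,
    mul_eq_zero, hay, hbx, or_false] at hzx hzy
  simp [hzx, hzy] at hz

variable [FiniteDimensional ℝ E]

/-- One end `w₁` of a chord frame (see `IsChordFrame`). The last field is the dichotomy driving the
construction: either the exposing functional `φ₁` dominates the transversal functional `α`, or
`C` is smooth at `w₁` in the transversal direction `w`. -/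
structure IsChordEnd (C : ProperCone ℝ E) (w₁ w₂ w φ₁ α : E) : Prop where
  mem : w₁ ∈ C
  mem_innerDual : φ₁ ∈ innerDual (C : Set E)
  inner_eq_zero : ⟪w₁, φ₁⟫_ℝ = 0
  inner_transversal : ⟪w₁, α⟫_ℝ = 0
  transversal_inner : ⟪w, φ₁⟫_ℝ = 0
  exists_containsWedge : ∃ κ : ℝ, 0 < κ ∧ ContainsWedge (C : Set E) w₁ w₂ w κ
  isDominatedOn_or_containsFlatWedges :
    IsDominatedOn (C : Set E) φ₁ α ∨ ContainsFlatWedges (C : Set E) w₁ w₂ w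

/-- A chord of `C` with ends `w₁` and `w₂`, exposed by `φ₁` and `φ₂`, together with a transversal
direction `w` and a transversal functional `α`. The quadratic bound says that the projection of
`C` to the coordinates `(φ₁, φ₂, α)` lies in a Lorentz cone. -/
structure IsChordFrame (C : ProperCone ℝ E) (w₁ w₂ w φ₁ φ₂ α : E) : Prop where
  left : IsChordEnd C w₁ w₂ w φ₁ α
  right : IsChordEnd C w₂ w₁ w φ₂ α
  inner_eq_one : ⟪w, α⟫_ℝ = 1
  exists_sq_le : ∃ K : ℝ, 0 ≤ K ∧ ∀ v ∈ C, ⟪v, α⟫_ℝ ^ 2 ≤ K * (⟪v, φ₁⟫_ℝ * ⟪v, φ₂⟫_ℝ)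

variable {C : ProperCone ℝ E} {u w w₁ w₂ φ₁ φ₂ α : E}

theorem IsChordFrame.symm (h : IsChordFrame C w₁ w₂ w φ₁ φ₂ α) :
    IsChordFrame C w₂ w₁ w φ₂ φ₁ α :=
  ⟨h.right, h.left, h.inner_eq_one, by simpa only [mul_comm] using h.exists_sq_le⟩

/-- A chord of `C` through the interior with distinct, quadratically exposed ends. -/
structure IsExposedChord (C : ProperCone ℝ E) (u w₁ w₂ φ₁ φ₂ : E) : Prop where
  left : IsExposing C u w₁ φ₁
  right : IsExposing C u w₂ φ₂
  left_pos : 0 < ⟪w₁, φ₂⟫_ℝ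
  right_pos : 0 < ⟪w₂, φ₁⟫_ℝ
  strictlyPositiveOn : StrictlyPositiveOn (innerDual (C : Set E) : Set E) (w₁ + w₂)

theorem IsExposedChord.symm (h : IsExposedChord C u w₁ w₂ φ₁ φ₂) :
    IsExposedChord C u w₂ w₁ φ₂ φ₁ :=
  ⟨h.right, h.left, h.right_pos, h.left_pos, add_comm w₁ w₂ ▸ h.strictlyPositiveOn⟩

theorem IsExposedChord.exists_inner_le (h : IsExposedChord C u w₁ w₂ φ₁ φ₂)
    (hu : StrictlyPositiveOn (C : Set E) u) :
    ∃ t : ℝ, 0 ≤ t ∧ ∀ v ∈ C, ⟪v, u⟫_ℝ ≤ t * (⟪v, φ₁⟫_ℝ + ⟪v, φ₂⟫_ℝ) := by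
  have hpos : StrictlyPositiveOn (C : Set E) (φ₁ + φ₂) := fun v hv hv₀ => by
    have hv₁ : 0 ≤ ⟪v, φ₁⟫_ℝ := h.left.mem_innerDual hv
    have hv₂ : 0 ≤ ⟪v, φ₂⟫_ℝ := h.right.mem_innerDual hv
    rw [inner_add_right]
    obtain h₀ | h₀ := hv₁.eq_or_lt
    · rw [h.left.eq_inner_smul hv h₀.symm, real_inner_smul_left, real_inner_smul_left,
        h.left.inner_eq_zero, mul_zero, zero_add]
      exact mul_pos (hu v hv hv₀) h.left_pos
    · linarith
  obtain ⟨t, ht, hnorm⟩ := hpos.exists_norm_le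
  refine ⟨‖u‖ * t, by positivity, fun v hv => ?_⟩
  calc ⟪v, u⟫_ℝ ≤ ‖u‖ * ‖v‖ := (real_inner_le_norm v u).trans_eq (mul_comm _ _)
    _ ≤ ‖u‖ * (t * ⟪v, φ₁ + φ₂⟫_ℝ) := by gcongr; exact hnorm v hv
    _ = ‖u‖ * t * (⟪v, φ₁⟫_ℝ + ⟪v, φ₂⟫_ℝ) := by rw [inner_add_right, mul_assoc]

theorem IsExposedChord.exists_sq_inner_le (h : IsExposedChord C u w₁ w₂ φ₁ φ₂)
    (hu : StrictlyPositiveOn (C : Set E) u) (h₁ : ⟪w₁, α⟫_ℝ = 0) (h₂ : ⟪w₂, α⟫_ℝ = 0) :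
    ∃ K : ℝ, 0 ≤ K ∧ ∀ v ∈ C, ⟪v, α⟫_ℝ ^ 2 ≤ K * (⟪v, φ₁⟫_ℝ * ⟪v, φ₂⟫_ℝ) := by
  obtain ⟨t, ht, hle⟩ := h.exists_inner_le hu
  refine ⟨2 * ‖α‖ ^ 2 * t, by positivity, fun v hv => ?_⟩
  have hv₁ : 0 ≤ ⟪v, φ₁⟫_ℝ := h.left.mem_innerDual hv
  have hv₂ : 0 ≤ ⟪v, φ₂⟫_ℝ := h.right.mem_innerDual hv
  have hbound : ∀ p q : ℝ, 0 ≤ p → p ≤ q → ⟪v, u⟫_ℝ ≤ t * (p + q) →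
      ⟪v, α⟫_ℝ ^ 2 ≤ ‖α‖ ^ 2 * (p * ⟪v, u⟫_ℝ) → ⟪v, α⟫_ℝ ^ 2 ≤ 2 * ‖α‖ ^ 2 * t * (p * q) := by
    intro p q hp hpq hvu hsq
    calc ⟪v, α⟫_ℝ ^ 2 ≤ ‖α‖ ^ 2 * (p * ⟪v, u⟫_ℝ) := hsq
      _ ≤ ‖α‖ ^ 2 * (p * (t * (q + q))) := by gcongr; exact hvu.trans (by gcongr)
      _ = 2 * ‖α‖ ^ 2 * t * (p * q) := by ring
  obtain hpq | hqp := le_total ⟪v, φ₁⟫_ℝ ⟪v, φ₂⟫_ℝ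
  · exact hbound _ _ hv₁ hpq (hle v hv) (h.left.sq_inner_le h₁ hv)
  · rw [mul_comm ⟪v, φ₁⟫_ℝ]
    exact hbound _ _ hv₂ hqp (add_comm ⟪v, φ₁⟫_ℝ _ ▸ hle v hv) (h.right.sq_inner_le h₂ hv)

theorem IsExposedChord.isChordEnd (h : IsExposedChord C u w₁ w₂ φ₁ φ₂)
    (hα : ⟪w₁, α⟫_ℝ = 0) (hw : ⟪w, φ₁⟫_ℝ = 0)
    (hdich : α ∈ exposedFaceSpan (innerDual (C : Set E)) w₁ ∨
      ∀ β ∈ exposedFaceSpan (innerDual (C : Set E)) w₁, ⟪w, β⟫_ℝ = 0) :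
    IsChordEnd C w₁ w₂ w φ₁ α :=
  ⟨h.left.mem, h.left.mem_innerDual, h.left.inner_eq_zero, hα, hw,
    h.strictlyPositiveOn.exists_containsWedge h.left.mem h.right.mem w,
    hdich.imp (h.left.isDominatedOn α) (h.strictlyPositiveOn.containsFlatWedges h.left.mem)⟩

theorem IsExposedChord.isChordFrame (h : IsExposedChord C u w₁ w₂ φ₁ φ₂)
    (hu : StrictlyPositiveOn (C : Set E) u)
    (hα₁ : ⟪w₁, α⟫_ℝ = 0) (hα₂ : ⟪w₂, α⟫_ℝ = 0) (hw₁ : ⟪w, φ₁⟫_ℝ = 0) (hw₂ : ⟪w, φ₂⟫_ℝ = 0)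
    (hwα : ⟪w, α⟫_ℝ = 1)
    (hdich₁ : α ∈ exposedFaceSpan (innerDual (C : Set E)) w₁ ∨
      ∀ β ∈ exposedFaceSpan (innerDual (C : Set E)) w₁, ⟪w, β⟫_ℝ = 0)
    (hdich₂ : α ∈ exposedFaceSpan (innerDual (C : Set E)) w₂ ∨
      ∀ β ∈ exposedFaceSpan (innerDual (C : Set E)) w₂, ⟪w, β⟫_ℝ = 0) :
    IsChordFrame C w₁ w₂ w φ₁ φ₂ α :=
  ⟨h.isChordEnd hα₁ hw₁ hdich₁, h.symm.isChordEnd hα₂ hw₂ hdich₂, hwα,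
    h.exists_sq_inner_le hu hα₁ hα₂⟩

theorem IsExposedChord.exists_isChordFrame_of_mem_inf (h : IsExposedChord C u w₁ w₂ φ₁ φ₂)
    (hu : StrictlyPositiveOn (C : Set E) u)
    (hα₁ : α ∈ exposedFaceSpan (innerDual (C : Set E)) w₁)
    (hα₂ : α ∈ exposedFaceSpan (innerDual (C : Set E)) w₂) (hα : α ≠ 0) :
    ∃ w, IsChordFrame C w₁ w₂ w φ₁ φ₂ α := by
  have hαw₁ := inner_eq_zero_of_mem_exposedFaceSpan hα₁
  have hαw₂ := inner_eq_zero_of_mem_exposedFaceSpan hα₂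
  obtain ⟨w, hw, hwα⟩ := exists_inner_eq_one_of_notMem _
    (notMem_span_pair_of_inner_eq_zero (a := φ₁) (b := φ₂)
      (by rw [real_inner_comm, h.left.inner_eq_zero])
      (by rw [real_inner_comm, h.right.inner_eq_zero])
      (by rw [real_inner_comm]; exact h.right_pos.ne')
      (by rw [real_inner_comm]; exact h.left_pos.ne') hαw₁ hαw₂ hα)
  exact ⟨w, h.isChordFrame hu (by rw [real_inner_comm, hαw₁]) (by rw [real_inner_comm, hαw₂])
    (hw _ (Submodule.subset_span (by simp))) (hw _ (Submodule.subset_span (by simp)))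
    hwα (.inl hα₁) (.inl hα₂)⟩

theorem IsExposedChord.exists_isChordFrame_of_disjoint (h : IsExposedChord C u w₁ w₂ φ₁ φ₂)
    (hu : StrictlyPositiveOn (C : Set E) u)
    (hdisj : Disjoint (exposedFaceSpan (innerDual (C : Set E)) w₁)
      (exposedFaceSpan (innerDual (C : Set E)) w₂))
    (hα₁ : α ∈ exposedFaceSpan (innerDual (C : Set E)) w₁) (hα₂ : ⟪w₂, α⟫_ℝ = 0) (hα : α ≠ 0) :
    ∃ w, IsChordFrame C w₁ w₂ w φ₁ φ₂ α := by
  have hnotMem : α ∉ exposedFaceSpan (innerDual (C : Set E)) w₂ ⊔ Submodule.span ℝ {φ₁} := by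
    intro hmem
    obtain ⟨β, hβ, γ, hγ, rfl⟩ := Submodule.mem_sup.1 hmem
    obtain ⟨c, rfl⟩ := Submodule.mem_span_singleton.1 hγ
    have hcφ₁ := Submodule.smul_mem _ c h.left.mem_exposedFaceSpan
    obtain rfl := Submodule.disjoint_def.1 hdisj β ((Submodule.add_mem_iff_left _ hcφ₁).1 hα₁) hβ
    rw [zero_add, real_inner_smul_right] at hα₂
    exact hα (by rw [(mul_eq_zero.1 hα₂).resolve_right h.right_pos.ne', zero_smul, zero_add])
  obtain ⟨w, hw, hwα⟩ := exists_inner_eq_one_of_notMem _ hnotMem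
  exact ⟨w, h.isChordFrame hu
    (by rw [real_inner_comm, inner_eq_zero_of_mem_exposedFaceSpan hα₁]) hα₂
    (hw _ (Submodule.mem_sup_right (Submodule.mem_span_singleton_self _)))
    (hw _ (Submodule.mem_sup_left h.right.mem_exposedFaceSpan)) hwα (.inl hα₁)
    (.inr fun β hβ => hw β (Submodule.mem_sup_left hβ))⟩

theorem IsExposedChord.isClassicalCone (h : IsExposedChord C u w₁ w₂ φ₁ φ₂)
    (hzero : ∀ w, ⟪w, φ₁⟫_ℝ = 0 → ⟪w, φ₂⟫_ℝ = 0 → w = 0) : IsClassicalCone (C : Set E) := by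
  have hleft := h.left_pos.ne'
  have hright := h.right_pos.ne'
  refine isClassicalCone_of_forall_eq_sum (w := ![w₁, w₂])
    (ℓ := ![(⟪w₁, φ₂⟫_ℝ)⁻¹ • φ₂, (⟪w₂, φ₁⟫_ℝ)⁻¹ • φ₁]) ?_ ?_ ?_ fun x => ?_
  · exact Fin.forall_fin_two.2 ⟨h.left.mem, h.right.mem⟩
  · exact Fin.forall_fin_two.2
      ⟨(innerDual (C : Set E)).smul_mem h.right.mem_innerDual (inv_nonneg.2 h.left_pos.le),
        (innerDual (C : Set E)).smul_mem h.left.mem_innerDual (inv_nonneg.2 h.right_pos.le)⟩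
  · refine LinearIndependent.pair_iff.2 fun a b hab => ⟨?_, ?_⟩
    · simpa [inner_add_left, real_inner_smul_left, h.right.inner_eq_zero, hleft]
        using congrArg (⟪·, φ₂⟫_ℝ) hab
    · simpa [inner_add_left, real_inner_smul_left, h.left.inner_eq_zero, hright]
        using congrArg (⟪·, φ₁⟫_ℝ) hab
  · rw [← sub_eq_zero, Fin.sum_univ_two]
    refine hzero _ ?_ ?_ <;>
      simp [inner_sub_left, inner_add_left, real_inner_smul_left, real_inner_smul_right,
        h.left.inner_eq_zero, h.right.inner_eq_zero, mul_right_comm, hleft, hright]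

theorem IsExposedChord.inner_eq_zero_of_mem_exposedFaceSpan
    (h : IsExposedChord C u w₁ w₂ φ₁ φ₂)
    (hF : ∀ β ∈ exposedFaceSpan (innerDual (C : Set E)) w₁, ⟪w₂, β⟫_ℝ = 0 → β = 0)
    (hw : ⟪w, φ₁⟫_ℝ = 0) {β : E} (hβ : β ∈ exposedFaceSpan (innerDual (C : Set E)) w₁) :
    ⟪w, β⟫_ℝ = 0 := by
  have hβ₀ := hF (β - (⟪w₂, β⟫_ℝ / ⟪w₂, φ₁⟫_ℝ) • φ₁)
    (Submodule.sub_mem _ hβ (Submodule.smul_mem _ _ h.left.mem_exposedFaceSpan))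
    (by rw [inner_sub_right, real_inner_smul_right, div_mul_cancel₀ _ h.right_pos.ne', sub_self])
  rw [sub_eq_zero.1 hβ₀, real_inner_smul_right, hw, mul_zero]

theorem IsExposedChord.exists_isChordFrame_of_forall_eq_zero
    (h : IsExposedChord C u w₁ w₂ φ₁ φ₂) (hu : StrictlyPositiveOn (C : Set E) u)
    (hcl : ¬ IsClassicalCone (C : Set E))
    (hF₁ : ∀ β ∈ exposedFaceSpan (innerDual (C : Set E)) w₁, ⟪w₂, β⟫_ℝ = 0 → β = 0)
    (hF₂ : ∀ β ∈ exposedFaceSpan (innerDual (C : Set E)) w₂, ⟪w₁, β⟫_ℝ = 0 → β = 0) :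
    ∃ w α, IsChordFrame C w₁ w₂ w φ₁ φ₂ α := by
  obtain ⟨w, hw₁, hw₂, hw⟩ : ∃ w, ⟪w, φ₁⟫_ℝ = 0 ∧ ⟪w, φ₂⟫_ℝ = 0 ∧ w ≠ 0 := by
    by_contra! hzero
    exact hcl (h.isClassicalCone hzero)
  obtain ⟨α, hα, hαw⟩ := exists_inner_eq_one_of_notMem _
    (notMem_span_pair_of_inner_eq_zero h.left.inner_eq_zero h.right.inner_eq_zero
      h.left_pos.ne' h.right_pos.ne' hw₁ hw₂ hw)
  exact ⟨w, α, h.isChordFrame hu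
    (by rw [real_inner_comm]; exact hα _ (Submodule.subset_span (by simp)))
    (by rw [real_inner_comm]; exact hα _ (Submodule.subset_span (by simp)))
    hw₁ hw₂ (by rw [real_inner_comm, hαw])
    (.inr fun β hβ => h.inner_eq_zero_of_mem_exposedFaceSpan hF₁ hw₁ hβ)
    (.inr fun β hβ => h.symm.inner_eq_zero_of_mem_exposedFaceSpan hF₂ hw₂ hβ)⟩

theorem IsExposedChord.exists_isChordFrame (h : IsExposedChord C u w₁ w₂ φ₁ φ₂)
    (hu : StrictlyPositiveOn (C : Set E) u) (hcl : ¬ IsClassicalCone (C : Set E)) :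
    ∃ w α, IsChordFrame C w₁ w₂ w φ₁ φ₂ α := by
  by_cases hdisj : Disjoint (exposedFaceSpan (innerDual (C : Set E)) w₁)
    (exposedFaceSpan (innerDual (C : Set E)) w₂)
  · by_cases hF₁ : ∀ β ∈ exposedFaceSpan (innerDual (C : Set E)) w₁, ⟪w₂, β⟫_ℝ = 0 → β = 0
    · by_cases hF₂ : ∀ β ∈ exposedFaceSpan (innerDual (C : Set E)) w₂, ⟪w₁, β⟫_ℝ = 0 → β = 0
      · exact h.exists_isChordFrame_of_forall_eq_zero hu hcl hF₁ hF₂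
      · push Not at hF₂
        obtain ⟨α, hα₂, hα₁, hα⟩ := hF₂
        obtain ⟨w, hframe⟩ := h.symm.exists_isChordFrame_of_disjoint hu hdisj.symm hα₂ hα₁ hα
        exact ⟨w, α, hframe.symm⟩
    · push Not at hF₁
      obtain ⟨α, hα₁, hα₂, hα⟩ := hF₁
      obtain ⟨w, hframe⟩ := h.exists_isChordFrame_of_disjoint hu hdisj hα₁ hα₂ hα
      exact ⟨w, α, hframe⟩
  · simp only [Submodule.disjoint_def, not_forall] at hdisj
    obtain ⟨α, hα₁, hα₂, hα⟩ := hdisj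
    obtain ⟨w, hframe⟩ := h.exists_isChordFrame_of_mem_inf hu hα₁ hα₂ hα
    exact ⟨w, α, hframe⟩

theorem IsExposing.isClassicalCone_of_functional_eq_zero (hC : IsProperCone (C : Set E))
    (hu : StrictlyPositiveOn (C : Set E) u) (hw : IsExposing C u w 0) (hw₀ : w ≠ 0) :
    IsClassicalCone (C : Set E) := by
  refine isClassicalCone_of_forall_eq_sum (ι := Unit) (w := fun _ => w) (ℓ := fun _ => u)
    (fun _ => hw.mem) (fun _ => hu.mem_innerDual) (LinearIndependent.of_subsingleton () hw₀)
    fun x => ?_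
  have hx : x ∈ Submodule.span ℝ (C : Set E) := hC.span_eq_top ▸ Submodule.mem_top
  rw [Fintype.sum_unique]
  induction hx using Submodule.span_induction with
  | mem x hx => exact hw.eq_inner_smul hx (inner_zero_right x)
  | zero => rw [inner_zero_left, zero_smul]
  | add x y _ _ hx hy => rw [inner_add_left, add_smul, ← hx, ← hy]
  | smul c x _ hx => rw [real_inner_smul_left, mul_smul, ← hx]

theorem exists_isChordFrame (hC : IsProperCone (C : Set E)) (hfaces : HasClassicalFaces C)
    (hfaces' : HasClassicalFaces (innerDual (C : Set E))) (hcl : ¬ IsClassicalCone (C : Set E)) :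
    ∃ w₁ w₂ w φ₁ φ₂ α, IsChordFrame C w₁ w₂ w φ₁ φ₂ α := by
  obtain ⟨u, hu⟩ := hC.exists_strictlyPositiveOn
  obtain ⟨w₁, w₂, hw₁, hw₂, hpos⟩ :=
    exists_isQuadExposed_add_strictlyPositiveOn hC hfaces hfaces' hcl hu
  obtain ⟨φ₁, hφ₁⟩ := hw₁.exists_isExposing hu
  obtain ⟨φ₂, hφ₂⟩ := hw₂.exists_isExposing hu
  have hne : w₁ ≠ w₂ := by
    rintro rfl
    have hφ₁₀ : φ₁ = 0 := by
      by_contra h₀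
      have h := hpos φ₁ hφ₁.mem_innerDual h₀
      rw [real_inner_comm, inner_add_left, hφ₁.inner_eq_zero, add_zero] at h
      exact h.false
    subst hφ₁₀
    exact hcl (hφ₁.isClassicalCone_of_functional_eq_zero hC hu hw₁.ne_zero)
  have hchord : IsExposedChord C u w₁ w₂ φ₁ φ₂ := ⟨hφ₁, hφ₂,
    hφ₂.inner_pos hw₁.mem hw₁.inner_eq_one hne, hφ₁.inner_pos hw₂.mem hw₂.inner_eq_one hne.symm,
    hpos⟩
  obtain ⟨w, α, hframe⟩ := hchord.exists_isChordFrame hu hcl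
  exact ⟨w₁, w₂, w, φ₁, φ₂, α, hframe⟩

end Chords

section ChordMap

open Filter
open scoped Topology

variable {E₁ E₂ : Type*} [NormedAddCommGroup E₁] [InnerProductSpace ℝ E₁]
  [NormedAddCommGroup E₂] [InnerProductSpace ℝ E₂]

/-- The map sending a chord frame of one cone to a chord frame of another: to first order in `ε` it
is `φ₁ ⊗ x₁ + φ₂ ⊗ x₂ + ε α ⊗ x`, and the correction of order `ε ^ 2` restores positivity. -/
def chordMap (φ₁ φ₂ α : E₁) (x₁ x₂ x : E₂) (q ε : ℝ) : E₁ →ₗ[ℝ] E₂ :=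
  (innerₗ E₁ (φ₁ + (q * ε ^ 2) • (φ₁ + φ₂))).smulRight x₁ +
    (innerₗ E₁ (φ₂ + (q * ε ^ 2) • (φ₁ + φ₂))).smulRight x₂ + (innerₗ E₁ (ε • α)).smulRight x

theorem chordMap_apply (φ₁ φ₂ α : E₁) (x₁ x₂ x : E₂) (q ε : ℝ) (v : E₁) :
    chordMap φ₁ φ₂ α x₁ x₂ x q ε v =
      (⟪v, φ₁⟫_ℝ + q * ε ^ 2 * (⟪v, φ₁⟫_ℝ + ⟪v, φ₂⟫_ℝ)) • x₁ +
        (⟪v, φ₂⟫_ℝ + q * ε ^ 2 * (⟪v, φ₁⟫_ℝ + ⟪v, φ₂⟫_ℝ)) • x₂ + (ε * ⟪v, α⟫_ℝ) • x := by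
  simp only [chordMap, LinearMap.add_apply, LinearMap.smulRight_apply, innerₗ_apply_apply,
    real_inner_comm v, inner_add_right, real_inner_smul_right]

theorem chordMap_swap (φ₁ φ₂ α : E₁) (x₁ x₂ x : E₂) (q ε : ℝ) :
    chordMap φ₁ φ₂ α x₁ x₂ x q ε = chordMap φ₂ φ₁ α x₂ x₁ x q ε := by
  ext v
  rw [chordMap_apply, chordMap_apply, add_comm ⟪v, φ₁⟫_ℝ ⟪v, φ₂⟫_ℝ]
  abel

theorem comp_chordMap {W : Type*} [AddCommGroup W] [Module ℝ W] (T : E₂ →ₗ[ℝ] W)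
    (φ₁ φ₂ α : E₁) (x₁ x₂ x : E₂) (q ε : ℝ) :
    T ∘ₗ chordMap φ₁ φ₂ α x₁ x₂ x q ε =
      (innerₗ E₁ (φ₁ + (q * ε ^ 2) • (φ₁ + φ₂))).smulRight (T x₁) +
        (innerₗ E₁ (φ₂ + (q * ε ^ 2) • (φ₁ + φ₂))).smulRight (T x₂) +
        (innerₗ E₁ (ε • α)).smulRight (T x) := by
  ext v
  simp only [chordMap, LinearMap.comp_apply, LinearMap.add_apply, LinearMap.smulRight_apply,
    map_add, map_smul]

theorem smul_add_smul_add_smul_mem {C : ProperCone ℝ E₂} {x₁ x₂ x : E₂} (hx₁ : x₁ ∈ C) {κ δ : ℝ}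
    (hwedge : ∀ s : ℝ, |s| ≤ δ → x₂ + (κ * |s|) • x₁ + s • x ∈ C) {a b s : ℝ} (ha : 0 ≤ a)
    (hb : κ * |s| ≤ b) (hs : |s| ≤ δ * a) : b • x₁ + a • x₂ + s • x ∈ C := by
  obtain rfl | ha := ha.eq_or_lt
  · obtain rfl : s = 0 := abs_nonpos_iff.1 (by rwa [mul_zero] at hs)
    rw [abs_zero, mul_zero] at hb
    simpa using C.smul_mem hx₁ hb
  · have hmem := hwedge (s / a) (by rwa [abs_div, abs_of_pos ha, div_le_iff₀ ha])
    have hsplit : b • x₁ + a • x₂ + s • x =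
        (b - κ * |s|) • x₁ + a • (x₂ + (κ * |s / a|) • x₁ + (s / a) • x) := by
      rw [abs_div, abs_of_pos ha]
      match_scalars <;> field_simp
      ring
    rw [hsplit]
    exact add_mem (C.smul_mem hx₁ (sub_nonneg.2 hb)) (C.smul_mem hmem ha.le)

theorem mul_abs_mul_le_add {p r a K q κ : ℝ} (hp : 0 ≤ p) (hr : 0 ≤ r) (hq : 0 ≤ q)
    (ha : a ^ 2 ≤ K * (p * r)) (hκ : κ ^ 2 * K ≤ 4 * q) (ε : ℝ) :
    κ * |ε * a| ≤ p + q * ε ^ 2 * r := by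
  refine (le_abs_self _).trans (abs_le_of_sq_le_sq ?_ (by positivity))
  calc (κ * |ε * a|) ^ 2 = κ ^ 2 * (ε ^ 2 * a ^ 2) := by rw [mul_pow, sq_abs, mul_pow]
    _ ≤ κ ^ 2 * (ε ^ 2 * (K * (p * r))) := by gcongr
    _ = κ ^ 2 * K * (ε ^ 2 * (p * r)) := by ring
    _ ≤ 4 * q * (ε ^ 2 * (p * r)) := by gcongr
    _ ≤ (p + q * ε ^ 2 * r) ^ 2 := by linarith [sq_nonneg (p - q * ε ^ 2 * r)]

theorem eventually_abs_le {δ : ℝ} (hδ : 0 < δ) : ∀ᶠ ε : ℝ in 𝓝 0, |ε| ≤ δ :=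
  (continuous_abs.tendsto' (0 : ℝ) 0 abs_zero).eventually_le_const hδ

variable {C₁ : ProperCone ℝ E₁} {C₂ : ProperCone ℝ E₂} {w₁ w₂ w φ₁ φ₂ α : E₁}
  {x₁ x₂ x ψ₁ ψ₂ β : E₂} {q κ : ℝ}

theorem eventually_mapsTo_chordMap
    (h₁₂ : ∀ᶠ ε : ℝ in 𝓝 0, ∀ v ∈ C₁, ⟪v, φ₁⟫_ℝ ≤ ⟪v, φ₂⟫_ℝ →
      chordMap φ₁ φ₂ α x₁ x₂ x q ε v ∈ C₂)
    (h₂₁ : ∀ᶠ ε : ℝ in 𝓝 0, ∀ v ∈ C₁, ⟪v, φ₂⟫_ℝ ≤ ⟪v, φ₁⟫_ℝ →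
      chordMap φ₂ φ₁ α x₂ x₁ x q ε v ∈ C₂) :
    ∀ᶠ ε : ℝ in 𝓝 0, MapsTo (chordMap φ₁ φ₂ α x₁ x₂ x q ε) C₁ C₂ := by
  filter_upwards [h₁₂, h₂₁] with ε hε₁₂ hε₂₁ v hv
  obtain hle | hle := le_total ⟪v, φ₁⟫_ℝ ⟪v, φ₂⟫_ℝ
  · exact hε₁₂ v hv hle
  · rw [chordMap_swap]
    exact hε₂₁ v hv hle

variable [FiniteDimensional ℝ E₁]

theorem IsChordFrame.exists_abs_inner_le (h : IsChordFrame C₁ w₁ w₂ w φ₁ φ₂ α) :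
    ∃ K : ℝ, 0 < K ∧ ∀ v ∈ C₁, ⟪v, φ₁⟫_ℝ ≤ ⟪v, φ₂⟫_ℝ → |⟪v, α⟫_ℝ| ≤ K * ⟪v, φ₂⟫_ℝ := by
  obtain ⟨K, hK, hsq⟩ := h.exists_sq_le
  refine ⟨K + 1, by linarith, fun v hv hle => ?_⟩
  have hv₂ : 0 ≤ ⟪v, φ₂⟫_ℝ := h.right.mem_innerDual hv
  refine abs_le_of_sq_le_sq ?_ (by positivity)
  calc ⟪v, α⟫_ℝ ^ 2 ≤ K * (⟪v, φ₁⟫_ℝ * ⟪v, φ₂⟫_ℝ) := hsq v hv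
    _ ≤ K * (⟪v, φ₂⟫_ℝ * ⟪v, φ₂⟫_ℝ) := by gcongr
    _ ≤ (K + 1) ^ 2 * (⟪v, φ₂⟫_ℝ * ⟪v, φ₂⟫_ℝ) := by gcongr; nlinarith
    _ = ((K + 1) * ⟪v, φ₂⟫_ℝ) ^ 2 := by ring

theorem IsChordFrame.eventually_chordMap_mem (h₁ : IsChordFrame C₁ w₁ w₂ w φ₁ φ₂ α)
    (hx₁ : x₁ ∈ C₂) (hwedge : ContainsWedge (C₂ : Set E₂) x₂ x₁ x κ) (hq : 0 ≤ q)
    (hle : ∀ᶠ ε : ℝ in 𝓝 0, ∀ v ∈ C₁,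
      κ * |ε * ⟪v, α⟫_ℝ| ≤ ⟪v, φ₁⟫_ℝ + q * ε ^ 2 * ⟪v, φ₂⟫_ℝ) :
    ∀ᶠ ε : ℝ in 𝓝 0, ∀ v ∈ C₁, ⟪v, φ₁⟫_ℝ ≤ ⟪v, φ₂⟫_ℝ →
      chordMap φ₁ φ₂ α x₁ x₂ x q ε v ∈ C₂ := by
  obtain ⟨δ, hδ, hwedge⟩ := hwedge
  obtain ⟨K, hK, hα⟩ := h₁.exists_abs_inner_le
  filter_upwards [hle, eventually_abs_le (div_pos hδ hK)] with ε hε hεδ v hv hv₁₂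
  rw [le_div_iff₀ hK] at hεδ
  have hv₁ : 0 ≤ ⟪v, φ₁⟫_ℝ := h₁.left.mem_innerDual hv
  have hv₂ : 0 ≤ ⟪v, φ₂⟫_ℝ := h₁.right.mem_innerDual hv
  have hqε : 0 ≤ q * ε ^ 2 * ⟪v, φ₁⟫_ℝ := by positivity
  rw [chordMap_apply]
  refine smul_add_smul_add_smul_mem hx₁ hwedge (by positivity) (by linarith [hε v hv]) ?_
  calc |ε * ⟪v, α⟫_ℝ| = |ε| * |⟪v, α⟫_ℝ| := abs_mul _ _
    _ ≤ |ε| * (K * ⟪v, φ₂⟫_ℝ) := by gcongr; exact hα v hv hv₁₂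
    _ = |ε| * K * ⟪v, φ₂⟫_ℝ := by ring
    _ ≤ δ * ⟪v, φ₂⟫_ℝ := by gcongr
    _ ≤ δ * (⟪v, φ₂⟫_ℝ + q * ε ^ 2 * (⟪v, φ₁⟫_ℝ + ⟪v, φ₂⟫_ℝ)) := by
      gcongr
      exact le_add_of_nonneg_right (by positivity)

variable [FiniteDimensional ℝ E₂]

theorem IsChordFrame.exists_forall_eventually_chordMap_mem
    (h₁ : IsChordFrame C₁ w₁ w₂ w φ₁ φ₂ α) (h₂ : IsChordFrame C₂ x₁ x₂ x ψ₁ ψ₂ β) :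
    ∃ q₀ : ℝ, ∀ q ≥ q₀, ∀ᶠ ε : ℝ in 𝓝 0, ∀ v ∈ C₁, ⟪v, φ₁⟫_ℝ ≤ ⟪v, φ₂⟫_ℝ →
      chordMap φ₁ φ₂ α x₁ x₂ x q ε v ∈ C₂ := by
  obtain ⟨K, hK, hsq⟩ := h₁.exists_sq_le
  obtain ⟨κ, -, hwedge⟩ := h₂.right.exists_containsWedge
  refine ⟨κ ^ 2 * K, fun q hq => ?_⟩
  have hq₀ : 0 ≤ q := le_trans (by positivity) hq
  exact h₁.eventually_chordMap_mem h₂.left.mem hwedge hq₀ <| .of_forall fun ε v hv =>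
    mul_abs_mul_le_add (h₁.left.mem_innerDual hv) (h₁.right.mem_innerDual hv) hq₀ (hsq v hv)
      (by linarith) ε

theorem IsChordFrame.exists_eventually_mapsTo_chordMap
    (h₁ : IsChordFrame C₁ w₁ w₂ w φ₁ φ₂ α) (h₂ : IsChordFrame C₂ x₁ x₂ x ψ₁ ψ₂ β) :
    ∃ q : ℝ, 0 ≤ q ∧ ∀ᶠ ε : ℝ in 𝓝 0, MapsTo (chordMap φ₁ φ₂ α x₁ x₂ x q ε) C₁ C₂ := by
  obtain ⟨q₁₂, h₁₂⟩ := h₁.exists_forall_eventually_chordMap_mem h₂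
  obtain ⟨q₂₁, h₂₁⟩ := h₁.symm.exists_forall_eventually_chordMap_mem h₂.symm
  exact ⟨max 0 (max q₁₂ q₂₁), le_max_left _ _, eventually_mapsTo_chordMap
    (h₁₂ _ (le_max_of_le_right (le_max_left _ _)))
    (h₂₁ _ (le_max_of_le_right (le_max_right _ _)))⟩

theorem IsDominatedOn.eventually_mul_abs_le (hdom : IsDominatedOn (C₁ : Set E₁) φ₁ α)
    (hφ₁ : φ₁ ∈ innerDual (C₁ : Set E₁)) (hκ : 0 < κ) :
    ∀ᶠ ε : ℝ in 𝓝 0, ∀ v ∈ C₁, κ * |ε * ⟪v, α⟫_ℝ| ≤ ⟪v, φ₁⟫_ℝ := by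
  obtain ⟨K, hK, hle⟩ := hdom
  filter_upwards [eventually_abs_le (δ := 1 / (κ * (K + 1))) (by positivity)] with ε hε v hv
  rw [le_div_iff₀ (by positivity)] at hε
  have hv₁ : 0 ≤ ⟪v, φ₁⟫_ℝ := hφ₁ hv
  calc κ * |ε * ⟪v, α⟫_ℝ| = κ * (|ε| * |⟪v, α⟫_ℝ|) := by rw [abs_mul]
    _ ≤ κ * (|ε| * ((K + 1) * ⟪v, φ₁⟫_ℝ)) := by
      gcongr
      exact (hle v hv).trans (by gcongr; linarith)
    _ = |ε| * (κ * (K + 1)) * ⟪v, φ₁⟫_ℝ := by ring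
    _ ≤ ⟪v, φ₁⟫_ℝ := mul_le_of_le_one_left hv₁ hε

theorem IsChordFrame.eventually_chordMap_mem_of_or (h₁ : IsChordFrame C₁ w₁ w₂ w φ₁ φ₂ α)
    (h₂ : IsChordFrame C₂ x₁ x₂ x ψ₁ ψ₂ β)
    (h : IsDominatedOn (C₁ : Set E₁) φ₁ α ∨ ContainsFlatWedges (C₂ : Set E₂) x₂ x₁ x)
    (hq : 0 < q) :
    ∀ᶠ ε : ℝ in 𝓝 0, ∀ v ∈ C₁, ⟪v, φ₁⟫_ℝ ≤ ⟪v, φ₂⟫_ℝ →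
      chordMap φ₁ φ₂ α x₁ x₂ x q ε v ∈ C₂ := by
  obtain hdom | hflat := h
  · obtain ⟨κ, hκ, hwedge⟩ := h₂.right.exists_containsWedge
    refine h₁.eventually_chordMap_mem h₂.left.mem hwedge hq.le ?_
    filter_upwards [hdom.eventually_mul_abs_le h₁.left.mem_innerDual hκ] with ε hε v hv
    have hv₂ : 0 ≤ ⟪v, φ₂⟫_ℝ := h₁.right.mem_innerDual hv
    exact (hε v hv).trans (le_add_of_nonneg_right (by positivity))
  · obtain ⟨K, hK, hsq⟩ := h₁.exists_sq_le
    have hκ : √(q / (K + 1)) ^ 2 * K ≤ 4 * q := by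
      rw [Real.sq_sqrt (by positivity), div_mul_eq_mul_div, div_le_iff₀ (by positivity)]
      nlinarith
    exact h₁.eventually_chordMap_mem h₂.left.mem (hflat _ (by positivity)) hq.le <|
      .of_forall fun ε v hv => mul_abs_mul_le_add (h₁.left.mem_innerDual hv)
        (h₁.right.mem_innerDual hv) hq.le (hsq v hv) hκ ε

theorem IsChordFrame.trace_chordMap_comp_chordMap (h₁ : IsChordFrame C₁ w₁ w₂ w φ₁ φ₂ α)
    (h₂ : IsChordFrame C₂ x₁ x₂ x ψ₁ ψ₂ β) (q ε q' ε' : ℝ) :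
    LinearMap.trace ℝ E₁
        (chordMap ψ₂ ψ₁ β w₁ w₂ w q' ε' ∘ₗ chordMap φ₁ φ₂ α x₁ x₂ x q ε) =
      q' * ε' ^ 2 * (⟪w₂, φ₁⟫_ℝ * ⟪x₁, ψ₂⟫_ℝ + ⟪w₁, φ₂⟫_ℝ * ⟪x₂, ψ₁⟫_ℝ) +
        q * ε ^ 2 * (⟪w₁, φ₂⟫_ℝ * ⟪x₁, ψ₂⟫_ℝ + ⟪w₂, φ₁⟫_ℝ * ⟪x₂, ψ₁⟫_ℝ + q' * ε' ^ 2 *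
          ((⟪w₂, φ₁⟫_ℝ + ⟪w₁, φ₂⟫_ℝ) * (⟪x₂, ψ₁⟫_ℝ + ⟪x₁, ψ₂⟫_ℝ))) + ε * ε' := by
  rw [comp_chordMap, map_add, map_add, LinearMap.trace_smulRight, LinearMap.trace_smulRight,
    LinearMap.trace_smulRight]
  simp only [chordMap_apply, innerₗ_apply_apply, inner_add_left, inner_add_right,
    real_inner_smul_right, real_inner_comm w₁, real_inner_comm w₂, real_inner_comm w,
    h₁.left.inner_eq_zero, h₁.right.inner_eq_zero, h₁.left.inner_transversal,
    h₁.right.inner_transversal, h₁.left.transversal_inner, h₁.right.transversal_inner,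
    h₁.inner_eq_one, h₂.left.inner_eq_zero, h₂.right.inner_eq_zero, h₂.left.inner_transversal,
    h₂.right.inner_transversal, h₂.left.transversal_inner, h₂.right.transversal_inner,
    h₂.inner_eq_one]
  ring

theorem add_sub_mul_sq_neg {A B D M q' ε : ℝ} (hM : 0 < M) (hA : A ≤ M) (hB : B ≤ M)
    (hD : D ≤ M) (hq' : 0 ≤ q') (hε : 0 < ε) (hqε : q' * ε ^ 2 ≤ 1) :
    q' * ε ^ 2 * A + 1 / (4 * M * (4 * M * q' + 1)) * ((4 * M * q' + 1) * ε) ^ 2 *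
      (B + q' * ε ^ 2 * D) - (4 * M * q' + 1) * ε * ε < 0 := by
  set L := 4 * M * q' + 1 with hL
  have : 0 < L := by positivity
  have hDM : q' * ε ^ 2 * D ≤ M :=
    (mul_le_mul_of_nonneg_left hD (by positivity)).trans (mul_le_of_le_one_left hM.le hqε)
  calc q' * ε ^ 2 * A + 1 / (4 * M * L) * (L * ε) ^ 2 * (B + q' * ε ^ 2 * D) - L * ε * ε
      ≤ q' * ε ^ 2 * M + 1 / (4 * M * L) * (L * ε) ^ 2 * (M + M) - L * ε * ε := by gcongr
    _ = -((M * q' + 1 / 2) * ε ^ 2) := by field_simp; rw [hL]; ring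
    _ < 0 := neg_neg_of_pos (by positivity)

theorem IsChordFrame.exists_eventually_trace_neg (h₁ : IsChordFrame C₁ w₁ w₂ w φ₁ φ₂ α)
    (h₂ : IsChordFrame C₂ x₁ x₂ x ψ₁ ψ₂ β) {q' : ℝ} (hq' : 0 ≤ q') :
    ∃ q L : ℝ, 0 < q ∧ ∀ᶠ ε : ℝ in 𝓝[>] 0, LinearMap.trace ℝ E₁
      (chordMap ψ₂ ψ₁ β w₁ w₂ w q' (-ε) ∘ₗ chordMap φ₁ φ₂ α x₁ x₂ x q (L * ε)) < 0 := by
  have ha : 0 ≤ ⟪w₂, φ₁⟫_ℝ := h₁.left.mem_innerDual h₁.right.mem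
  have hb : 0 ≤ ⟪w₁, φ₂⟫_ℝ := h₁.right.mem_innerDual h₁.left.mem
  have hc : 0 ≤ ⟪x₂, ψ₁⟫_ℝ := h₂.left.mem_innerDual h₂.right.mem
  have hd : 0 ≤ ⟪x₁, ψ₂⟫_ℝ := h₂.right.mem_innerDual h₂.left.mem
  set M := (⟪w₂, φ₁⟫_ℝ + ⟪w₁, φ₂⟫_ℝ) * (⟪x₂, ψ₁⟫_ℝ + ⟪x₁, ψ₂⟫_ℝ) + 1 with hM
  have hsmall : ∀ᶠ ε : ℝ in 𝓝[>] 0, q' * ε ^ 2 ≤ 1 := nhdsWithin_le_nhds <|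
    ((by fun_prop : Continuous fun ε : ℝ => q' * ε ^ 2).tendsto' 0 0 (by simp)).eventually_le_const
      one_pos
  refine ⟨1 / (4 * M * (4 * M * q' + 1)), 4 * M * q' + 1, by positivity, ?_⟩
  filter_upwards [hsmall, self_mem_nhdsWithin] with ε hqε hε
  rw [h₁.trace_chordMap_comp_chordMap h₂, neg_sq, mul_neg, ← sub_eq_add_neg]
  refine add_sub_mul_sq_neg (by positivity) ?_ ?_ (by linarith) hq' hε hqε
  all_goals
    rw [hM]
    linarith [mul_nonneg ha hc, mul_nonneg ha hd, mul_nonneg hb hc, mul_nonneg hb hd]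

theorem IsChordFrame.hasNegativeTracePair_of_or (h₁ : IsChordFrame C₁ w₁ w₂ w φ₁ φ₂ α)
    (h₂ : IsChordFrame C₂ x₁ x₂ x ψ₁ ψ₂ β)
    (h₁₂ : IsDominatedOn (C₁ : Set E₁) φ₁ α ∨ ContainsFlatWedges (C₂ : Set E₂) x₂ x₁ x)
    (h₂₁ : IsDominatedOn (C₁ : Set E₁) φ₂ α ∨ ContainsFlatWedges (C₂ : Set E₂) x₁ x₂ x) :
    HasNegativeTracePair (C₁ : Set E₁) (C₂ : Set E₂) := by
  obtain ⟨q', hq', hQ⟩ := h₂.symm.exists_eventually_mapsTo_chordMap h₁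
  obtain ⟨q, L, hq, htrace⟩ := h₁.exists_eventually_trace_neg h₂ hq'
  have hP := eventually_mapsTo_chordMap (h₁.eventually_chordMap_mem_of_or h₂ h₁₂ hq)
    (h₁.symm.eventually_chordMap_mem_of_or h₂.symm h₂₁ hq)
  have hPL : ∀ᶠ ε : ℝ in 𝓝 0, MapsTo (chordMap φ₁ φ₂ α x₁ x₂ x q (L * ε)) C₁ C₂ :=
    ((continuous_const_mul L).tendsto' 0 0 (mul_zero L)).eventually hP
  have hQneg : ∀ᶠ ε : ℝ in 𝓝 0, MapsTo (chordMap ψ₂ ψ₁ β w₁ w₂ w q' (-ε)) C₂ C₁ :=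
    (continuous_neg.tendsto' (0 : ℝ) 0 neg_zero).eventually hQ
  obtain ⟨ε, hε, hPε, hQε⟩ :=
    (htrace.and (nhdsWithin_le_nhds (hPL.and hQneg))).exists
  exact ⟨_, _, hPε, hQε, hε⟩

theorem IsChordFrame.hasNegativeTracePair_of_isDominatedOn
    (h₁ : IsChordFrame C₁ w₁ w₂ w φ₁ φ₂ α) (h₂ : IsChordFrame C₂ x₁ x₂ x ψ₁ ψ₂ β)
    (hdom : IsDominatedOn (C₁ : Set E₁) φ₁ α) :
    HasNegativeTracePair (C₁ : Set E₁) (C₂ : Set E₂) := by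
  obtain hdom₁ | hflat₁ := h₂.left.isDominatedOn_or_containsFlatWedges
  · obtain hdom₂ | hflat₂ := h₂.right.isDominatedOn_or_containsFlatWedges
    · exact (h₂.hasNegativeTracePair_of_or h₁ (.inl hdom₁) (.inl hdom₂)).symm
    · exact h₁.hasNegativeTracePair_of_or h₂.symm (.inl hdom) (.inr hflat₂)
  · exact h₁.hasNegativeTracePair_of_or h₂ (.inl hdom) (.inr hflat₁)

theorem IsChordFrame.hasNegativeTracePair (h₁ : IsChordFrame C₁ w₁ w₂ w φ₁ φ₂ α)
    (h₂ : IsChordFrame C₂ x₁ x₂ x ψ₁ ψ₂ β) :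
    HasNegativeTracePair (C₁ : Set E₁) (C₂ : Set E₂) := by
  obtain hdom₁ | hflat₁ := h₁.left.isDominatedOn_or_containsFlatWedges
  · exact h₁.hasNegativeTracePair_of_isDominatedOn h₂ hdom₁
  · obtain hdom₂ | hflat₂ := h₁.right.isDominatedOn_or_containsFlatWedges
    · exact h₁.symm.hasNegativeTracePair_of_isDominatedOn h₂ hdom₂
    · exact (h₂.hasNegativeTracePair_of_or h₁ (.inr hflat₂) (.inr hflat₁)).symm

end ChordMap

section Induction

variable {E₁ E₂ : Type*} [NormedAddCommGroup E₁] [InnerProductSpace ℝ E₁] [FiniteDimensional ℝ E₁]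
  [NormedAddCommGroup E₂] [InnerProductSpace ℝ E₂] [FiniteDimensional ℝ E₂]
  {C₁ : ProperCone ℝ E₁} {C₂ : ProperCone ℝ E₂}

theorem hasNegativeTracePair_of_not_hasClassicalFaces (h₁ : IsProperCone (C₁ : Set E₁))
    (h₂ : IsProperCone (C₂ : Set E₂)) (hcl₁ : ¬ IsClassicalCone (C₁ : Set E₁))
    (hfaces : ¬ (HasClassicalFaces C₂ ∧ HasClassicalFaces (innerDual (C₂ : Set E₂))))
    (ih : ∀ (D₁ : ProperCone ℝ E₁) (F : Submodule ℝ E₂) (D₂ : ProperCone ℝ F),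
      Module.finrank ℝ F < Module.finrank ℝ E₂ → IsProperCone (D₁ : Set E₁) →
      IsProperCone (D₂ : Set F) → ¬ IsClassicalCone (D₁ : Set E₁) →
      ¬ IsClassicalCone (D₂ : Set F) → HasNegativeTracePair (D₁ : Set E₁) (D₂ : Set F)) :
    HasNegativeTracePair (C₁ : Set E₁) (C₂ : Set E₂) := by
  have reduce (D₁ : ProperCone ℝ E₁) (D₂ : ProperCone ℝ E₂) (hD₁ : IsProperCone (D₁ : Set E₁))
      (hD₂ : IsProperCone (D₂ : Set E₂)) (hcl : ¬ IsClassicalCone (D₁ : Set E₁))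
      (hD : ¬ HasClassicalFaces D₂) : HasNegativeTracePair (D₁ : Set E₁) (D₂ : Set E₂) := by
    simp only [HasClassicalFaces, not_forall] at hD
    obtain ⟨y, hy, hy₀, hface⟩ := hD
    exact .of_exposedFace hy hD₁ hD₂ <| ih _ _ _ (finrank_exposedFaceSpan_lt hy₀) hD₁
      (isProperCone_exposedFace hD₂ y) hcl hface
  obtain hD | hD := not_and_or.1 hfaces
  · exact reduce C₁ C₂ h₁ h₂ hcl₁ hD
  · exact .of_innerDual <| reduce _ _ (isProperCone_innerDual h₁) (isProperCone_innerDual h₂)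
      (fun h => hcl₁ (.of_innerDual h)) hD

theorem hasNegativeTracePair_of_innerProductSpace (h₁ : IsProperCone (C₁ : Set E₁))
    (h₂ : IsProperCone (C₂ : Set E₂)) (hcl₁ : ¬ IsClassicalCone (C₁ : Set E₁))
    (hcl₂ : ¬ IsClassicalCone (C₂ : Set E₂)) :
    HasNegativeTracePair (C₁ : Set E₁) (C₂ : Set E₂) := by
  induction hn : Module.finrank ℝ E₁ + Module.finrank ℝ E₂ using Nat.strong_induction_on
    generalizing E₁ E₂ with
  | _ n ih =>
    subst hn
    by_cases hfaces₂ : HasClassicalFaces C₂ ∧ HasClassicalFaces (innerDual (C₂ : Set E₂))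
    · by_cases hfaces₁ : HasClassicalFaces C₁ ∧ HasClassicalFaces (innerDual (C₁ : Set E₁))
      · obtain ⟨_, _, _, _, _, _, hframe₁⟩ := exists_isChordFrame h₁ hfaces₁.1 hfaces₁.2 hcl₁
        obtain ⟨_, _, _, _, _, _, hframe₂⟩ := exists_isChordFrame h₂ hfaces₂.1 hfaces₂.2 hcl₂
        exact hframe₁.hasNegativeTracePair hframe₂
      · exact (hasNegativeTracePair_of_not_hasClassicalFaces h₂ h₁ hcl₂ hfaces₁
          fun D₂ F D₁ hlt hD₂ hD₁ hclD₂ hclD₁ =>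
            (ih _ (by lia) hD₁ hD₂ hclD₁ hclD₂ rfl).symm).symm
    · exact hasNegativeTracePair_of_not_hasClassicalFaces h₁ h₂ hcl₁ hfaces₂
        fun D₁ F D₂ hlt hD₁ hD₂ hclD₁ hclD₂ => ih _ (by lia) hD₁ hD₂ hclD₁ hclD₂ rfl

end Induction

section Transfer

theorem HasNegativeTracePair.of_preimage {V V' W W' : Type*} [AddCommGroup V] [Module ℝ V]
    [AddCommGroup V'] [Module ℝ V'] [AddCommGroup W] [Module ℝ W] [AddCommGroup W'] [Module ℝ W']
    {S : Set V} {T : Set W} (e : V' ≃ₗ[ℝ] V) (f : W' ≃ₗ[ℝ] W)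
    (h : HasNegativeTracePair (e ⁻¹' S) (f ⁻¹' T)) : HasNegativeTracePair S T := by
  obtain ⟨P, Q, hP, hQ, htrace⟩ := h
  refine ⟨f ∘ₗ P ∘ₗ e.symm, e ∘ₗ Q ∘ₗ f.symm, fun x hx => hP (by simpa using hx),
    fun y hy => hQ (by simpa using hy), ?_⟩
  have hconj : (e.toLinearMap ∘ₗ Q ∘ₗ f.symm.toLinearMap) ∘ₗ
      f.toLinearMap ∘ₗ P ∘ₗ e.symm.toLinearMap = e.conj (Q ∘ₗ P) := by
    ext x
    simp [LinearEquiv.conj_apply]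
  rwa [hconj, LinearMap.trace_conj']

variable {V W : Type*} [NormedAddCommGroup V] [NormedSpace ℝ V] [NormedAddCommGroup W]
  [NormedSpace ℝ W]

theorem isProperCone_comap {C : ProperCone ℝ V} (hC : IsProperCone (C : Set V)) (e : W ≃L[ℝ] V) :
    IsProperCone (C.comap (e : W →L[ℝ] V) : Set W) := by
  refine isProperCone_iff.2 ⟨?_, fun x hx hnx => ?_⟩
  · have himage : (C.comap (e : W →L[ℝ] V) : Set W) = e.symm.toLinearEquiv '' (C : Set V) :=
      (e.symm.image_eq_preimage_symm (C : Set V)).symm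
    rw [himage, Submodule.span_image_linearEquiv, hC.span_eq_top, Submodule.map_top,
      LinearEquiv.range]
  · rw [ProperCone.mem_comap] at hx hnx
    exact e.map_eq_zero_iff.1 (hC.eq_zero_of_neg_mem hx (by simpa using hnx))

theorem hasNegativeTracePair [FiniteDimensional ℝ V] [FiniteDimensional ℝ W] {C : ProperCone ℝ V}
    {D : ProperCone ℝ W} (hC : IsProperCone (C : Set V)) (hD : IsProperCone (D : Set W))
    (hclC : ¬ IsClassicalCone (C : Set V)) (hclD : ¬ IsClassicalCone (D : Set W)) :
    HasNegativeTracePair (C : Set V) (D : Set W) := by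
  let e := (toEuclidean (E := V)).symm
  let f := (toEuclidean (E := W)).symm
  refine .of_preimage e.toLinearEquiv f.toLinearEquiv ?_
  exact hasNegativeTracePair_of_innerProductSpace (isProperCone_comap hC e)
    (isProperCone_comap hD f) (fun h => hclC (.of_preimage e.toLinearEquiv h))
    (fun h => hclD (.of_preimage f.toLinearEquiv h))

end Transfer

/-- **Theorem.** If `C₁` and `C₂` are non-classical proper cones, then for every `k ≥ 1`
there is a linear map `P` with `P^{⊗k}(C₁^{⊗max k}) ⊆ C₂^{⊗min k}` which is not
`(C₁,C₂)`-entanglement breaking. -/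
theorem exists_k_annihilating_not_breaking
    {V₁ V₂ : Type} [NormedAddCommGroup V₁] [NormedSpace ℝ V₁] [FiniteDimensional ℝ V₁]
    [NormedAddCommGroup V₂] [NormedSpace ℝ V₂] [FiniteDimensional ℝ V₂]
    (C₁ : Set V₁) (C₂ : Set V₂) (h₁ : IsProperCone C₁) (h₂ : IsProperCone C₂)
    (hc₁ : ¬ IsClassicalCone C₁) (hc₂ : ¬ IsClassicalCone C₂)
    (k : ℕ) (hk : 1 ≤ k) :
    ∃ P : V₁ →ₗ[ℝ] V₂,
      Set.MapsTo (⇑(PiTensorProduct.map fun _ : Fin k => P))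
        (maxTensorPow C₁ k) (minTensorPow C₂ k) ∧
      ¬ IsEntanglementBreaking C₁ C₂ P := by
  obtain ⟨C, rfl⟩ := h₁.exists_properCone
  obtain ⟨D, rfl⟩ := h₂.exists_properCone
  obtain ⟨P, hP, hPD⟩ := (hasNegativeTracePair h₁ h₂ hc₁ hc₂).exists_map_mem_annihilatingMaps
    (K := D.toPointedCone) h₁.span_dualConeSet h₂.span_eq_top hk
  exact ⟨P, (mem_annihilatingMaps hk).1 hP, fun h => hPD (mem_breakingMaps.2 h)⟩

end
end

section
/- Let C1 ⊆ V1, C2 ⊆ V2 be proper cones and P : V1 → V2 a linear map. The following are equivalent: (1) P is (C1,C2)-entanglement annihilating; (2) for every k ≥ 1, every C1-encoder E : V1 → V1^{⊗k} (i.e., every (C1, C1^{⊗max k})-positive map) and every C2-decoder D : V2^{⊗k} → V2 (i.e., every (C2^{⊗min k}, C2)-positive map), the composition D ∘ P^{⊗k} ∘ E is (C1,C2)-positive. -/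
open scoped TensorProduct
open Set

noncomputable section

/-!
If `P^{⊗k}` sends some `z` of the maximal tensor power outside the minimal one, separate the image
`y` from the minimal tensor power by a functional `f`. Rank-one codes then violate positivity: the
encoder `x ↦ φ(x) z` with `φ` nonnegative on `C₁` and the decoder `w ↦ f(w) v` with `v ∈ C₂` send
a suitable `x ∈ C₁` to a negative multiple of `v`.

The separation requires the minimal tensor power to be closed. It is generated by the compact set
of products of unit vectors of `C₂`, on which `ψ ⊗ ⋯ ⊗ ψ` is strictly positive for a functional
`ψ` positive on `C₂ \ {0}`, and a cone generated by a compact set lying in an open half-space is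
closed.
-/

section ConvexHull

theorem convexHull_range_eq_image_stdSimplex {𝕜 E ι : Type*} [Field 𝕜] [LinearOrder 𝕜]
    [IsStrictOrderedRing 𝕜] [AddCommGroup E] [Module 𝕜 E] [Fintype ι] (g : ι → E) :
    convexHull 𝕜 (range g) = Fintype.linearCombination 𝕜 g '' stdSimplex 𝕜 ι := by
  classical
  rw [← convexHull_rangle_single_eq_stdSimplex, LinearMap.image_convexHull, ← range_comp]
  congr 2
  ext i
  simp

theorem exists_fin_mem_convexHull_range {𝕜 E : Type*} [Field 𝕜] [LinearOrder 𝕜]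
    [IsStrictOrderedRing 𝕜] [AddCommGroup E] [Module 𝕜 E] [FiniteDimensional 𝕜 E] {s : Set E}
    {x : E} (hx : x ∈ convexHull 𝕜 s) :
    ∃ g : Fin (Module.finrank 𝕜 E + 1) → E, (∀ i, g i ∈ s) ∧ x ∈ convexHull 𝕜 (range g) := by
  rw [convexHull_eq_union] at hx
  simp only [mem_iUnion, exists_prop] at hx
  obtain ⟨t, hts, ht, hxt⟩ := hx
  have : Nonempty t := (convexHull_nonempty_iff.1 ⟨x, hxt⟩).to_subtype
  have hcard : Fintype.card t ≤ Fintype.card (Fin (Module.finrank 𝕜 E + 1)) := by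
    rw [Fintype.card_fin]
    exact ht.card_le_finrank_succ.trans (Nat.succ_le_succ (Submodule.finrank_le _))
  obtain ⟨e⟩ := Function.Embedding.nonempty_of_card_le hcard
  refine ⟨Subtype.val ∘ Function.invFun e, fun i => hts (Function.invFun e i).2, ?_⟩
  rwa [(Function.invFun_surjective e.injective).range_comp, Subtype.range_coe_subtype]

theorem isCompact_convexHull_of_finiteDimensional {E : Type*} [AddCommGroup E] [Module ℝ E]
    [FiniteDimensional ℝ E] [TopologicalSpace E] [ContinuousAdd E] [ContinuousSMul ℝ E]
    {s : Set E} (hs : IsCompact s) : IsCompact (convexHull ℝ s) := by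
  let n := Module.finrank ℝ E + 1
  let combine (p : (Fin n → E) × (Fin n → ℝ)) : E := ∑ i, p.2 i • p.1 i
  suffices convexHull ℝ s = combine '' (univ.pi (fun _ => s) ×ˢ stdSimplex ℝ (Fin n)) by
    rw [this]
    exact ((isCompact_univ_pi fun _ => hs).prod (isCompact_stdSimplex ℝ (Fin n))).image
      (by fun_prop)
  apply Subset.antisymm
  · intro x hx
    obtain ⟨g, hgs, hxg⟩ := exists_fin_mem_convexHull_range hx
    rw [convexHull_range_eq_image_stdSimplex] at hxg
    obtain ⟨w, hw, rfl⟩ := hxg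
    exact ⟨(g, w), ⟨fun i _ => hgs i, hw⟩, rfl⟩
  · rintro _ ⟨⟨g, w⟩, ⟨hg, hw⟩, rfl⟩
    exact (convex_convexHull ℝ s).sum_mem (fun i _ => hw.1 i) hw.2
      fun i _ => subset_convexHull ℝ s (hg i trivial)

end ConvexHull

section ConeHull

open scoped Pointwise

variable {𝕜 E : Type*} [Field 𝕜] [LinearOrder 𝕜] [IsStrictOrderedRing 𝕜] [AddCommGroup E]
  [Module 𝕜 E] {s : Set E}

theorem mem_pointedConeHull_iff {x : E} :
    x ∈ PointedCone.hull 𝕜 s ↔ x = 0 ∨ ∃ c : 𝕜, 0 < c ∧ x ∈ c • convexHull 𝕜 s := by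
  rw [← ConvexCone.mem_hull_of_convex (convex_convexHull 𝕜 s)]
  constructor
  · intro hx
    induction hx using Submodule.span_induction with
    | mem x hx => exact .inr (ConvexCone.subset_hull (subset_convexHull 𝕜 s hx))
    | zero => exact .inl rfl
    | add x y _ _ hx hy =>
      rcases hx with rfl | hx
      · rwa [zero_add]
      rcases hy with rfl | hy
      · rw [add_zero]
        exact .inr hx
      · exact .inr (add_mem hx hy)
    | smul c x _ hx =>
      rcases eq_zero_or_pos c with rfl | hc
      · exact .inl (zero_smul _ x)
      rcases hx with rfl | hx
      · exact .inl (smul_zero c)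
      · exact .inr (ConvexCone.smul_mem _ hc hx)
  · rintro (rfl | hx)
    · exact zero_mem _
    · exact ConvexCone.hull_min (C := (PointedCone.hull 𝕜 s : ConvexCone 𝕜 E))
        (convexHull_min PointedCone.subset_hull (PointedCone.convex _)) hx

theorem coe_pointedConeHull_eq_convexHull (hne : s.Nonempty)
    (hs : ∀ c : 𝕜, 0 ≤ c → ∀ x ∈ s, c • x ∈ s) :
    (PointedCone.hull 𝕜 s : Set E) = convexHull 𝕜 s := by
  apply Subset.antisymm
  · intro x hx
    rcases mem_pointedConeHull_iff.1 hx with rfl | ⟨c, hc, hx⟩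
    · obtain ⟨y, hy⟩ := hne
      simpa using subset_convexHull 𝕜 s (hs 0 le_rfl y hy)
    · have hcs : c • s ⊆ s := by
        rintro _ ⟨y, hy, rfl⟩
        exact hs c hc.le y hy
      rw [← convexHull_smul] at hx
      exact convexHull_mono hcs hx
  · exact convexHull_min PointedCone.subset_hull (PointedCone.convex _)

end ConeHull

section FiniteDimensional

variable {E : Type*} [AddCommGroup E] [Module ℝ E] [FiniteDimensional ℝ E] [TopologicalSpace E]
  [IsTopologicalAddGroup E] [ContinuousSMul ℝ E] [T2Space E] {s : Set E}

theorem exists_strongDual_pos_of_zero_notMem_convexHull [LocallyConvexSpace ℝ E] (hs : IsCompact s)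
    (h0 : (0 : E) ∉ convexHull ℝ s) : ∃ f : StrongDual ℝ E, ∀ x ∈ s, 0 < f x := by
  obtain ⟨f, u, hu, hf⟩ := geometric_hahn_banach_point_closed (convex_convexHull ℝ s)
    (isCompact_convexHull_of_finiteDimensional hs).isClosed h0
  rw [map_zero] at hu
  exact ⟨f, fun x hx => hu.trans (hf x (subset_convexHull ℝ s hx))⟩

theorem isClosed_pointedConeHull (hs : IsCompact s) {f : StrongDual ℝ E}
    (hf : ∀ x ∈ s, 0 < f x) : IsClosed (PointedCone.hull ℝ s : Set E) := by
  rcases s.eq_empty_or_nonempty with rfl | hne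
  · simp
  have hfK : ∀ q ∈ convexHull ℝ s, 0 < f q :=
    convexHull_min hf (convex_halfSpace_gt f.isLinear 0)
  have := isCompact_iff_compactSpace.1 (isCompact_convexHull_of_finiteDimensional hs)
  -- `p.1` is the nonnegative multiple `(f p.1 / f p.2) • p.2`, written without division.
  let ray : Set (E × convexHull ℝ s) :=
    {p | 0 ≤ f p.1} ∩ {p | f p.2 • p.1 = f p.1 • (p.2 : E)}
  have hray : IsClosed ray :=
    (isClosed_le (by fun_prop) (by fun_prop)).inter (isClosed_eq (by fun_prop) (by fun_prop))
  convert isClosedMap_fst_of_compactSpace ray hray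
  ext x
  constructor
  · intro hx
    rcases mem_pointedConeHull_iff.1 hx with rfl | ⟨c, hc, q, hq, rfl⟩
    · obtain ⟨q, hq⟩ := hne.convexHull (𝕜 := ℝ)
      exact ⟨(0, ⟨q, hq⟩), by simp [ray], rfl⟩
    · refine ⟨(c • q, ⟨q, hq⟩), ⟨?_, ?_⟩, rfl⟩
      · simpa using mul_nonneg hc.le (hfK q hq).le
      · simp [smul_smul, mul_comm]
  · rintro ⟨⟨x, q, hq⟩, ⟨hx, hxq⟩, rfl⟩
    have hqpos := hfK q hq
    have hx_eq : x = (f x / f q) • q := by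
      rw [div_eq_inv_mul, mul_smul, ← hxq, inv_smul_smul₀ hqpos.ne']
    rw [hx_eq]
    exact PointedCone.smul_mem _ (div_nonneg hx hqpos.le)
      (convexHull_min PointedCone.subset_hull (PointedCone.convex _) hq)

end FiniteDimensional

theorem exists_strongDual_pos_of_salient {V : Type*} [NormedAddCommGroup V] [NormedSpace ℝ V]
    [FiniteDimensional ℝ V] (C : ProperCone ℝ V) (hC : (C : ConvexCone ℝ V).Salient) :
    ∃ f : StrongDual ℝ V, ∀ x ∈ C, x ≠ 0 → 0 < f x := by
  have hconv : Convex ℝ {x | x ∈ C ∧ x ≠ 0} := by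
    rw [convex_iff_forall_pos]
    rintro x ⟨hx, hx0⟩ y ⟨hy, -⟩ a b ha hb -
    have hax : a • x ∈ C := C.smul_mem hx ha.le
    have hby : b • y ∈ C := C.smul_mem hy hb.le
    refine ⟨add_mem hax hby, fun h => hC _ hax (smul_ne_zero ha.ne' hx0) ?_⟩
    rwa [neg_eq_of_add_eq_zero_right h]
  have hunit_subset : (C : Set V) ∩ Metric.sphere 0 1 ⊆ {x | x ∈ C ∧ x ≠ 0} :=
    fun x hx => ⟨hx.1, ne_zero_of_mem_unit_sphere ⟨x, hx.2⟩⟩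
  have h0 : (0 : V) ∉ convexHull ℝ ((C : Set V) ∩ Metric.sphere 0 1) :=
    fun h0 => (convexHull_min hunit_subset hconv h0).2 rfl
  obtain ⟨f, hf⟩ := exists_strongDual_pos_of_zero_notMem_convexHull
    ((isCompact_sphere 0 1).inter_left C.isClosed) h0
  refine ⟨f, fun x hx hx0 => ?_⟩
  have hunit : ‖x‖⁻¹ • x ∈ (C : Set V) ∩ Metric.sphere 0 1 :=
    ⟨C.smul_mem hx (by positivity), by simp [norm_smul, hx0]⟩
  have hpos := hf _ hunit
  rw [map_smul, smul_eq_mul] at hpos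
  exact pos_of_mul_pos_right hpos (by positivity)

section TensorPower

variable {V : Type*} [AddCommGroup V] [Module ℝ V] {k : ℕ}

theorem dualPairing_tprod (φ : Fin k → Module.Dual ℝ V) (x : Fin k → V) :
    dualPairing φ (PiTensorProduct.tprod ℝ x) = ∏ i, φ i (x i) := by
  simp [dualPairing]

theorem eq_zero_of_forall_dualPairing_eq_zero {z : ⨂[ℝ] _ : Fin k, V}
    (hz : ∀ φ : Fin k → Module.Dual ℝ V, dualPairing φ z = 0) : z = 0 := by
  let b := Module.Basis.ofVectorSpace ℝ V
  let B := Basis.piTensorProduct fun _ : Fin k => b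
  have hcoord : ∀ p, B.coord p = dualPairing fun i => b.coord (p i) := by
    intro p
    ext x
    simp [B, dualPairing_tprod, Basis.piTensorProduct_repr_tprod_apply]
  exact B.forall_coord_eq_zero_iff.1 fun p => by rw [hcoord, hz]

theorem dualPairing_update_neg (φ : Fin k → Module.Dual ℝ V) (i : Fin k)
    (z : ⨂[ℝ] _ : Fin k, V) :
    dualPairing (Function.update φ i (-φ i)) z = -dualPairing φ z := by
  suffices dualPairing (Function.update φ i (-φ i)) = -dualPairing φ from
    LinearMap.congr_fun this z
  ext x
  have hfactors : (fun j => Function.update φ i (-φ i) j (x j)) =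
      Function.update (fun j => φ j (x j)) i (-φ i (x i)) :=
    funext fun j => Function.apply_update (fun j ψ => ψ (x j)) φ i (-φ i) j
  have hprod := (MultilinearMap.mkPiAlgebra ℝ (Fin k) ℝ).map_update_neg
    (fun j => φ j (x j)) i (φ i (x i))
  rw [← hfactors, Function.update_eq_self] at hprod
  simpa [dualPairing_tprod] using hprod

/-- The elementary tensors `x₁ ⊗ ⋯ ⊗ x_k` whose factors all lie in `s`; the minimal tensor power
of `s` is the convex hull of this set. -/
def pureTensors (s : Set V) (k : ℕ) : Set (⨂[ℝ] _ : Fin k, V) :=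
  {z | ∃ x : Fin k → V, (∀ i, x i ∈ s) ∧ z = PiTensorProduct.tprod ℝ x}

theorem smul_mem_maxTensorPow {C : Set V} {c : ℝ} (hc : 0 ≤ c) {z : ⨂[ℝ] _ : Fin k, V}
    (hz : z ∈ maxTensorPow C k) : c • z ∈ maxTensorPow C k := fun φ hφ => by
  rw [map_smul]
  exact mul_nonneg hc (hz φ hφ)

theorem exists_mem_pos_of_dualPairing_pos {C : Set V} {z : ⨂[ℝ] _ : Fin k, V}
    (hz : z ∈ maxTensorPow C k) {χ : Fin k → Module.Dual ℝ V} (hχ : ∀ i, χ i ∈ dualConeSet C)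
    (hχz : 0 < dualPairing χ z) (i : Fin k) : ∃ x ∈ C, 0 < χ i x := by
  by_contra! hC
  have hneg : ∀ j, Function.update χ i (-χ i) j ∈ dualConeSet C := by
    intro j
    rcases eq_or_ne j i with rfl | hj
    · rw [Function.update_self]
      exact fun x hx => neg_nonneg.2 (hC x hx)
    · rw [Function.update_of_ne hj]
      exact hχ j
  have hpair := hz _ hneg
  rw [dualPairing_update_neg] at hpair
  linarith

theorem exists_encoder_apply_eq [NeZero k] {C : Set V} {z : ⨂[ℝ] _ : Fin k, V}
    (hz : z ∈ maxTensorPow C k) (hz0 : z ≠ 0) :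
    ∃ E : V →ₗ[ℝ] ⨂[ℝ] _ : Fin k, V, MapsTo E C (maxTensorPow C k) ∧ ∃ x ∈ C, E x = z := by
  by_cases! hχ : ∃ χ : Fin k → Module.Dual ℝ V, (∀ i, χ i ∈ dualConeSet C) ∧ 0 < dualPairing χ z
  · obtain ⟨χ, hχ, hχz⟩ := hχ
    obtain ⟨x, hx, hχx⟩ := exists_mem_pos_of_dualPairing_pos hz hχ hχz 0
    refine ⟨((χ 0 x)⁻¹ • χ 0).smulRight z, fun y hy => ?_, x, hx, ?_⟩
    · exact smul_mem_maxTensorPow (mul_nonneg (inv_nonneg.2 hχx.le) (hχ 0 y hy)) hz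
    · simp [hχx.ne']
  · have hpair : ∀ φ : Fin k → Module.Dual ℝ V, (∀ i, φ i ∈ dualConeSet C) →
        dualPairing φ z = 0 := fun φ hφ => le_antisymm (hχ φ hφ) (hz φ hφ)
    obtain ⟨x, hx, hx0⟩ : ∃ x ∈ C, x ≠ 0 := by
      by_contra! hC
      refine hz0 (eq_zero_of_forall_dualPairing_eq_zero fun φ => hpair φ fun i x hx => ?_)
      rw [hC x hx, map_zero]
    obtain ⟨φ, hφx⟩ := Module.Projective.exists_dual_eq_one ℝ hx0
    -- Every multiple of `z` lies in the maximal tensor power, so the sign of `φ` is irrelevant.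
    refine ⟨φ.smulRight z, fun y _ ψ hψ => ?_, x, hx, by simp [hφx]⟩
    simp [hpair ψ hψ]

theorem zero_mem_minTensorPow [NeZero k] {C : Set V} (hC : (0 : V) ∈ C) :
    (0 : ⨂[ℝ] _ : Fin k, V) ∈ minTensorPow C k :=
  subset_convexHull ℝ _ ⟨0, fun _ => hC, ((PiTensorProduct.tprod ℝ).map_zero).symm⟩

theorem smul_mem_pureTensors [NeZero k] {C : Set V} {c : ℝ} (hC : ∀ x ∈ C, c • x ∈ C)
    {z : ⨂[ℝ] _ : Fin k, V} (hz : z ∈ pureTensors C k) : c • z ∈ pureTensors C k := by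
  obtain ⟨x, hx, rfl⟩ := hz
  refine ⟨Function.update x 0 (c • x 0), fun i => ?_, ?_⟩
  · rcases eq_or_ne i 0 with rfl | hi
    · rw [Function.update_self]
      exact hC _ (hx 0)
    · rw [Function.update_of_ne hi]
      exact hx i
  · rw [MultilinearMap.map_update_smul, Function.update_eq_self]

theorem coe_hull_pureTensors [NeZero k] (C : PointedCone ℝ V) :
    (PointedCone.hull ℝ (pureTensors (C : Set V) k) : Set (⨂[ℝ] _ : Fin k, V)) =
      minTensorPow C k :=
  coe_pointedConeHull_eq_convexHull ⟨_, 0, fun _ => C.zero_mem, rfl⟩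
    fun _ hc _ hz => smul_mem_pureTensors (fun _ hx => C.smul_mem hc hx) hz

end TensorPower

section MinTensorPow

variable {V : Type*} [NormedAddCommGroup V] [NormedSpace ℝ V] {k : ℕ}

theorem hull_pureTensors_inter_sphere (C : PointedCone ℝ V) :
    PointedCone.hull ℝ (pureTensors ((C : Set V) ∩ Metric.sphere 0 1) k) =
      PointedCone.hull ℝ (pureTensors (C : Set V) k) := by
  apply le_antisymm
  · apply Submodule.span_mono
    rintro _ ⟨x, hx, rfl⟩
    exact ⟨x, fun i => (hx i).1, rfl⟩
  · refine Submodule.span_le.2 ?_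
    rintro _ ⟨x, hx, rfl⟩
    by_cases! hx0 : ∃ i, x i = 0
    · obtain ⟨i, hi⟩ := hx0
      rw [(PiTensorProduct.tprod ℝ).map_coord_zero i hi]
      exact zero_mem _
    · have hnormalize : PiTensorProduct.tprod ℝ x =
          (∏ i, ‖x i‖) • PiTensorProduct.tprod ℝ fun i => ‖x i‖⁻¹ • x i := by
        rw [← MultilinearMap.map_smul_univ]
        congr with i
        rw [smul_inv_smul₀ (norm_ne_zero_iff.2 (hx0 i))]
      rw [hnormalize]
      refine PointedCone.smul_mem _ (by positivity) (PointedCone.subset_hull ⟨_, fun i => ?_, rfl⟩)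
      exact ⟨C.smul_mem (by positivity) (hx i), by simp [norm_smul, hx0 i]⟩

theorem isCompact_pureTensors {s : Set V} (hs : IsCompact s) : IsCompact (pureTensors s k) := by
  have himage : pureTensors s k = PiTensorProduct.tprodL ℝ '' univ.pi fun _ => s := by
    ext z
    simp [pureTensors, eq_comm]
  rw [himage]
  exact (isCompact_univ_pi fun _ => hs).image (PiTensorProduct.tprodL ℝ).cont

variable [FiniteDimensional ℝ V]

theorem continuous_dualPairing (φ : Fin k → Module.Dual ℝ V) : Continuous (dualPairing φ) :=
  (PiTensorProduct.liftEquiv ℝ (fun _ : Fin k => V) ℝ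
    ((ContinuousMultilinearMap.mkPiAlgebra ℝ (Fin k) ℝ).compContinuousLinearMap
      fun i => (φ i).toContinuousLinearMap)).continuous

/-- The topology is that of the projective seminorm; product functionals separate points. -/
instance t2Space_tensorPower : T2Space (⨂[ℝ] _ : Fin k, V) := by
  refine T2Space.of_injective_continuous
    (f := fun z : ⨂[ℝ] _ : Fin k, V => fun φ : Fin k → Module.Dual ℝ V => dualPairing φ z)
    (fun z w h => sub_eq_zero.1 (eq_zero_of_forall_dualPairing_eq_zero fun φ => ?_))
    (continuous_pi continuous_dualPairing)
  rw [map_sub, sub_eq_zero]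
  exact congr_fun h φ

theorem isClosed_hull_pureTensors (C : ProperCone ℝ V) (hC : (C : ConvexCone ℝ V).Salient) :
    IsClosed (PointedCone.hull ℝ (pureTensors (C : Set V) k) : Set (⨂[ℝ] _ : Fin k, V)) := by
  obtain ⟨ψ, hψ⟩ := exists_strongDual_pos_of_salient C hC
  let Ψ : StrongDual ℝ (⨂[ℝ] _ : Fin k, V) :=
    ⟨dualPairing fun _ => (ψ : Module.Dual ℝ V), continuous_dualPairing _⟩
  have hΨ : ∀ z ∈ pureTensors ((C : Set V) ∩ Metric.sphere 0 1) k, 0 < Ψ z := by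
    rintro _ ⟨x, hx, rfl⟩
    change 0 < dualPairing (fun _ : Fin k => (ψ : Module.Dual ℝ V)) (PiTensorProduct.tprod ℝ x)
    rw [dualPairing_tprod]
    exact Finset.prod_pos fun i _ => hψ _ (hx i).1 (ne_zero_of_mem_unit_sphere ⟨_, (hx i).2⟩)
  rw [← C.coe_toSubmodule, ← hull_pureTensors_inter_sphere]
  exact isClosed_pointedConeHull
    (isCompact_pureTensors ((isCompact_sphere 0 1).inter_left C.isClosed)) hΨ

theorem exists_nonneg_on_minTensorPow_neg_apply [NeZero k] (C : ProperCone ℝ V)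
    (hC : (C : ConvexCone ℝ V).Salient) {y : ⨂[ℝ] _ : Fin k, V}
    (hy : y ∉ minTensorPow (C : Set V) k) :
    ∃ f : Module.Dual ℝ (⨂[ℝ] _ : Fin k, V),
      (∀ z ∈ minTensorPow (C : Set V) k, 0 ≤ f z) ∧ f y < 0 := by
  let M : ProperCone ℝ (⨂[ℝ] _ : Fin k, V) :=
    ⟨PointedCone.hull ℝ (pureTensors (C : Set V) k), isClosed_hull_pureTensors C hC⟩
  have hM : (M : Set (⨂[ℝ] _ : Fin k, V)) = minTensorPow (C : Set V) k :=
    coe_hull_pureTensors C.toPointedCone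
  rw [← hM] at hy ⊢
  obtain ⟨f, hf, hfy⟩ := M.hyperplane_separation_point hy
  exact ⟨f, hf, hfy⟩

theorem exists_decoder_apply_notMem [NeZero k] (C : ProperCone ℝ V)
    (hC : (C : ConvexCone ℝ V).Salient) {y : ⨂[ℝ] _ : Fin k, V}
    (hy : y ∉ minTensorPow (C : Set V) k) :
    ∃ D : (⨂[ℝ] _ : Fin k, V) →ₗ[ℝ] V, MapsTo D (minTensorPow (C : Set V) k) C ∧ D y ∉ C := by
  obtain ⟨f, hf, hfy⟩ := exists_nonneg_on_minTensorPow_neg_apply C hC hy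
  by_cases! hC0 : ∃ v ∈ C, v ≠ 0
  · obtain ⟨v, hv, hv0⟩ := hC0
    refine ⟨f.smulRight v, fun z hz => C.smul_mem hv (hf z hz), fun hyv => ?_⟩
    refine hC (f y • v) hyv (smul_ne_zero hfy.ne hv0) ?_
    rw [← neg_smul]
    exact C.smul_mem hv (neg_nonneg.2 hfy.le)
  · obtain ⟨v, hv⟩ : ∃ v : V, v ≠ 0 := by
      by_contra! hV
      have hf0 : f = 0 := by
        ext x
        simp [(PiTensorProduct.tprod ℝ).map_coord_zero 0 (hV (x 0))]
      simp [hf0] at hfy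
    have hmin : minTensorPow (C : Set V) k ⊆ {0} := by
      refine convexHull_min ?_ (convex_singleton 0)
      rintro _ ⟨x, hx, rfl⟩
      exact (PiTensorProduct.tprod ℝ).map_coord_zero 0 (hC0 _ (hx 0))
    refine ⟨f.smulRight v, fun z hz => ?_, fun hyv => smul_ne_zero hfy.ne hv (hC0 _ hyv)⟩
    rw [hmin hz, map_zero]
    exact C.zero_mem

end MinTensorPow

theorem IsProperCone.exists_properCone_s6 {V : Type*} [NormedAddCommGroup V] [NormedSpace ℝ V]
    {C : Set V} (hC : IsProperCone C) :
    ∃ K : ProperCone ℝ V, (K : ConvexCone ℝ V).Salient ∧ (K : Set V) = C := by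
  obtain ⟨hclosed, hconvex, hsmul, -, hpointed⟩ := hC
  have h0 : (0 : V) ∈ C := (hpointed.ge rfl).1
  let K : ConvexCone ℝ V :=
    { carrier := C
      smul_mem' := hsmul
      add_mem' := fun x hx y hy => by
        have hmid := hconvex hx hy one_half_pos.le one_half_pos.le (add_halves 1)
        rw [← smul_add] at hmid
        simpa [smul_smul] using hsmul two_pos hmid }
  have hK : K.Salient := fun x hx hx0 hnx => hx0 (hpointed.le ⟨hx, hnx⟩)
  exact ⟨⟨K.toPointedCone h0, hclosed⟩, hK, rfl⟩

theorem entanglementAnnihilating_iff_coding_general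
    {V₁ V₂ : Type*} [AddCommGroup V₁] [Module ℝ V₁]
    [NormedAddCommGroup V₂] [NormedSpace ℝ V₂] [FiniteDimensional ℝ V₂]
    (C₁ : Set V₁) (C₂ : ProperCone ℝ V₂) (hC₂ : (C₂ : ConvexCone ℝ V₂).Salient)
    (P : V₁ →ₗ[ℝ] V₂) :
    IsEntanglementAnnihilating C₁ (C₂ : Set V₂) P ↔
      ∀ (k : ℕ), 1 ≤ k →
        ∀ (E : V₁ →ₗ[ℝ] ⨂[ℝ] _ : Fin k, V₁) (D : (⨂[ℝ] _ : Fin k, V₂) →ₗ[ℝ] V₂),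
          MapsTo E C₁ (maxTensorPow C₁ k) →
          MapsTo D (minTensorPow (C₂ : Set V₂) k) C₂ →
          MapsTo (D ∘ₗ (PiTensorProduct.map fun _ : Fin k => P) ∘ₗ E) C₁ C₂ := by
  constructor
  · intro hP k hk E D hE hD x hx
    exact hD (hP k hk (hE hx))
  · intro hcoding k hk z hz
    have : NeZero k := ⟨Nat.one_le_iff_ne_zero.1 hk⟩
    by_contra hPz
    have hz0 : z ≠ 0 := by
      rintro rfl
      exact hPz (by rw [map_zero]; exact zero_mem_minTensorPow C₂.zero_mem)
    obtain ⟨E, hE, x, hx, rfl⟩ := exists_encoder_apply_eq hz hz0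
    obtain ⟨D, hD, hDPz⟩ := exists_decoder_apply_notMem C₂ hC₂ hPz
    exact hDPz (hcoding k hk E D hE hD hx)

/-- **Theorem (characterization of entanglement annihilation).** `P` is entanglement
annihilating iff `D ∘ P^{⊗k} ∘ E` is `(C₁,C₂)`-positive for every `k ≥ 1`, every
`C₁`-encoder `E` and every `C₂`-decoder `D`. -/
theorem entanglementAnnihilating_iff_coding
    {V₁ V₂ : Type*} [NormedAddCommGroup V₁] [NormedSpace ℝ V₁] [FiniteDimensional ℝ V₁]
    [NormedAddCommGroup V₂] [NormedSpace ℝ V₂] [FiniteDimensional ℝ V₂]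
    (C₁ : Set V₁) (C₂ : Set V₂) (h₁ : IsProperCone C₁) (h₂ : IsProperCone C₂)
    (P : V₁ →ₗ[ℝ] V₂) :
    IsEntanglementAnnihilating C₁ C₂ P ↔
      ∀ (k : ℕ), 1 ≤ k →
        ∀ (E : V₁ →ₗ[ℝ] ⨂[ℝ] _ : Fin k, V₁) (D : (⨂[ℝ] _ : Fin k, V₂) →ₗ[ℝ] V₂),
          Set.MapsTo (⇑E) C₁ (maxTensorPow C₁ k) →
          Set.MapsTo (⇑D) (minTensorPow C₂ k) C₂ →
          Set.MapsTo (⇑(D ∘ₗ (PiTensorProduct.map fun _ : Fin k => P) ∘ₗ E)) C₁ C₂ := by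
  obtain ⟨K, hK, rfl⟩ := h₂.exists_properCone_s6
  exact entanglementAnnihilating_iff_coding_general C₁ K hK P

end
end
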